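/- arXiv:1305.2720 — 4 statements merged into one kernel-verified Lean document; each statement's English description precedes it below -/
import Mathlib

section
/- Let G be a finite group. If T(G) > (1/2)·|G|, then G is supersolvable. -/
open CategoryTheory

/-- `χ : G → ℂ` is an irreducible complex character of the group `G`, i.e. the character of
an irreducible (simple) finite-dimensional complex representation of `G`. -/
def IsIrrChar (G : Type) [Group G] (χ : G → ℂ) : Prop :=
  ∃ V : FDRep ℂ G, Simple V ∧ χ = FDRep.character V

/-- `charDegSum G` is `T(G)`, the sum of the degrees `χ(1)` of the irreducible complex
characters of `G`. -/
noncomputable def charDegSum (G : Type) [Group G] : ℝ :=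
  ∑ᶠ χ ∈ {χ : G → ℂ | IsIrrChar G χ}, (χ 1).re

/-- A group `G` is supersolvable if it has a chain of subgroups
`⊥ = H₀ ≤ H₁ ≤ ⋯ ≤ Hₙ = ⊤`, each normal in `G`, with all quotients `H_{i+1}/H_i` cyclic. -/
def IsSupersolvable (G : Type*) [Group G] : Prop :=
  ∃ (n : ℕ) (H : Fin (n + 1) → Subgroup G),
    H 0 = ⊥ ∧ H (Fin.last n) = ⊤ ∧
    (∀ i : Fin n, H i.castSucc ≤ H i.succ) ∧
    (∀ i : Fin (n + 1), (H i).Normal) ∧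
    (∀ i : Fin n, ∃ _ : ((H i.castSucc).subgroupOf (H i.succ)).Normal,
      IsCyclic (↥(H i.succ) ⧸ (H i.castSucc).subgroupOf (H i.succ)))

namespace DegSum

/-- One step of a supersolvable chain: the quotient embeds into the multiplicative monoid of `ℂ`. -/
def Step {G : Type*} [Group G] (A B : Subgroup G) : Prop :=
  A ≤ B ∧ ∃ f : B →* ℂ, ∀ x : B, f x = 1 ↔ (x : G) ∈ A

/-- There is a chain of normal subgroups with cyclic quotients from `N` up to `⊤`. -/
inductive Chain {G : Type*} [Group G] (N : Subgroup G) : Subgroup G → Prop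
  | refl : N.Normal → Chain N N
  | tail {A B : Subgroup G} : Chain N A → B.Normal → Step A B → Chain N B

theorem Chain.normal_left {G : Type*} [Group G] {N M : Subgroup G} (h : Chain N M) : N.Normal := by
  induction h with
  | refl h => exact h
  | tail _ _ _ ih => exact ih

theorem Chain.normal {G : Type*} [Group G] {N M : Subgroup G} (h : Chain N M) : M.Normal := by
  cases h with
  | refl h => exact h
  | tail _ h _ => exact h

theorem Chain.trans {G : Type*} [Group G] {N M K : Subgroup G} (h : Chain N M) (h' : Chain M K) :
    Chain N K := by
  induction h' with
  | refl _ => exact h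
  | tail _ hB hs ih => exact Chain.tail ih hB hs

theorem Chain.single {G : Type*} [Group G] {N M : Subgroup G} (hN : N.Normal) (hM : M.Normal)
    (h : Step N M) : Chain N M := Chain.tail (Chain.refl hN) hM h

theorem Step.inf {G : Type*} [Group G] {A B : Subgroup G} (M : Subgroup G) (h : Step A B) :
    Step (A ⊓ M) (B ⊓ M) := by
  obtain ⟨hle, f, hf⟩ := h
  refine ⟨inf_le_inf_right _ hle, f.comp (Subgroup.inclusion inf_le_left), ?_⟩
  rintro ⟨x, hx⟩
  simp only [MonoidHom.comp_apply, hf, Subgroup.mem_inf]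
  exact ⟨fun h => ⟨h, hx.2⟩, fun h => h.1⟩

theorem Chain.inf {G : Type*} [Group G] {N A : Subgroup G} (M : Subgroup G) (hM : M.Normal)
    (h : Chain N A) : Chain (N ⊓ M) (A ⊓ M) := by
  induction h with
  | refl h => exact Chain.refl inferInstance
  | tail _ hB hs ih => exact Chain.tail ih inferInstance (hs.inf M)

theorem Chain.inf_top {G : Type*} [Group G] {N M : Subgroup G} (hN : Chain N ⊤) (hM : Chain M ⊤) :
    Chain (N ⊓ M) ⊤ := by
  have := hN.inf M hM.normal_left
  rw [top_inf_eq] at this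
  exact this.trans hM

theorem exists_min_chain {G : Type*} [Group G] [Finite G] :
    ∃ N : Subgroup G, Chain N ⊤ ∧ ∀ M : Subgroup G, Chain M ⊤ → N ≤ M := by
  have hfin : {N : Subgroup G | Chain N ⊤}.Finite := Set.toFinite _
  obtain ⟨N, hN⟩ := hfin.exists_minimal ⟨⊤, Chain.refl inferInstance⟩
  refine ⟨N, hN.1, fun M hM => ?_⟩
  have := hN.2 (hN.1.inf_top hM) inf_le_left
  exact this.trans inf_le_right

theorem Step.isCyclic {G : Type*} [Group G] [Finite G] {A B : Subgroup G} (hA : A.Normal)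
    (h : Step A B) : ∃ _ : (A.subgroupOf B).Normal, IsCyclic (↥B ⧸ A.subgroupOf B) := by
  obtain ⟨hle, f, hf⟩ := h
  refine ⟨inferInstance, ?_⟩
  refine isCyclic_of_injective_ringHom
    (QuotientGroup.lift (A.subgroupOf B) f (fun x hx => (hf x).2 hx)) ?_
  rw [injective_iff_map_eq_one]
  intro x
  induction x using QuotientGroup.induction_on with
  | H x =>
    intro hx
    rw [QuotientGroup.eq_one_iff]
    exact (hf x).1 hx

theorem Chain.to_fin {G : Type*} [Group G] [Finite G] {N M : Subgroup G} (h : Chain N M) :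
    ∃ (n : ℕ) (H : Fin (n + 1) → Subgroup G),
    H 0 = N ∧ H (Fin.last n) = M ∧
    (∀ i : Fin n, H i.castSucc ≤ H i.succ) ∧
    (∀ i : Fin (n + 1), (H i).Normal) ∧
    (∀ i : Fin n, ∃ _ : ((H i.castSucc).subgroupOf (H i.succ)).Normal,
      IsCyclic (↥(H i.succ) ⧸ (H i.castSucc).subgroupOf (H i.succ))) := by
  induction h with
  | refl h => exact ⟨0, fun _ => N, rfl, rfl, fun i => i.elim0, fun _ => h, fun i => i.elim0⟩
  | @tail A B hA hB hs ih =>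
    obtain ⟨n, H, h0, hl, hle, hn, hc⟩ := ih
    have key : ∀ i : Fin (n + 1), Step A B →
        ∀ K : Fin (n + 2) → Subgroup G, K = Fin.snoc (α := fun _ => Subgroup G) H B →
        (K i.castSucc ≤ K i.succ) ∧ (∃ _ : ((K i.castSucc).subgroupOf (K i.succ)).Normal,
      IsCyclic (↥(K i.succ) ⧸ (K i.castSucc).subgroupOf (K i.succ))) := by
      intro i hs K hK
      induction i using Fin.lastCases with
      | last =>
        have h1 : K (Fin.last n).castSucc = A := by rw [hK, Fin.snoc_castSucc, hl]
        have h2 : K (Fin.last n).succ = B := by rw [hK, Fin.succ_last, Fin.snoc_last]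
        rw [h1, h2]
        exact ⟨hs.1, hs.isCyclic hA.normal⟩
      | cast i =>
        have h1 : K i.castSucc.castSucc = H i.castSucc := by rw [hK, Fin.snoc_castSucc]
        have h2 : K i.castSucc.succ = H i.succ := by
          rw [hK, Fin.succ_castSucc, Fin.snoc_castSucc]
        rw [h1, h2]
        exact ⟨hle i, hc i⟩
    refine ⟨n + 1, Fin.snoc (α := fun _ => Subgroup G) H B, ?_, ?_, ?_, ?_, ?_⟩
    · have : (0 : Fin (n + 2)) = (0 : Fin (n + 1)).castSucc := rfl
      rw [this, Fin.snoc_castSucc, h0]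
    · rw [Fin.snoc_last]
    · intro i; exact (key i hs _ rfl).1
    · intro i
      induction i using Fin.lastCases with
      | last => rw [Fin.snoc_last]; exact hB
      | cast i => rw [Fin.snoc_castSucc]; exact hn i
    · intro i; exact (key i hs _ rfl).2

theorem chain_of_comm {G : Type*} [Group G] [Finite G] {Z : Subgroup G} (hZ : Z.Normal)
    (hc : ∀ x y : G, x * y * x⁻¹ * y⁻¹ ∈ Z) : Chain Z ⊤ := by
  let _ : CommGroup (G ⧸ Z) :=
    { (inferInstance : Group (G ⧸ Z)) with
      mul_comm := by
        intro a b
        induction a using QuotientGroup.induction_on with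
        | H x =>
        induction b using QuotientGroup.induction_on with
        | H y =>
        rw [← QuotientGroup.mk_mul, ← QuotientGroup.mk_mul, QuotientGroup.eq]
        have := hc y⁻¹ x⁻¹
        convert this using 1
        group }
  have hfin : {M : Subgroup G | Z ≤ M ∧ Chain M ⊤}.Finite := Set.toFinite _
  obtain ⟨M, hM⟩ := hfin.exists_minimal ⟨⊤, le_top, Chain.refl inferInstance⟩
  have hMZ : M ≤ Z := by
    intro x hx
    by_contra hxZ
    have hne : (QuotientGroup.mk x : G ⧸ Z) ≠ 1 := by
      rwa [Ne, QuotientGroup.eq_one_iff]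
    have : NeZero (Monoid.exponent (G ⧸ Z)) := ⟨Monoid.exponent_ne_zero_of_finite⟩
    obtain ⟨φ, hφ⟩ := CommGroup.exists_apply_ne_one_of_hasEnoughRootsOfUnity (G ⧸ Z) ℂ hne
    set f : G →* ℂˣ := φ.comp (QuotientGroup.mk' Z) with hf
    have h1 : Chain f.ker ⊤ := by
      refine Chain.single inferInstance inferInstance
        ⟨le_top, ((Units.coeHom ℂ).comp f).comp (Subgroup.subtype ⊤), fun x => ?_⟩
      rw [MonoidHom.mem_ker, ← Units.val_inj]
      rfl
    have h2 : Z ≤ f.ker := by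
      intro z hz
      have : (QuotientGroup.mk' Z) z = 1 := by
        rw [QuotientGroup.mk'_apply, QuotientGroup.eq_one_iff]; exact hz
      rw [MonoidHom.mem_ker, hf, MonoidHom.comp_apply, this, map_one]
    have := hM.2 ⟨le_inf hM.1.1 h2, hM.1.2.inf_top h1⟩ inf_le_left
    exact hφ (this.trans inf_le_right hx)
  have : M = Z := le_antisymm hMZ hM.1.1
  rw [← this]; exact hM.1.2

set_option linter.unusedSectionVars false

open Representation

section reps

variable {G : Type} [Group G] [Fintype G] {V : Type} [AddCommGroup V] [Module ℂ V]

/-- A common eigenvector gives a multiplicative character. -/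
theorem exists_eigen_hom (ρ : Representation ℂ G V) (B : Subgroup G) {v : V} (hv : v ≠ 0)
    (h : ∀ b ∈ B, ∃ a : ℂ, ρ b v = a • v) : ∃ f : B →* ℂ, ∀ b : B, ρ b v = f b • v := by
  choose f hf using fun b : B => h b b.2
  refine ⟨⟨⟨f, ?_⟩, ?_⟩, hf⟩
  · have := hf 1
    simp only [OneMemClass.coe_one, map_one, Module.End.one_apply] at this
    have h2 : (1 : ℂ) • v = f 1 • v := by rw [one_smul]; exact this
    exact (smul_left_injective ℂ hv h2).symm
  · intro x y
    have h2 : f (x * y) • v = (f x * f y) • v := by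
      rw [← hf, Subgroup.coe_mul, map_mul, Module.End.mul_apply, hf, map_smul, hf, smul_smul,
        mul_comm]
    exact smul_left_injective ℂ hv h2

theorem irr_cases {ρ : Representation ℂ G V} (h : IsIrreducible ρ) (U : Submodule ℂ V)
    (hU : ∀ g : G, ∀ v ∈ U, ρ g v ∈ U) : U = ⊥ ∨ U = ⊤ := by
  rcases h.eq_bot_or_eq_top (⟨U, fun g v hv => hU g v hv⟩ : Subrepresentation ρ) with h | h
  · left; exact congrArg Subrepresentation.toSubmodule h
  · right; exact congrArg Subrepresentation.toSubmodule h

theorem irr_nontrivial {ρ : Representation ℂ G V} (h : IsIrreducible ρ) : Nontrivial V := by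
  by_contra hn
  rw [not_nontrivial_iff_subsingleton] at hn
  apply h.toNontrivial.exists_pair_ne.elim
  rintro a ⟨b, hab⟩
  apply hab
  apply Subrepresentation.toSubmodule_injective
  exact Subsingleton.elim _ _

theorem not_irr_exists {ρ : Representation ℂ G V} [Nontrivial V] (h : ¬ IsIrreducible ρ) :
    ∃ U : Submodule ℂ V, (∀ g : G, ∀ v ∈ U, ρ g v ∈ U) ∧ U ≠ ⊥ ∧ U ≠ ⊤ := by
  by_contra hcon
  push Not at hcon
  apply h
  have : Nontrivial (Subrepresentation ρ) := by
    refine ⟨⊥, ⊤, fun hbt => ?_⟩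
    have := congrArg Subrepresentation.toSubmodule hbt
    exact bot_ne_top (α := Submodule ℂ V) this
  refine { eq_bot_or_eq_top := fun U => ?_ }
  by_cases hU : U.toSubmodule = ⊥
  · left; exact Subrepresentation.toSubmodule_injective hU
  · right; exact Subrepresentation.toSubmodule_injective
      (hcon U.toSubmodule (fun g v hv => U.apply_mem_toSubmodule g hv) hU)

theorem exists_compl (ρ : Representation ℂ G V) (U : Submodule ℂ V)
    (hU : ∀ g : G, ∀ v ∈ U, ρ g v ∈ U) :
    ∃ U' : Submodule ℂ V, (∀ g : G, ∀ v ∈ U', ρ g v ∈ U') ∧ IsCompl U U' := by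
  obtain ⟨W, hW⟩ := (inferInstance : IsSemisimpleRepresentation ρ).exists_isCompl
    (⟨U, fun g v hv => hU g v hv⟩ : Subrepresentation ρ)
  refine ⟨W.toSubmodule, fun g v hv => W.apply_mem_toSubmodule g hv, ?_, ?_⟩
  · rw [disjoint_iff]
    exact congrArg Subrepresentation.toSubmodule (disjoint_iff.1 hW.1)
  · rw [codisjoint_iff]
    exact congrArg Subrepresentation.toSubmodule (codisjoint_iff.1 hW.2)

theorem schur_scalar [FiniteDimensional ℂ V] {ρ : Representation ℂ G V} (h : IsIrreducible ρ)
    (T : V →ₗ[ℂ] V) (hT : ∀ g, T ∘ₗ ρ g = ρ g ∘ₗ T) : ∃ a : ℂ, T = a • 1 := by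
  have hn := irr_nontrivial h
  obtain ⟨c, hc⟩ := Module.End.exists_eigenvalue T
  refine ⟨c, ?_⟩
  have := irr_cases h (Module.End.eigenspace T c) (by
    intro g v hv
    rw [Module.End.mem_eigenspace_iff] at hv ⊢
    have := LinearMap.congr_fun (hT g) v
    simp only [LinearMap.comp_apply] at this
    rw [this, hv, map_smul])
  rcases this with h1 | h1
  · exact absurd h1 hc
  · ext v
    have : v ∈ Module.End.eigenspace T c := by rw [h1]; trivial
    rw [Module.End.mem_eigenspace_iff] at this
    simpa using this

noncomputable instance invCard : Invertible (Nat.card G : ℂ) :=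
  invertibleOfNonzero (by exact_mod_cast Nat.card_pos.ne')

theorem card_ne : (Nat.card G : ℂ) ≠ 0 := by exact_mod_cast Nat.card_pos.ne'

theorem simple_of_irr [FiniteDimensional ℂ V] {ρ : Representation ℂ G V} (h : IsIrreducible ρ) :
    Simple (FDRep.of ρ) := by
  rw [FDRep.simple_iff_char_is_norm_one]
  have h1 := char_orthonormal ρ ρ
  rw [if_pos ⟨Representation.Equiv.refl ρ⟩] at h1
  have h2 : ∑ g, ρ.character g * ρ.character g⁻¹ = Nat.card G := by
    have := congrArg (fun x => (Nat.card G : ℂ) * x) h1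
    simpa [← mul_assoc, mul_inv_cancel₀ (card_ne (G := G))] using this
  exact h2

theorem irr_of_norm [FiniteDimensional ℂ V] {ρ : Representation ℂ G V}
    (h : ∑ g, ρ.character g * ρ.character g⁻¹ = Nat.card G) : IsIrreducible ρ := by
  have h1 := card_inv_mul_sum_char_mul_char_eq_finrank ρ ρ
  rw [h, inv_mul_cancel₀ (card_ne (G := G))] at h1
  have h1' : Module.finrank ℂ (IntertwiningMap ρ ρ) = 1 := by exact_mod_cast h1.symm
  have hnt : Nontrivial V := by
    by_contra hn
    rw [not_nontrivial_iff_subsingleton] at hn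
    have : ∀ g, ρ.character g = 0 := by
      intro g
      have : ρ g = 0 := Subsingleton.elim _ _
      simp [Representation.character, this]
    simp only [this, mul_zero, Finset.sum_const_zero] at h
    exact card_ne h.symm
  by_contra hirr
  obtain ⟨U, hU, hb, ht⟩ := not_irr_exists hirr
  obtain ⟨U', hU', hc⟩ := exists_compl ρ U hU
  have hid : IntertwiningMap.id ρ ≠ 0 := by
    intro h0
    obtain ⟨v, hv⟩ := exists_ne (0 : V)
    exact hv (congrArg (fun f : IntertwiningMap ρ ρ => f v) h0)
  let P : IntertwiningMap ρ ρ := ⟨U.subtype ∘ₗ Submodule.projectionOnto U U' hc, by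
    intro g
    ext v
    have hv : v ∈ U ⊔ U' := by rw [codisjoint_iff.1 hc.2]; trivial
    obtain ⟨a, ha, b, hb', rfl⟩ := Submodule.mem_sup.1 hv
    have h1 := Submodule.projectionOnto_apply_left hc ⟨a, ha⟩
    have h2 := (Submodule.projectionOnto_apply_eq_zero_iff hc (x := b)).2 hb'
    have h3 := Submodule.projectionOnto_apply_left hc ⟨ρ g a, hU g a ha⟩
    have h4 := (Submodule.projectionOnto_apply_eq_zero_iff hc (x := ρ g b)).2 (hU' g b hb')
    simp only [LinearMap.comp_apply, map_add] at *
    rw [h1, h2, h3, h4]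
    simp⟩
  obtain ⟨c, hcP⟩ := (finrank_eq_one_iff_of_nonzero' _ hid).1 h1' P
  have hPv : ∀ v, c • v = (Submodule.projectionOnto U U' hc v : V) := fun v =>
    congrArg (fun f : IntertwiningMap ρ ρ => f v) hcP
  obtain ⟨u, hu, hu0⟩ := Submodule.exists_mem_ne_zero_of_ne_bot hb
  have hc1 : c = 1 := by
    have := hPv u
    rw [Submodule.projectionOnto_apply_left hc ⟨u, hu⟩] at this
    have h2 : c • u = (1 : ℂ) • u := by rw [one_smul]; exact this
    exact smul_left_injective ℂ hu0 h2
  apply ht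
  rw [eq_top_iff]
  intro v _
  have := hPv v
  rw [hc1, one_smul] at this
  rw [this]
  exact Subtype.prop _

theorem irr_of_simple (W : FDRep ℂ G) (h : Simple W) : IsIrreducible (V := W) W.ρ := by
  rw [FDRep.simple_iff_char_is_norm_one] at h
  exact irr_of_norm h

/-- Every non-identity element is detected by an irreducible representation. -/
theorem exists_irr_ne (g : G) (hg : g ≠ 1) : ∃ (W : FDRep ℂ G), Simple W ∧ W.ρ g ≠ 1 := by
  have hex : ∃ n : ℕ, ∃ W : FDRep ℂ G, Module.finrank ℂ W = n ∧ W.ρ g ≠ 1 := by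
    refine ⟨_, FDRep.of (leftRegular ℂ G), rfl, fun h => hg ?_⟩
    have h2 : leftRegular ℂ G g = 1 := h
    have := LinearMap.congr_fun h2 (MonoidAlgebra.single 1 1)
    rw [ofMulAction_single, smul_eq_mul, mul_one, Module.End.one_apply] at this
    exact MonoidAlgebra.single_left_injective (one_ne_zero (α := ℂ)) this
  classical
  obtain ⟨W, hW, hne⟩ := Nat.find_spec hex
  have hmin := fun m => Nat.find_min hex (m := m)
  refine ⟨W, ?_, hne⟩
  have hnt : Nontrivial W := by
    by_contra hn
    rw [not_nontrivial_iff_subsingleton] at hn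
    exact hne (Subsingleton.elim _ _)
  suffices h : IsIrreducible (V := W) W.ρ from simple_of_irr h
  by_contra hirr
  obtain ⟨U, hU, hb, ht⟩ := not_irr_exists hirr
  obtain ⟨U', hU', hc⟩ := exists_compl (V := W) W.ρ U hU
  have key : ∀ X : Submodule ℂ W, (∀ g : G, ∀ v ∈ X, W.ρ g v ∈ X) → X ≠ ⊤ →
      ∀ v ∈ X, W.ρ g v = v := by
    intro X hX hXt v hv
    let S : Subrepresentation (W := W) W.ρ := ⟨X, fun g v hv => hX g v hv⟩
    by_contra hne'
    have hlt : Module.finrank ℂ X < Nat.find hex := by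
      rw [← hW]; exact Submodule.finrank_lt hXt
    refine hmin _ hlt ⟨FDRep.of S.toRepresentation, rfl, fun h1 => hne' ?_⟩
    have := LinearMap.congr_fun h1 (⟨v, hv⟩ : X)
    exact congrArg Subtype.val this
  have hU't : U' ≠ ⊤ := by
    rintro rfl
    exact hb (by simpa using disjoint_iff.1 hc.1)
  apply hne
  ext v
  have hv : v ∈ U ⊔ U' := by rw [codisjoint_iff.1 hc.2]; trivial
  obtain ⟨a, ha, b, hb', rfl⟩ := Submodule.mem_sup.1 hv
  rw [map_add, key U hU ht a ha, key U' hU' hU't b hb']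
  rfl

end reps

section chains

variable {G : Type} [Group G] [Fintype G] {V : Type} [AddCommGroup V] [Module ℂ V]

/-- The subgroup of elements acting as scalars. -/
def scal (ρ : Representation ℂ G V) : Subgroup G where
  carrier := {g | ∃ a : ℂ, ρ g = a • 1}
  one_mem' := ⟨1, by simp⟩
  mul_mem' := by
    rintro x y ⟨a, ha⟩ ⟨b, hb⟩
    exact ⟨a * b, by rw [map_mul, ha, hb, smul_mul_smul_comm, one_mul]⟩
  inv_mem' := by
    rintro x ⟨a, ha⟩
    refine ⟨a⁻¹, ?_⟩
    by_cases h0 : a = 0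
    · have h1 : ρ x⁻¹ * ρ x = 1 := by rw [← map_mul]; simp
      rw [ha, h0, zero_smul, mul_zero] at h1
      rw [h0, ← h1]
      ext v
      have := LinearMap.congr_fun h1 (ρ x⁻¹ v)
      simpa using this.symm
    · have h1 : ρ x * ρ x⁻¹ = 1 := by rw [← map_mul]; simp
      rw [ha, smul_mul_assoc, one_mul] at h1
      rw [← h1, smul_smul, inv_mul_cancel₀ h0, one_smul]

theorem scal_normal (ρ : Representation ℂ G V) : (scal ρ).Normal := by
  constructor
  rintro n ⟨a, ha⟩ g
  refine ⟨a, ?_⟩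
  rw [map_mul, map_mul, ha, mul_smul_comm, mul_one, smul_mul_assoc, ← map_mul]
  simp

theorem step_ker_scal [Nontrivial V] (ρ : Representation ℂ G V) :
    Step (MonoidHom.ker ρ) (scal ρ) := by
  obtain ⟨v, hv⟩ := exists_ne (0 : V)
  obtain ⟨f, hf⟩ := exists_eigen_hom ρ (scal ρ) hv (by
    rintro b ⟨a, ha⟩
    exact ⟨a, by rw [ha]; rfl⟩)
  refine ⟨fun x hx => ⟨1, by rw [one_smul]; exact hx⟩, f, ?_⟩
  rintro ⟨x, a, ha⟩
  have h1 := hf ⟨x, a, ha⟩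
  simp only [ha, LinearMap.smul_apply, Module.End.one_apply] at h1
  have h2 : a = f ⟨x, a, ha⟩ := smul_left_injective ℂ hv h1
  rw [← h2, MonoidHom.mem_ker, ha]
  constructor
  · intro h; rw [h, one_smul]
  · intro h
    have := LinearMap.congr_fun h v
    have h3 : a • v = (1 : ℂ) • v := by simpa using this
    exact smul_left_injective ℂ hv h3

theorem chain_of_comm_scal [Nontrivial V] (ρ : Representation ℂ G V)
    (h : ∀ x y : G, ∃ a : ℂ, ρ (x * y * x⁻¹ * y⁻¹) = a • 1) : Chain (MonoidHom.ker ρ) ⊤ :=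
  (Chain.single inferInstance (scal_normal ρ) (step_ker_scal ρ)).trans
    (chain_of_comm (scal_normal ρ) h)

theorem chain_of_semi [FiniteDimensional ℂ V] {ρ : Representation ℂ G V} (hirr : IsIrreducible ρ)
    (hd : Module.finrank ℂ V = 2) (P : V →ₗ[ℂ] V) (hP : P ≠ 0) (htr : LinearMap.trace ℂ V P = 0)
    (hl : ∀ g : G, ∃ a : ℂ, ρ g ∘ₗ P ∘ₗ ρ g⁻¹ = a • P) : Chain (MonoidHom.ker ρ) ⊤ := by
  have hnt := irr_nontrivial hirr
  obtain ⟨l0, hl0⟩ := exists_eigen_hom (linHom ρ ρ) ⊤ hP (fun g _ => hl g)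
  let l : G →* ℂ := l0.comp (Subgroup.topEquiv.symm.toMonoidHom)
  have hl1 : ∀ g v, ρ g (P v) = l g • P (ρ g v) := by
    intro g v
    have h1 : ρ g ∘ₗ P ∘ₗ ρ g⁻¹ = l g • P := hl0 ⟨g, trivial⟩
    have h2 := LinearMap.congr_fun h1 (ρ g v)
    simpa using h2
  have hlne : ∀ g, l g ≠ 0 := by
    intro g h0
    have : l g * l g⁻¹ = 1 := by rw [← map_mul, mul_inv_cancel, map_one]
    rw [h0, zero_mul] at this
    exact zero_ne_one this
  -- `P` is injective
  have hker : LinearMap.ker P = ⊥ := by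
    rcases irr_cases hirr (LinearMap.ker P) (by
      intro g v hv
      rw [LinearMap.mem_ker] at hv ⊢
      have := hl1 g v
      rw [hv, map_zero] at this
      exact (smul_eq_zero.1 this.symm).resolve_left (hlne g)) with h | h
    · exact h
    · exact absurd (LinearMap.ker_eq_top.1 h) hP
  obtain ⟨c, hc⟩ := Module.End.exists_eigenvalue P
  obtain ⟨e, he⟩ := hc.exists_hasEigenvector
  have hPe : P e = c • e := he.apply_eq_smul
  have he0 : e ≠ 0 := he.2
  have hc0 : c ≠ 0 := by
    rintro rfl
    rw [zero_smul] at hPe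
    have : e ∈ LinearMap.ker P := hPe
    rw [hker] at this
    exact he0 (by simpa using this)
  -- the character is nontrivial
  obtain ⟨g, hg⟩ : ∃ g, l g ≠ 1 := by
    by_contra hcon
    push Not at hcon
    obtain ⟨a, ha⟩ := schur_scalar hirr P (by
      intro g; ext v
      have := hl1 g v
      rw [hcon, one_smul] at this
      exact this.symm)
    rw [ha, map_smul, LinearMap.trace_one, hd] at htr
    have : a = 0 := by simpa using htr
    exact hP (by rw [ha, this, zero_smul])
  set e' := ρ g e with he'
  have he'0 : e' ≠ 0 := by
    intro h0
    have : ρ g⁻¹ (ρ g e) = e := by simp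
    rw [← he', h0, map_zero] at this
    exact he0 this.symm
  have hPe' : P e' = ((l g)⁻¹ * c) • e' := by
    have := hl1 g e
    rw [hPe, map_smul, ← he'] at this
    rw [mul_smul, this, smul_smul, inv_mul_cancel₀ (hlne g), one_smul]
  set c' := (l g)⁻¹ * c with hc'
  have hcc : c ≠ c' := by
    intro h
    apply hg
    have h1 : l g * c = c := by
      conv_lhs => rw [h, hc']
      rw [← mul_assoc, mul_inv_cancel₀ (hlne g), one_mul]
    exact mul_right_cancel₀ hc0 (by rw [h1, one_mul])
  -- the two vectors form a basis
  have hli : LinearIndependent ℂ ![e, e'] := by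
    rw [LinearIndependent.pair_iff]
    intro s t hst
    have h1 : (s * c) • e + (t * c') • e' = 0 := by
      have := congrArg P hst
      rw [map_add, map_smul, map_smul, hPe, hPe', map_zero, smul_smul, smul_smul] at this
      exact this
    have h2 : (t * (c' - c)) • e' = 0 := by
      have h3 : (t * (c' - c)) • e' = ((s * c) • e + (t * c') • e') - c • (s • e + t • e') := by
        module
      rw [h3, h1, hst]; simp
    have ht : t = 0 := by
      rcases smul_eq_zero.1 h2 with h | h
      · exact (mul_eq_zero.1 h).resolve_right (sub_ne_zero.2 hcc.symm)
      · exact absurd h he'0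
    rw [ht, zero_smul, add_zero] at hst
    exact ⟨(smul_eq_zero.1 hst).resolve_right he0, ht⟩
  have hspan : ∀ v : V, ∃ s t : ℂ, v = s • e + t • e' := by
    intro v
    have h1 := hli.span_eq_top_of_card_eq_finrank (by simp [hd])
    have h2 : v ∈ Submodule.span ℂ (Set.range ![e, e']) := by rw [h1]; trivial
    rw [Matrix.range_cons, Matrix.range_cons, Matrix.range_empty, Set.union_empty,
      Set.singleton_union, Submodule.mem_span_pair] at h2
    obtain ⟨s, t, h⟩ := h2
    exact ⟨s, t, h.symm⟩
  let A : Subgroup G := l.toHomUnits.ker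
  have hA : ∀ x, x ∈ A ↔ l x = 1 := by
    intro x
    rw [MonoidHom.mem_ker, ← Units.val_inj]
    rfl
  have hAP : ∀ x ∈ A, ∀ v, P (ρ x v) = ρ x (P v) := by
    intro x hx v
    rw [hl1, (hA x).1 hx, one_smul]
  obtain ⟨m, hm⟩ := exists_eigen_hom ρ A he0 (by
    intro b hb
    obtain ⟨s, t, hst⟩ := hspan (ρ b e)
    refine ⟨s, ?_⟩
    have h1 := hAP b hb e
    rw [hPe, map_smul, hst, map_add, map_smul, map_smul, hPe, hPe'] at h1
    have h2 : (t * (c' - c)) • e' = 0 := by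
      have h3 : (t * (c' - c)) • e' = (s • c • e + t • c' • e') - c • (s • e + t • e') := by
        module
      rw [h3, h1, sub_self]
    have ht : t = 0 := by
      rcases smul_eq_zero.1 h2 with h | h
      · exact (mul_eq_zero.1 h).resolve_right (sub_ne_zero.2 hcc.symm)
      · exact absurd h he'0
    rw [hst, ht, zero_smul, add_zero])
  obtain ⟨m', hm'⟩ := exists_eigen_hom ρ A he'0 (by
    intro b hb
    obtain ⟨s, t, hst⟩ := hspan (ρ b e')
    refine ⟨t, ?_⟩
    have h1 := hAP b hb e'
    rw [hPe', map_smul, hst, map_add, map_smul, map_smul, hPe, hPe'] at h1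
    have h2 : (s * (c - c')) • e = 0 := by
      have h3 : (s * (c - c')) • e = (s • c • e + t • c' • e') - c' • (s • e + t • e') := by
        module
      rw [h3, h1, sub_self]
    have ht : s = 0 := by
      rcases smul_eq_zero.1 h2 with h | h
      · exact (mul_eq_zero.1 h).resolve_right (sub_ne_zero.2 hcc)
      · exact absurd h he0
    rw [hst, ht, zero_smul, zero_add])
  have hm'0 : ∀ b, m' b ≠ 0 := by
    intro b h0
    have : m' b * m' b⁻¹ = 1 := by rw [← map_mul, mul_inv_cancel, map_one]
    rw [h0, zero_mul] at this
    exact zero_ne_one this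
  let q : A →* ℂ :=
    { toFun := fun b => m b * (m' b)⁻¹
      map_one' := by simp
      map_mul' := by intro x y; simp only [map_mul, mul_inv]; ring }
  have hqZ : Step (scal ρ) A := by
    refine ⟨?_, q, ?_⟩
    · rintro x ⟨a, ha⟩
      rw [hA]
      have h1 := hl1 x e
      rw [ha] at h1
      simp only [LinearMap.smul_apply, Module.End.one_apply, map_smul, hPe, smul_smul] at h1
      have ha0 : a ≠ 0 := by
        rintro rfl
        have h5 : ρ x⁻¹ (ρ x e) = e := by simp
        rw [ha, zero_smul, LinearMap.zero_apply, map_zero] at h5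
        exact he0 h5.symm
      have h2 := smul_left_injective ℂ he0 h1
      have h3 : (l x - 1) * (a * c) = 0 := by linear_combination -h2
      rcases mul_eq_zero.1 h3 with h | h
      · linear_combination h
      · exact absurd h (mul_ne_zero ha0 hc0)
    · intro x
      have hq : q x = 1 ↔ m x = m' x := by
        change m x * (m' x)⁻¹ = 1 ↔ _
        rw [mul_inv_eq_one₀ (hm'0 x)]
      rw [hq]
      constructor
      · intro h
        refine ⟨m x, ?_⟩
        ext v
        obtain ⟨s, t, rfl⟩ := hspan v
        rw [map_add, map_smul, map_smul, hm, hm', ← h]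
        simp only [LinearMap.smul_apply, Module.End.one_apply]
        module
      · rintro ⟨a, ha⟩
        have h1 := hm x
        have h2 := hm' x
        rw [ha] at h1 h2
        simp only [LinearMap.smul_apply, Module.End.one_apply] at h1 h2
        rw [← smul_left_injective ℂ he0 h1, ← smul_left_injective ℂ he'0 h2]
  have hAt : Step A ⊤ := by
    refine ⟨le_top, l.comp (Subgroup.subtype ⊤), fun x => ?_⟩
    rw [hA]; rfl
  have hAn : A.Normal := MonoidHom.normal_ker _
  exact ((Chain.single inferInstance (scal_normal ρ) (step_ker_scal ρ)).tail hAn hqZ).tail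
    inferInstance hAt

open scoped ComplexOrder in
theorem char_inv_conj [FiniteDimensional ℂ V] (ρ : Representation ℂ G V) (g : G) :
    ρ.character g⁻¹ = (starRingEnd ℂ) (ρ.character g) := by
  classical
  let b := Module.finBasis ℂ V
  let A : G → Matrix _ _ ℂ := fun x => LinearMap.toMatrix b b (ρ x)
  have hmul : ∀ x y, A (x * y) = A x * A y := by
    intro x y
    simp only [A, map_mul]
    exact LinearMap.toMatrix_comp b b b _ _
  have hone : A 1 = 1 := by
    simp only [A, map_one]
    exact LinearMap.toMatrix_one b
  have htr : ∀ x, ρ.character x = (A x).trace := fun x =>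
    LinearMap.trace_eq_matrix_trace ℂ b (ρ x)
  let H := ∑ x, (A x).conjTranspose * A x
  have hH : H.PosDef := by
    have h1 : H = (A 1).conjTranspose * A 1 + ∑ x ∈ Finset.univ.erase 1, (A x).conjTranspose * A x :=
      (Finset.add_sum_erase _ _ (Finset.mem_univ 1)).symm
    rw [h1, hone]
    refine Matrix.PosDef.add_posSemidef ?_ ?_
    · simpa using Matrix.PosDef.one
    · exact Matrix.posSemidef_sum _ (fun x _ => Matrix.posSemidef_conjTranspose_mul_self _)
  have hinv : (A g).conjTranspose * H * A g = H := by
    simp only [H, Finset.mul_sum, Finset.sum_mul]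
    rw [← Equiv.sum_comp (Equiv.mulRight g)
      (fun x => (A x).conjTranspose * A x)]
    refine Finset.sum_congr rfl fun x _ => ?_
    simp only [Equiv.coe_mulRight, hmul, Matrix.conjTranspose_mul, Matrix.mul_assoc]
  obtain ⟨K, hK⟩ := hH.isUnit.exists_right_inv
  have hgg : A g * A g⁻¹ = 1 := by rw [← hmul, mul_inv_cancel, hone]
  have h2 : (A g).conjTranspose * H = H * A g⁻¹ := by
    conv_rhs => rw [← hinv]
    rw [Matrix.mul_assoc _ (A g), hgg, Matrix.mul_one]
  have h3 : (A g).conjTranspose = H * A g⁻¹ * K := by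
    rw [← h2, Matrix.mul_assoc, hK, Matrix.mul_one]
  have h4 : K * H = 1 := mul_eq_one_comm.1 hK
  rw [htr, htr, starRingEnd_apply, ← Matrix.trace_conjTranspose, h3, Matrix.trace_mul_comm,
    ← Matrix.mul_assoc, h4, Matrix.one_mul]

end chains

section arith

theorem arith_aux {d s a b : ℕ} (hd : 3 ≤ d) (hs : d * (d - 2) < s) (hab : a + b = d) (ha : 1 ≤ a)
    (hb : 1 ≤ b) (hle : s ≤ a * a + b * b) (hp : ∀ p : ℕ, p.Prime → p ∣ s → p ∣ d) : False := by
  obtain ⟨e, rfl⟩ : ∃ e, d = e + 1 := ⟨d - 1, by omega⟩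
  obtain ⟨a, rfl⟩ : ∃ a', a = a' + 1 := ⟨a - 1, by omega⟩
  obtain ⟨b, rfl⟩ : ∃ b', b = b' + 1 := ⟨b - 1, by omega⟩
  have he : e = a + b + 1 := by omega
  have h1 : (e + 1) * (e + 1 - 2) + 1 = e * e := by
    obtain ⟨f, rfl⟩ : ∃ f, e = f + 1 := ⟨e - 1, by omega⟩
    have : f + 1 + 1 - 2 = f := by omega
    rw [this]; ring
  have h2 : s ≤ e * e + 1 := by
    refine hle.trans ?_
    subst he
    nlinarith [Nat.zero_le (a * b)]
  have h3 : s = e * e ∨ s = e * e + 1 := by omega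
  have he2 : 2 ≤ e := by omega
  rcases h3 with h | h
  · obtain ⟨p, hpp, hpe⟩ := Nat.exists_prime_and_dvd (n := e) (by omega)
    have h4 := hp p hpp (by rw [h]; exact dvd_mul_of_dvd_left hpe _)
    exact hpp.one_lt.ne' (Nat.dvd_one.1 ((Nat.dvd_add_right hpe).1 h4))
  · have hp2 : ∀ p : ℕ, p.Prime → p ∣ s → p = 2 := by
      intro p hpp hps
      have h4 := hp p hpp hps
      have h5 : p ∣ (e + 1) * (e + 1 - 2) + 2 := by
        have : (e + 1) * (e + 1 - 2) + 2 = s := by omega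
        rw [this]; exact hps
      have h6 := (Nat.dvd_add_right (dvd_mul_of_dvd_left h4 _)).1 h5
      exact (Nat.prime_dvd_prime_iff_eq hpp Nat.prime_two).1 h6
    obtain ⟨p, hpp, hps⟩ := Nat.exists_prime_and_dvd (n := s) (by nlinarith)
    have h2p := hp2 p hpp hps
    subst h2p
    obtain ⟨f, hf⟩ := hp 2 hpp hps
    obtain ⟨k, rfl⟩ : ∃ k, e = 2 * k + 1 := ⟨f - 1, by omega⟩
    have h7 : s = 2 * (2 * (k * k + k) + 1) := by rw [h]; ring
    obtain ⟨p, hpp, hpk⟩ := Nat.exists_prime_and_dvd (n := 2 * (k * k + k) + 1) (by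
      have : 1 ≤ k := by omega
      nlinarith)
    have := hp2 p hpp (by rw [h7]; exact dvd_mul_of_dvd_right hpk _)
    subst this
    omega

end arith

section key

variable {G : Type} [Group G] [Fintype G] {V : Type} [AddCommGroup V] [Module ℂ V]

/-- The linear characters fixing a function by multiplication. -/
def stab (χ : G → ℂ) : Subgroup (G →* ℂˣ) where
  carrier := {l | ∀ g, (l g : ℂ) * χ g = χ g}
  one_mem' := by intro g; simp
  mul_mem' := by
    intro a b ha hb g
    rw [MonoidHom.mul_apply, Units.val_mul, mul_assoc, hb g, ha g]
  inv_mem' := by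
    intro a ha g
    rw [MonoidHom.inv_apply]
    conv_lhs => rw [← ha g]
    rw [← mul_assoc, Units.inv_mul, one_mul]

/-- Twist of a representation by a linear character. -/
def twist (ρ : Representation ℂ G V) (l : G →* ℂˣ) : Representation ℂ G V where
  toFun g := (l g : ℂ) • ρ g
  map_one' := by simp
  map_mul' x y := by
    rw [map_mul, map_mul, Units.val_mul, smul_mul_smul_comm]

theorem twist_char (ρ : Representation ℂ G V) (l : G →* ℂˣ) (g : G) :
    (twist ρ l).character g = l g * ρ.character g := by
  simp [Representation.character, twist]

theorem norm_of_irr [FiniteDimensional ℂ V] {ρ : Representation ℂ G V} (h : IsIrreducible ρ) :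
    ∑ g, ρ.character g * ρ.character g⁻¹ = Nat.card G := by
  have h1 := simple_of_irr h
  rw [FDRep.simple_iff_char_is_norm_one] at h1
  exact h1

theorem twist_irr [FiniteDimensional ℂ V] {ρ : Representation ℂ G V} (h : IsIrreducible ρ)
    (l : G →* ℂˣ) : IsIrreducible (twist ρ l) := by
  apply irr_of_norm
  rw [← norm_of_irr h]
  refine Finset.sum_congr rfl fun g _ => ?_
  rw [twist_char, twist_char, map_inv]
  calc _ = ((l g : ℂ) * ((l g)⁻¹ : ℂˣ)) * (ρ.character g * ρ.character g⁻¹) := by ring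
    _ = _ := by rw [Units.mul_inv, one_mul]

theorem equiv_of_char [FiniteDimensional ℂ V] {W : Type} [AddCommGroup W] [Module ℂ W]
    [FiniteDimensional ℂ W] {ρ : Representation ℂ G V} {σ : Representation ℂ G W}
    (h : IsIrreducible ρ) (h' : IsIrreducible σ) (hc : ρ.character = σ.character) :
    Nonempty (Representation.Equiv ρ σ) := by
  classical
  by_contra hn
  have h1 := char_orthonormal σ ρ
  rw [if_neg hn, hc, norm_of_irr h', inv_mul_cancel₀ card_ne] at h1
  exact one_ne_zero h1

/-- The intertwiner attached to a stabilizing linear character. -/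
theorem exists_intertwiner [FiniteDimensional ℂ V] {ρ : Representation ℂ G V}
    (h : IsIrreducible ρ) (l : G →* ℂˣ) (hl : l ∈ stab ρ.character) :
    ∃ P : V ≃ₗ[ℂ] V, ∀ g v, P (ρ g v) = (l g : ℂ) • ρ g (P v) := by
  obtain ⟨φ⟩ := equiv_of_char h (twist_irr h l) (by
    ext g; rw [twist_char]; exact (hl g).symm)
  refine ⟨φ.toLinearEquiv, fun g v => ?_⟩
  exact LinearMap.congr_fun (φ.isIntertwining' g) v

theorem stab_pow [FiniteDimensional ℂ V] {ρ : Representation ℂ G V}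
    (h : IsIrreducible ρ) (l : G →* ℂˣ) (hl : l ∈ stab ρ.character) :
    l ^ (Module.finrank ℂ V) = 1 := by
  obtain ⟨P, hP⟩ := exists_intertwiner h l hl
  ext g
  have h1 : (P : V →ₗ[ℂ] V) ∘ₗ ρ g ∘ₗ (P.symm : V →ₗ[ℂ] V) = (l g : ℂ) • ρ g := by
    ext v
    simp [hP]
  have h2 := LinearMap.det_conj (ρ g) P
  rw [h1, LinearMap.det_smul] at h2
  have h3 : LinearMap.det (ρ g) ≠ 0 := by
    intro h0
    have h4 : LinearMap.det (ρ g) * LinearMap.det (ρ g⁻¹) = 1 := by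
      rw [← map_mul, ← map_mul]; simp
    rw [h0, zero_mul] at h4
    exact zero_ne_one h4
  simp only [MonoidHom.pow_apply, Units.val_pow_eq_pow_val, MonoidHom.one_apply, Units.val_one]
  exact mul_right_cancel₀ h3 (by rw [h2, one_mul])

theorem prime_dvd_of_stab [FiniteDimensional ℂ V] {ρ : Representation ℂ G V}
    (h : IsIrreducible ρ) (p : ℕ) (hp : p.Prime) (hd : p ∣ Nat.card (stab ρ.character)) :
    p ∣ Module.finrank ℂ V := by
  have := Fact.mk hp
  obtain ⟨l, hl⟩ := exists_prime_orderOf_dvd_card' (G := stab ρ.character) p hd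
  rw [← hl]
  apply orderOf_dvd_of_pow_eq_one
  apply Subtype.ext
  exact stab_pow h l.1 l.2

theorem linInd_intertwiners [FiniteDimensional ℂ V] {ρ : Representation ℂ G V}
    {ι : Type} (l : ι → (G →* ℂˣ)) (hinj : Function.Injective l) (P : ι → (V →ₗ[ℂ] V))
    (hP0 : ∀ i, P i ≠ 0) (hP : ∀ i g v, P i (ρ g v) = (l i g : ℂ) • ρ g (P i v)) :
    LinearIndependent ℂ P := by
  have hded : LinearIndependent ℂ (fun i => (fun g => (l i g : ℂ) : G → ℂ)) := by
    have h1 := linearIndependent_monoidHom G ℂ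
    refine h1.comp (fun i => (Units.coeHom ℂ).comp (l i)) ?_
    intro i j hij
    apply hinj
    ext g
    exact DFunLike.congr_fun hij g
  rw [linearIndependent_iff'] at hded ⊢
  intro s c hc i hi
  have h1 : ∀ g v, ∑ i ∈ s, (c i * l i g) • P i v = 0 := by
    intro g v
    have h2 := LinearMap.congr_fun hc (ρ g v)
    simp only [LinearMap.sum_apply, LinearMap.smul_apply, hP, LinearMap.zero_apply] at h2
    have h3 := congrArg (ρ g⁻¹) h2
    rw [map_sum, map_zero] at h3
    rw [← h3]
    refine Finset.sum_congr rfl fun i _ => ?_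
    simp [smul_smul]
  obtain ⟨v, hv⟩ : ∃ v, P i v ≠ 0 := by
    by_contra hcon
    push Not at hcon
    exact hP0 i (LinearMap.ext hcon)
  obtain ⟨f, hf⟩ : ∃ f : Module.Dual ℂ V, f (P i v) ≠ 0 := by
    by_contra hcon
    push Not at hcon
    exact hv ((Module.forall_dual_apply_eq_zero_iff ℂ _).1 hcon)
  have h4 := hded s (fun i => c i * f (P i v)) (by
    ext g
    have h5 := congrArg f (h1 g v)
    rw [map_sum, map_zero] at h5
    simp only [Finset.sum_apply, Pi.smul_apply, Pi.zero_apply, smul_eq_mul]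
    rw [← h5]
    refine Finset.sum_congr rfl fun i _ => ?_
    rw [map_smul, smul_eq_mul]; ring) i hi
  exact (mul_eq_zero.1 h4).resolve_right hf

theorem aeval_commute (T : V →ₗ[ℂ] V) (r : Polynomial ℂ) (S : V →ₗ[ℂ] V) (h : Commute T S) :
    Commute (Polynomial.aeval T r) S := by
  induction r using Polynomial.induction_on' with
  | add p q hp hq =>
    rw [map_add]
    exact Commute.add_left hp hq
  | monomial k a =>
    rw [Polynomial.aeval_monomial]
    exact Commute.mul_left (Algebra.commutes a S) (h.pow_left k)

/-- Linearly independent operators commuting with a non-scalar operator of finite order. -/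
theorem card_le_of_commute [FiniteDimensional ℂ V] [Nontrivial V] (T : V →ₗ[ℂ] V) (n : ℕ)
    (hn : n ≠ 0) (hT : T ^ n = 1) (hns : ¬ ∃ a : ℂ, T = a • 1) {ι : Type} [Fintype ι]
    (P : ι → (V →ₗ[ℂ] V)) (hP : LinearIndependent ℂ P) (hc : ∀ i, Commute T (P i)) :
    ∃ a b : ℕ, a + b = Module.finrank ℂ V ∧ 1 ≤ a ∧ 1 ≤ b ∧ Fintype.card ι ≤ a * a + b * b := by
  obtain ⟨c, hcT⟩ := Module.End.exists_eigenvalue T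
  obtain ⟨e, he⟩ := hcT.exists_hasEigenvector
  have hcn : c ^ n = 1 := by
    have h1 : (T ^ n) e = c ^ n • e := he.pow_apply n
    rw [hT, Module.End.one_apply] at h1
    have h2 : (1 : ℂ) • e = c ^ n • e := by rw [one_smul]; exact h1
    exact (smul_left_injective ℂ he.2 h2).symm
  open Polynomial in
  obtain ⟨q, hq⟩ : (X - C c : ℂ[X]) ∣ X ^ n - 1 := by
    rw [dvd_iff_isRoot]; simp [hcn]
  have hsep : (Polynomial.X ^ n - 1 : Polynomial ℂ).Separable :=
    Polynomial.X_pow_sub_one_separable_iff.2 (by exact_mod_cast hn)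
  rw [hq] at hsep
  have hcop := hsep.isCoprime
  let E := LinearMap.ker (Polynomial.aeval T (Polynomial.X - Polynomial.C c))
  let F := LinearMap.ker (Polynomial.aeval T q)
  have hEF : IsCompl E F := by
    refine ⟨Polynomial.disjoint_ker_aeval_of_isCoprime T hcop, ?_⟩
    rw [codisjoint_iff]
    refine (Polynomial.sup_ker_aeval_eq_ker_aeval_mul_of_coprime T hcop).trans ?_
    rw [← hq]
    simp [hT]
  have hinv : ∀ (r : Polynomial ℂ) (i : ι), ∀ v ∈ LinearMap.ker (Polynomial.aeval T r),
      P i v ∈ LinearMap.ker (Polynomial.aeval T r) := by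
    intro r i v hv
    rw [LinearMap.mem_ker] at hv ⊢
    have h1 : Commute (Polynomial.aeval T r) (P i) := by
      exact aeval_commute T r (P i) (hc i)
    have h2 := LinearMap.congr_fun h1 v
    simp only [Module.End.mul_apply] at h2
    rw [h2, hv, map_zero]
  have heE : e ∈ E := by
    simp only [E, LinearMap.mem_ker, map_sub, Polynomial.aeval_X, Polynomial.aeval_C,
      LinearMap.sub_apply, he.apply_eq_smul, Module.algebraMap_end_apply, sub_self]
  refine ⟨Module.finrank ℂ E, Module.finrank ℂ F, Submodule.finrank_add_eq_of_isCompl hEF, ?_, ?_,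
    ?_⟩
  · rw [Nat.one_le_iff_ne_zero, Ne, Submodule.finrank_eq_zero]
    intro h0
    rw [h0] at heE
    exact he.2 (by simpa using heE)
  · rw [Nat.one_le_iff_ne_zero, Ne, Submodule.finrank_eq_zero]
    intro h0
    apply hns
    refine ⟨c, ?_⟩
    have h1 : E = ⊤ := by
      have := codisjoint_iff.1 hEF.2
      rwa [h0, sup_bot_eq] at this
    ext v
    have h2 : v ∈ E := by rw [h1]; trivial
    simp only [E, LinearMap.mem_ker, map_sub, Polynomial.aeval_X, Polynomial.aeval_C,
      LinearMap.sub_apply, Module.algebraMap_end_apply, sub_eq_zero] at h2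
    simpa using h2
  · let Q : ι → (E →ₗ[ℂ] E) × (F →ₗ[ℂ] F) := fun i =>
      ((P i).restrict (hinv _ i), (P i).restrict (hinv _ i))
    have hQ : LinearIndependent ℂ Q := by
      rw [linearIndependent_iff'] at hP ⊢
      intro s k hk i hi
      refine hP s k ?_ i hi
      have hk1 := congrArg Prod.fst hk
      have hk2 := congrArg Prod.snd hk
      rw [Prod.fst_sum] at hk1
      rw [Prod.snd_sum] at hk2
      ext v
      have hv : v ∈ E ⊔ F := by rw [codisjoint_iff.1 hEF.2]; trivial
      obtain ⟨x, hx, y, hy, rfl⟩ := Submodule.mem_sup.1 hv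
      have h1 := congrArg Subtype.val (LinearMap.congr_fun hk1 ⟨x, hx⟩)
      have h2 := congrArg Subtype.val (LinearMap.congr_fun hk2 ⟨y, hy⟩)
      simp only [Q, LinearMap.sum_apply, Prod.smul_fst, Prod.smul_snd, LinearMap.smul_apply,
        AddSubmonoidClass.coe_finsetSum, Submodule.coe_smul, LinearMap.coe_restrict_apply,
        Prod.fst_zero, Prod.snd_zero, LinearMap.zero_apply, Submodule.coe_zero] at h1 h2
      rw [map_add, LinearMap.sum_apply, LinearMap.sum_apply]
      simp only [LinearMap.smul_apply, LinearMap.zero_apply]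
      rw [h1, h2, add_zero]
    have := hQ.fintype_card_le_finrank
    rwa [Module.finrank_prod, Module.finrank_linearMap, Module.finrank_linearMap] at this

theorem comm_scalar [FiniteDimensional ℂ V] {ρ : Representation ℂ G V} (h : IsIrreducible ρ)
    (hd : 3 ≤ Module.finrank ℂ V)
    (hs : Module.finrank ℂ V * (Module.finrank ℂ V - 2) < Nat.card (stab ρ.character))
    (x y : G) : ∃ a : ℂ, ρ (x * y * x⁻¹ * y⁻¹) = a • 1 := by
  classical
  have hnt := irr_nontrivial h
  by_contra hns
  choose P hP using fun l : stab ρ.character => exists_intertwiner h l.1 l.2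
  have : Fintype (stab ρ.character) := Fintype.ofFinite _
  have hli := linInd_intertwiners (ρ := ρ) (ι := stab ρ.character) (fun l => l.1)
    Subtype.val_injective (fun l => (P l : V →ₗ[ℂ] V)) (by
      intro l h0
      obtain ⟨v, hv⟩ := exists_ne (0 : V)
      have h1 := LinearMap.congr_fun h0 v
      exact hv (by simpa using h1)) hP
  obtain ⟨a, b, hab, ha, hb, hle⟩ := card_le_of_commute (ρ (x * y * x⁻¹ * y⁻¹)) (Nat.card G)
    Nat.card_pos.ne' (by rw [← map_pow, pow_card_eq_one', map_one]) hns _ hli (by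
      intro l
      ext v
      have h1 := hP l (x * y * x⁻¹ * y⁻¹) v
      have h2 : l.1 (x * y * x⁻¹ * y⁻¹) = 1 := by
        simp only [map_mul, map_inv]
        rw [mul_comm (l.1 x) (l.1 y)]; simp
      rw [h2, Units.val_one, one_smul] at h1
      exact h1.symm)
  rw [← Nat.card_eq_fintype_card] at hle
  exact arith_aux hd hs hab ha hb hle (prime_dvd_of_stab h)

end key

section count

variable {G : Type} [Group G] [Fintype G]

theorem isIrrChar_of_irr {V : Type} [AddCommGroup V] [Module ℂ V] [FiniteDimensional ℂ V]
    {ρ : Representation ℂ G V} (h : IsIrreducible ρ) : IsIrrChar G ρ.character :=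
  ⟨FDRep.of ρ, simple_of_irr h, rfl⟩

theorem isIrrChar_deg {χ : G → ℂ} (h : IsIrrChar G χ) : ∃ n : ℕ, 1 ≤ n ∧ χ 1 = n := by
  obtain ⟨W, hW, rfl⟩ := h
  refine ⟨Module.finrank ℂ W, ?_, FDRep.char_one W⟩
  have := irr_nontrivial (irr_of_simple W hW)
  exact Module.finrank_pos

theorem irr_orth {χ ψ : G → ℂ} (h : IsIrrChar G χ) (h' : IsIrrChar G ψ) :
    (χ = ψ → ∑ g, χ g * (starRingEnd ℂ) (ψ g) = Nat.card G) ∧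
    (χ ≠ ψ → ∑ g, χ g * (starRingEnd ℂ) (ψ g) = 0) := by
  classical
  obtain ⟨W, hW, rfl⟩ := h
  obtain ⟨U, hU, rfl⟩ := h'
  have hconj : ∀ g, (starRingEnd ℂ) (U.character g) = U.character g⁻¹ := fun g =>
    (char_inv_conj (V := U) U.ρ g).symm
  simp only [hconj]
  constructor
  · intro h
    rw [← h]
    exact (FDRep.simple_iff_char_is_norm_one W).1 hW
  · intro h
    have h1 := FDRep.char_orthonormal W U
    rw [if_neg (by rintro ⟨i⟩; exact h (FDRep.char_iso i))] at h1
    exact (mul_eq_zero.1 h1).resolve_left (inv_ne_zero card_ne)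

theorem sum_sq_le (s : Finset (G → ℂ)) (hs : ∀ χ ∈ s, IsIrrChar G χ) :
    ∑ χ ∈ s, ((χ 1).re) ^ 2 ≤ (Nat.card G : ℝ) := by
  classical
  set N : ℝ := (Nat.card G : ℝ) with hN
  have hNpos : 0 < N := by rw [hN]; exact_mod_cast Nat.card_pos
  have hsq : Real.sqrt N * Real.sqrt N = N := Real.mul_self_sqrt hNpos.le
  have hsq0 : Real.sqrt N ≠ 0 := (Real.sqrt_pos.2 hNpos).ne'
  let v : s → EuclideanSpace ℂ G := fun χ => WithLp.toLp 2 (fun g => ((Real.sqrt N)⁻¹ : ℝ) * χ.1 g)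
  have hv : Orthonormal ℂ v := by
    rw [orthonormal_iff_ite]
    intro χ ψ
    have h0 : inner ℂ (v χ) (v ψ) = ((N⁻¹ : ℝ) : ℂ) * ∑ g, ψ.1 g * (starRingEnd ℂ) (χ.1 g) := by
      rw [PiLp.inner_apply, Finset.mul_sum]
      refine Finset.sum_congr rfl fun g _ => ?_
      simp only [v, RCLike.inner_apply, map_mul, Complex.conj_ofReal]
      have : ((N⁻¹ : ℝ) : ℂ) = ((Real.sqrt N)⁻¹ : ℝ) * ((Real.sqrt N)⁻¹ : ℝ) := by
        rw [← Complex.ofReal_mul, ← mul_inv, hsq]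
      rw [this]; ring
    rw [h0]
    have h1 := irr_orth (hs ψ.1 ψ.2) (hs χ.1 χ.2)
    split_ifs with h
    · rw [h1.1 (by rw [h])]
      have : (Nat.card G : ℂ) = ((N : ℝ) : ℂ) := by rw [hN]; simp
      rw [this, ← Complex.ofReal_mul, inv_mul_cancel₀ hNpos.ne', Complex.ofReal_one]
    · rw [h1.2 (fun h2 => h (Subtype.ext h2.symm)), mul_zero]
  have hb := hv.sum_inner_products_le (EuclideanSpace.single (1 : G) (1 : ℂ)) (s := Finset.univ)
  rw [EuclideanSpace.norm_single, norm_one, one_pow] at hb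
  have h2 : ∀ χ : s, ‖inner ℂ (v χ) (EuclideanSpace.single (1 : G) (1 : ℂ))‖ ^ 2
      = N⁻¹ * ((χ.1 1).re) ^ 2 := by
    intro χ
    obtain ⟨n, -, hn⟩ := isIrrChar_deg (hs χ.1 χ.2)
    rw [EuclideanSpace.inner_single_right]
    simp only [v, hn, map_mul, Complex.conj_ofReal, map_natCast, one_mul, norm_mul,
      Complex.norm_real, Complex.norm_natCast, Complex.natCast_re, mul_pow, Real.norm_eq_abs,
      sq_abs, inv_pow, Real.sq_sqrt hNpos.le]
  simp only [h2] at hb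
  rw [← Finset.mul_sum, Finset.sum_coe_sort s (fun χ => ((χ 1).re) ^ 2)] at hb
  have h3 := mul_le_mul_of_nonneg_left hb hNpos.le
  rwa [← mul_assoc, mul_inv_cancel₀ hNpos.ne', one_mul, mul_one] at h3

theorem finite_irr (h : charDegSum G > (1 / 2 : ℝ) * Nat.card G) :
    {χ : G → ℂ | IsIrrChar G χ}.Finite := by
  by_contra hinf
  have h0 : charDegSum G = 0 := by
    unfold charDegSum
    apply finsum_mem_eq_zero_of_infinite
    suffices hsupp : {χ : G → ℂ | IsIrrChar G χ} ∩ Function.support (fun χ : G → ℂ => (χ 1).re)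
        = {χ : G → ℂ | IsIrrChar G χ} by
      rw [hsupp]; exact hinf
    refine Set.inter_eq_left.2 fun χ hχ => ?_
    obtain ⟨n, hn, hχn⟩ := isIrrChar_deg hχ
    rw [Function.mem_support, hχn, Complex.natCast_re]
    exact_mod_cast (by omega : n ≠ 0)
  rw [h0] at h
  have : (0 : ℝ) ≤ 1 / 2 * Nat.card G := by positivity
  linarith

theorem linear_char {χ : G → ℂ} (h : IsIrrChar G χ) (h1 : χ 1 = 1) :
    ∃ l : G →* ℂˣ, ∀ g, χ g = l g := by
  obtain ⟨W, hW, rfl⟩ := h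
  have hd : Module.finrank ℂ W = 1 := by
    have := FDRep.char_one W
    rw [h1] at this
    exact_mod_cast this.symm
  have := irr_nontrivial (irr_of_simple W hW)
  obtain ⟨v, hv⟩ := exists_ne (0 : W)
  have hsc : ∀ T : W →ₗ[ℂ] W, ∃ a : ℂ, T = a • 1 := by
    intro T
    obtain ⟨a, ha⟩ := (finrank_eq_one_iff_of_nonzero' v hv).1 hd (T v)
    refine ⟨a, ?_⟩
    ext w
    obtain ⟨b, rfl⟩ := (finrank_eq_one_iff_of_nonzero' v hv).1 hd w
    rw [map_smul, ← ha, LinearMap.smul_apply, Module.End.one_apply, smul_comm]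
  obtain ⟨f, hf⟩ := exists_eigen_hom (V := W) W.ρ ⊤ hv (by
    intro b _
    obtain ⟨a, ha⟩ := hsc (W.ρ b)
    exact ⟨a, by rw [ha]; rfl⟩)
  refine ⟨(f.comp (Subgroup.topEquiv.symm.toMonoidHom)).toHomUnits, fun g => ?_⟩
  change _ = f ⟨g, trivial⟩
  obtain ⟨a, ha⟩ := hsc (W.ρ g)
  have h2 := hf ⟨g, trivial⟩
  simp only [ha, LinearMap.smul_apply, Module.End.one_apply] at h2
  rw [← smul_left_injective ℂ hv h2]
  unfold FDRep.character
  rw [ha, map_smul, LinearMap.trace_one, hd]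
  simp

theorem stab_large (h : charDegSum G > (1 / 2 : ℝ) * Nat.card G)
    {V : Type} [AddCommGroup V] [Module ℂ V] [FiniteDimensional ℂ V]
    {ρ : Representation ℂ G V} (hirr : IsIrreducible ρ) (hd : 3 ≤ Module.finrank ℂ V) :
    Module.finrank ℂ V * (Module.finrank ℂ V - 2) < Nat.card (stab ρ.character) := by
  classical
  have hfin := finite_irr h
  set d := Module.finrank ℂ V with hdd
  set F := hfin.toFinset with hF
  have hFmem : ∀ χ, χ ∈ F ↔ IsIrrChar G χ := fun χ => by rw [hF, Set.Finite.mem_toFinset]; rfl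
  have hT : charDegSum G = ∑ χ ∈ F, (χ 1).re := finsum_mem_eq_finite_toFinset_sum _ hfin
  have hsq := sum_sq_le F (fun χ hχ => (hFmem χ).1 hχ)
  have hpos : 0 < ∑ χ ∈ F, (2 * (χ 1).re - ((χ 1).re) ^ 2) := by
    rw [Finset.sum_sub_distrib, ← Finset.mul_sum, ← hT]
    linarith
  -- the orbit
  let tw : (G →* ℂˣ) → (G → ℂ) := fun l g => l g * ρ.character g
  have : Fintype (G →* ℂˣ) := Fintype.ofFinite _
  let O : Finset (G → ℂ) := Finset.univ.image tw
  have hOF : O ⊆ F := by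
    intro χ hχ
    obtain ⟨l, -, rfl⟩ := Finset.mem_image.1 hχ
    rw [hFmem]
    have := isIrrChar_of_irr (twist_irr hirr l)
    convert this using 1
    ext g
    rw [twist_char]
  have hOdeg : ∀ χ ∈ O, χ 1 = d := by
    intro χ hχ
    obtain ⟨l, -, rfl⟩ := Finset.mem_image.1 hχ
    simp [tw, hdd]
  let F1 := F.filter (fun χ => χ 1 = 1)
  have hF1 : F1.card ≤ Fintype.card (G →* ℂˣ) := by
    have : F1 ⊆ Finset.univ.image (fun l : G →* ℂˣ => (fun g => (l g : ℂ) : G → ℂ)) := by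
      intro χ hχ
      obtain ⟨h1, h2⟩ := Finset.mem_filter.1 hχ
      obtain ⟨l, hl⟩ := linear_char ((hFmem χ).1 h1) h2
      exact Finset.mem_image.2 ⟨l, Finset.mem_univ _, (funext hl).symm⟩
    exact (Finset.card_le_card this).trans Finset.card_image_le
  have hOcard : Fintype.card (G →* ℂˣ) = O.card * Nat.card (stab ρ.character) := by
    have h1 : Fintype.card (G →* ℂˣ) = ∑ χ ∈ O,
        (Finset.univ.filter (fun l => tw l = χ)).card := by
      rw [← Finset.card_univ]
      exact Finset.card_eq_sum_card_fiberwise (fun l _ => Finset.mem_image_of_mem _ (Finset.mem_univ l))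
    rw [h1, ← smul_eq_mul, ← Finset.sum_const]
    refine Finset.sum_congr rfl fun χ hχ => ?_
    obtain ⟨l0, -, rfl⟩ := Finset.mem_image.1 hχ
    rw [← Fintype.card_subtype, ← Nat.card_eq_fintype_card]
    refine Nat.card_congr ((Equiv.mulLeft l0⁻¹).subtypeEquiv ?_)
    intro l
    change (tw l = tw l0) ↔ ∀ g, (((l0⁻¹ * l) g : ℂˣ) : ℂ) * ρ.character g = ρ.character g
    rw [funext_iff]
    refine forall_congr' fun g => ?_
    simp only [tw, MonoidHom.mul_apply, MonoidHom.inv_apply, Units.val_mul, mul_assoc]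
    rw [Units.inv_mul_eq_iff_eq_mul]
  have hOpos : 0 < O.card := Finset.card_pos.2 ⟨_, Finset.mem_image_of_mem tw (Finset.mem_univ 1)⟩
  have hdisj : Disjoint F1 O := by
    rw [Finset.disjoint_left]
    intro χ h1 h2
    have h3 := (Finset.mem_filter.1 h1).2
    rw [hOdeg χ h2] at h3
    have : d = 1 := by exact_mod_cast h3
    omega
  have hsum : ∑ χ ∈ F, (2 * (χ 1).re - ((χ 1).re) ^ 2) ≤
      (F1.card : ℝ) - O.card * ((d : ℝ) * (d - 2)) := by
    have hsub : F1 ∪ O ⊆ F := Finset.union_subset (Finset.filter_subset _ _) hOF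
    rw [← Finset.sum_sdiff hsub, Finset.sum_union hdisj]
    have e1 : ∑ χ ∈ F1, (2 * (χ 1).re - ((χ 1).re) ^ 2) = (F1.card : ℝ) := by
      rw [Finset.sum_congr rfl (g := fun _ => (1 : ℝ))]
      · simp
      · intro χ hχ
        rw [(Finset.mem_filter.1 hχ).2]; norm_num
    have e2 : ∑ χ ∈ O, (2 * (χ 1).re - ((χ 1).re) ^ 2) = - (O.card * ((d : ℝ) * (d - 2))) := by
      rw [Finset.sum_congr rfl (g := fun _ => -((d : ℝ) * (d - 2)))]
      · simp
      · intro χ hχ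
        rw [hOdeg χ hχ, Complex.natCast_re]; ring
    have e3 : ∑ χ ∈ F \ (F1 ∪ O), (2 * (χ 1).re - ((χ 1).re) ^ 2) ≤ 0 := by
      apply Finset.sum_nonpos
      intro χ hχ
      obtain ⟨h1, h2⟩ := Finset.mem_sdiff.1 hχ
      obtain ⟨n, hn, hχn⟩ := isIrrChar_deg ((hFmem χ).1 h1)
      have hn1 : n ≠ 1 := by
        rintro rfl
        exact h2 (Finset.mem_union_left _ (Finset.mem_filter.2 ⟨h1, by simpa using hχn⟩))
      rw [hχn, Complex.natCast_re]
      have : (2 : ℝ) ≤ n := by exact_mod_cast (by omega : 2 ≤ n)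
      nlinarith
    rw [e1, e2]
    linarith
  have hfinal : (O.card : ℝ) * ((d : ℝ) * (d - 2)) < O.card * Nat.card (stab ρ.character) := by
    have h1 : (F1.card : ℝ) ≤ O.card * Nat.card (stab ρ.character) := by
      have := hF1
      rw [hOcard] at this
      exact_mod_cast this
    linarith
  have h2 := lt_of_mul_lt_mul_left hfinal (by positivity)
  have h3 : ((d * (d - 2) : ℕ) : ℝ) < Nat.card (stab ρ.character) := by
    rw [Nat.cast_mul, Nat.cast_sub (by omega)]
    exact h2
  exact_mod_cast h3

theorem exists_gen_of_finrank_one {E : Type} [AddCommGroup E] [Module ℂ E] (X : Submodule ℂ E)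
    (hX : Module.finrank ℂ X = 1) : ∃ v : X, v ≠ 0 ∧ ∀ w : X, ∃ c : ℂ, c • v = w :=
  finrank_eq_one_iff'.1 hX

theorem chain_two (h : charDegSum G > (1 / 2 : ℝ) * Nat.card G)
    {V : Type} [AddCommGroup V] [Module ℂ V] [FiniteDimensional ℂ V]
    {ρ : Representation ℂ G V} (hirr : IsIrreducible ρ) (hd : Module.finrank ℂ V = 2) :
    Chain (MonoidHom.ker ρ) ⊤ := by
  have hnt := irr_nontrivial hirr
  -- the traceless endomorphisms
  let W : Submodule ℂ (V →ₗ[ℂ] V) := LinearMap.ker (LinearMap.trace ℂ V)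
  have hWmem : ∀ X : V →ₗ[ℂ] V, X ∈ W ↔ LinearMap.trace ℂ V X = 0 := fun X => LinearMap.mem_ker
  have hWinv : ∀ g : G, ∀ X ∈ W, linHom ρ ρ g X ∈ W := by
    intro g X hX
    rw [hWmem] at hX ⊢
    rw [linHom_apply, ← hX]
    change LinearMap.trace ℂ V (ρ g * (X * ρ g⁻¹)) = _
    rw [LinearMap.trace_mul_comm, mul_assoc, ← map_mul]
    simp
  let S : Subrepresentation (linHom ρ ρ) := ⟨W, fun g v hv => hWinv g v hv⟩
  let σ : Representation ℂ G W := S.toRepresentation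
  have hσ : ∀ g (X : W), ((σ g X : W) : V →ₗ[ℂ] V) = ρ g ∘ₗ X.1 ∘ₗ ρ g⁻¹ := fun g X => rfl
  have hW3 : Module.finrank ℂ W = 3 := by
    have h1 := LinearMap.finrank_range_add_finrank_ker (LinearMap.trace ℂ V)
    have h2 : LinearMap.range (LinearMap.trace ℂ V) = ⊤ := by
      rw [LinearMap.range_eq_top]
      intro a
      refine ⟨(a / 2) • 1, ?_⟩
      rw [map_smul, LinearMap.trace_one, hd]
      simp
    rw [h2, finrank_top, Module.finrank_self, Module.finrank_linearMap, hd] at h1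
    change 1 + Module.finrank ℂ W = _ at h1
    omega
  have hWnt : Nontrivial W := Module.nontrivial_of_finrank_pos (R := ℂ) (by omega)
  by_cases hσirr : IsIrreducible σ
  · apply chain_of_comm_scal
    intro x y
    obtain ⟨a, ha⟩ := comm_scalar hσirr (by omega) (stab_large h hσirr (by omega)) x y
    set c := x * y * x⁻¹ * y⁻¹ with hc
    let t : ℂ := LinearMap.trace ℂ V (ρ c) / 2
    have hX0 : ρ c - t • 1 ∈ W := by
      rw [hWmem, map_sub, map_smul, LinearMap.trace_one, hd]
      simp [t]
    by_cases hz : ρ c - t • 1 = 0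
    · exact ⟨t, sub_eq_zero.1 hz⟩
    have haX : ∀ X : W, ρ c ∘ₗ X.1 ∘ₗ ρ c⁻¹ = a • X.1 := by
      intro X
      have := congrArg Subtype.val (LinearMap.congr_fun ha X)
      rw [hσ] at this
      exact this
    have hcc : ∀ v, ρ c (ρ c⁻¹ v) = v := by intro v; simp
    have hcc' : ∀ v, ρ c⁻¹ (ρ c v) = v := by intro v; simp
    have ha1 : a = 1 := by
      have h1 := haX ⟨_, hX0⟩
      have h2 : ρ c ∘ₗ (ρ c - t • 1) ∘ₗ ρ c⁻¹ = ρ c - t • 1 := by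
        ext v
        simp
      have h3 : a • (ρ c - t • 1) = (1 : ℂ) • (ρ c - t • 1) := by
        rw [one_smul]; exact h1.symm.trans h2
      exact smul_left_injective ℂ hz h3
    refine schur_scalar hirr (ρ c) ?_
    intro g
    let u : ℂ := LinearMap.trace ℂ V (ρ g) / 2
    have hY : ρ g - u • 1 ∈ W := by
      rw [hWmem, map_sub, map_smul, LinearMap.trace_one, hd]
      simp [u]
    have h1 := haX ⟨_, hY⟩
    rw [ha1, one_smul] at h1
    ext v
    have h2 := LinearMap.congr_fun h1 (ρ c v)
    simp only [LinearMap.comp_apply, hcc', LinearMap.sub_apply, LinearMap.smul_apply,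
      Module.End.one_apply, map_sub, map_smul] at h2
    simpa using h2
  · obtain ⟨U, hU, hUb, hUt⟩ := not_irr_exists hσirr
    obtain ⟨U', hU', hcompl⟩ := exists_compl σ U hU
    have hone : ∀ X : Submodule ℂ W, (∀ g : G, ∀ v ∈ X, σ g v ∈ X) → Module.finrank ℂ X = 1 →
        Chain (MonoidHom.ker ρ) ⊤ := by
      intro X hX hX1
      obtain ⟨P, hP0, hP⟩ := exists_gen_of_finrank_one X hX1
      refine chain_of_semi hirr hd P.1.1 ?_ ((hWmem _).1 P.1.2) ?_
      · intro h0
        exact hP0 (Subtype.ext (Subtype.ext h0))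
      · intro g
        obtain ⟨a, ha⟩ := hP ⟨σ g P.1, hX g P.1 P.2⟩
        refine ⟨a, ?_⟩
        have := congrArg (fun Z : X => (Z.1.1 : V →ₗ[ℂ] V)) ha
        exact this.symm
    have hsum := Submodule.finrank_add_eq_of_isCompl hcompl
    have hU0 : Module.finrank ℂ U ≠ 0 := by rwa [Ne, Submodule.finrank_eq_zero]
    have hU3 : Module.finrank ℂ U < 3 := by rw [← hW3]; exact Submodule.finrank_lt hUt
    rw [hW3] at hsum
    rcases (by omega : Module.finrank ℂ U = 1 ∨ Module.finrank ℂ U' = 1) with h1 | h1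
    · exact hone U hU h1
    · exact hone U' hU' h1

theorem chain_irr (h : charDegSum G > (1 / 2 : ℝ) * Nat.card G)
    {V : Type} [AddCommGroup V] [Module ℂ V] [FiniteDimensional ℂ V]
    {ρ : Representation ℂ G V} (hirr : IsIrreducible ρ) : Chain (MonoidHom.ker ρ) ⊤ := by
  have hnt := irr_nontrivial hirr
  have hpos : 0 < Module.finrank ℂ V := Module.finrank_pos
  rcases (by omega : Module.finrank ℂ V = 1 ∨ Module.finrank ℂ V = 2 ∨ 3 ≤ Module.finrank ℂ V)
    with h1 | h1 | h1
  · apply chain_of_comm_scal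
    intro x y
    obtain ⟨v, hv⟩ := exists_ne (0 : V)
    set T := ρ (x * y * x⁻¹ * y⁻¹)
    obtain ⟨a, ha⟩ := (finrank_eq_one_iff_of_nonzero' v hv).1 h1 (T v)
    refine ⟨a, ?_⟩
    ext w
    obtain ⟨b, rfl⟩ := (finrank_eq_one_iff_of_nonzero' v hv).1 h1 w
    rw [map_smul, ← ha, LinearMap.smul_apply, Module.End.one_apply, smul_comm]
  · exact chain_two h hirr h1
  · exact chain_of_comm_scal ρ (comm_scalar hirr h1 (stab_large h hirr h1))

end count

end DegSum

/-- If `T(G) > (1/2)·|G|`, then the finite group `G` is supersolvable. -/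
theorem degree_sum_supersolvable (G : Type) [Group G] [Fintype G]
    (h : charDegSum G > (1 / 2 : ℝ) * Nat.card G) :
    IsSupersolvable G := by
  obtain ⟨N, hN, hmin⟩ := DegSum.exists_min_chain (G := G)
  have hbot : N = ⊥ := by
    rw [eq_bot_iff]
    intro g hg
    by_contra hg1
    obtain ⟨W, hW, hne⟩ := DegSum.exists_irr_ne g (by simpa using hg1)
    exact hne (hmin _ (DegSum.chain_irr (V := W) h (DegSum.irr_of_simple W hW)) hg)
  rw [hbot] at hN
  exact hN.to_fin
end

section
/- Let q ≥ 5 be an odd prime power and let G = PSL(2,q) be the projective special linear group of degree 2 over the field with q elements. Then d(G) = (q+5)/((q²−1)q), and d(G) < 3/p² for every prime p dividing |G|. -/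
section
open Finset Classical

set_option linter.unusedSimpArgs false
set_option linter.unusedSectionVars false
namespace PSLc
variable {F : Type*} [Field F] [Fintype F]

lemma card_sqrt (hF : ringChar F ≠ 2) (a : F) :
    ((univ.filter fun x : F => x ^ 2 = a).card : ℤ) = quadraticChar F a + 1 := by
  rw [← quadraticChar_card_sqrts hF a]
  congr 2
  ext x; simp

lemma card_mul (k : F) :
    ((univ.filter fun x : F × F => x.1 * x.2 = k).card : ℤ)
      = (Fintype.card F - 1) + (if k = 0 then (Fintype.card F : ℤ) else 0) := by
  rw [Finset.card_filter, Fintype.sum_prod_type, ← Finset.add_sum_erase _ _ (mem_univ (0 : F))]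
  have : ∀ x ∈ univ.erase (0 : F), (∑ y : F, if (x, y).1 * (x, y).2 = k then 1 else 0) = 1 := by
    intro x hx
    have hx0 : x ≠ 0 := by simpa using hx
    rw [← Finset.card_filter, Finset.card_eq_one]
    refine ⟨k / x, ?_⟩
    ext y
    simp only [mem_filter, mem_univ, true_and, mem_singleton]
    rw [eq_div_iff hx0, mul_comm]
  rw [Finset.sum_congr rfl this]
  have h1 : 1 ≤ Fintype.card F := Fintype.card_pos
  by_cases hk : k = 0
  · simp [hk, Finset.card_erase_of_mem, h1]
    ring
  · simp [hk, Finset.card_erase_of_mem, h1, Ne.symm hk]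

lemma card_conic (hF : ringChar F ≠ 2) (d : F) :
    ((univ.filter fun x : F × F => x.1 ^ 2 - d * x.2 ^ 2 = 1).card : ℤ)
      = if d = 0 then 2 * (Fintype.card F : ℤ) else Fintype.card F - quadraticChar F d := by
  have h2 : (2 : F) ≠ 0 := Ring.two_ne_zero hF
  split_ifs with hd
  · subst hd
    have : (univ.filter fun x : F × F => x.1 ^ 2 - 0 * x.2 ^ 2 = 1)
      = (univ.filter fun x : F => x ^ 2 = 1) ×ˢ univ := by
      ext x; simp
    rw [this, card_product, Nat.cast_mul, card_sqrt hF]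
    simp
  · have key : (univ.filter fun x : F × F => x.1 ^ 2 - d * x.2 ^ 2 = 1).card
      = 1 + (univ.filter fun m : F => ¬ m ^ 2 = d⁻¹).card := by
      rw [← Finset.card_filter_add_card_filter_not (p := fun x : F × F => x.1 = 1)]
      congr 1
      · rw [card_eq_one]
        refine ⟨(1, 0), ?_⟩
        ext ⟨u, y⟩
        simp only [mem_filter, mem_univ, true_and, mem_singleton, Prod.mk.injEq]
        constructor
        · rintro ⟨h, rfl⟩
          refine ⟨rfl, ?_⟩
          have : d * y ^ 2 = 0 := by linear_combination -h
          simpa [hd] using this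
        · rintro ⟨rfl, rfl⟩; simp
      · refine Finset.card_nbij' (fun x => x.2 / (x.1 - 1))
          (fun m => (-(1 + d * m ^ 2) / (1 - d * m ^ 2), m * (-2 / (1 - d * m ^ 2)))) ?_ ?_ ?_ ?_
        · rintro ⟨u, y⟩ h
          simp only [coe_filter, mem_filter, mem_univ, true_and, Set.mem_ofPred_eq] at h ⊢
          obtain ⟨h, hu⟩ := h
          have hu' : u - 1 ≠ 0 := sub_ne_zero.mpr hu
          intro h'
          field_simp at h'
          have : (u - 1) * 2 = 0 := by linear_combination h + h'
          simp_all
        · intro m hm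
          simp only [coe_filter, mem_filter, mem_univ, true_and, Set.mem_ofPred_eq] at hm ⊢
          have hm' : 1 - d * m ^ 2 ≠ 0 := by
            intro h; apply hm; field_simp; linear_combination -h
          constructor
          · field_simp; ring
          · intro h; field_simp at h; apply h2; linear_combination -h
        · rintro ⟨u, y⟩ h
          simp only [coe_filter, mem_filter, mem_univ, true_and, Set.mem_ofPred_eq] at h ⊢
          obtain ⟨h, hu⟩ := h
          have hu' : u - 1 ≠ 0 := sub_ne_zero.mpr hu
          have h3 : 1 - d * (y / (u - 1)) ^ 2 = -2 / (u - 1) := by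
            field_simp; linear_combination h
          have h4 : d * (y / (u - 1)) ^ 2 = 1 + 2 / (u - 1) := by
            linear_combination -h3
          rw [h3, h4]
          ext
          · field_simp; ring
          · field_simp
        · intro m hm
          simp only [coe_filter, mem_filter, mem_univ, true_and, Set.mem_ofPred_eq] at hm ⊢
          have hm' : 1 - d * m ^ 2 ≠ 0 := by
            intro h; apply hm; field_simp; linear_combination -h
          have : -(1 + d * m ^ 2) / (1 - d * m ^ 2) - 1 = -2 / (1 - d * m ^ 2) := by
            field_simp; ring
          rw [this]
          have h5 : -2 / (1 - d * m ^ 2) ≠ 0 := div_ne_zero (neg_ne_zero.mpr h2) hm'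
          exact mul_div_cancel_right₀ _ h5
    have h1 := Finset.card_filter_add_card_filter_not (s := (univ : Finset F)) (p := fun m : F => m ^ 2 = d⁻¹)
    have h3 := card_sqrt hF d⁻¹
    have h4 : quadraticChar F d⁻¹ = quadraticChar F d := by
      have a1 : quadraticChar F d * quadraticChar F d⁻¹ = 1 := by
        rw [← map_mul, mul_inv_cancel₀ hd, map_one]
      have a2 := quadraticChar_sq_one hd
      have : quadraticChar F d * quadraticChar F d * quadraticChar F d⁻¹ = quadraticChar F d⁻¹ := by
        rw [← sq, a2, one_mul]
      rw [← this, mul_assoc, a1, mul_one]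
    rw [card_univ] at h1
    rw [key]; push_cast
    rw [h4] at h3
    have h5 : (((univ.filter fun m : F => m ^ 2 = d⁻¹).card : ℤ) + (univ.filter fun m : F => ¬ m ^ 2 = d⁻¹).card) = Fintype.card F := by
      exact_mod_cast h1
    linarith

/-- shift form -/
lemma card_conic' (hF : ringChar F ≠ 2) (t : F) :
    ((univ.filter fun x : F × F => x.1 ^ 2 + t * x.1 * x.2 + x.2 ^ 2 = 1).card : ℤ)
      = if (t / 2) ^ 2 - 1 = 0 then 2 * (Fintype.card F : ℤ)
        else Fintype.card F - quadraticChar F ((t / 2) ^ 2 - 1) := by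
  have h2 : (2 : F) ≠ 0 := Ring.two_ne_zero hF
  rw [← card_conic hF]
  congr 1
  refine Finset.card_nbij' (fun x => (x.1 + t / 2 * x.2, x.2)) (fun x => (x.1 - t / 2 * x.2, x.2))
    ?_ ?_ ?_ ?_
  · rintro ⟨u, y⟩ h
    simp only [coe_filter, mem_filter, mem_univ, true_and, Set.mem_ofPred_eq] at h ⊢
    rw [div_pow]; field_simp; linear_combination 4 * h
  · rintro ⟨u, y⟩ h
    simp only [coe_filter, mem_filter, mem_univ, true_and, Set.mem_ofPred_eq] at h ⊢
    rw [← h]; ring_nf; field_simp; ring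
  · rintro ⟨u, y⟩ h; simp
  · rintro ⟨u, y⟩ h; simp

open Matrix

lemma SL_det (A : Matrix.SpecialLinearGroup (Fin 2) F) : A 0 0 * A 1 1 - A 0 1 * A 1 0 = 1 := by
  rw [← Matrix.det_fin_two]; exact A.2

lemma SL_ext {A B : Matrix.SpecialLinearGroup (Fin 2) F} (h1 : A 0 0 = B 0 0) (h2 : A 0 1 = B 0 1)
    (h3 : A 1 0 = B 1 0) (h4 : A 1 1 = B 1 1) : A = B := by
  ext i j
  fin_cases i <;> fin_cases j <;> assumption

/-- constructor -/
def mkSL (a b c d : F) (h : a * d - b * c = 1) : Matrix.SpecialLinearGroup (Fin 2) F :=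
  ⟨!![a, b; c, d], by rw [Matrix.det_fin_two_of]; exact h⟩

@[simp] lemma mkSL_00 (a b c d : F) (h : a * d - b * c = 1) : mkSL a b c d h 0 0 = a := rfl
@[simp] lemma mkSL_01 (a b c d : F) (h : a * d - b * c = 1) : mkSL a b c d h 0 1 = b := rfl
@[simp] lemma mkSL_10 (a b c d : F) (h : a * d - b * c = 1) : mkSL a b c d h 1 0 = c := rfl
@[simp] lemma mkSL_11 (a b c d : F) (h : a * d - b * c = 1) : mkSL a b c d h 1 1 = d := rfl

lemma mul_ap (A B : Matrix.SpecialLinearGroup (Fin 2) F) (i j : Fin 2) :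
    (A * B) i j = A i 0 * B 0 j + A i 1 * B 1 j := by
  rw [Matrix.SpecialLinearGroup.coe_mul, Matrix.mul_apply, Fin.sum_univ_two]

lemma neg_ap (A : Matrix.SpecialLinearGroup (Fin 2) F) (i j : Fin 2) :
    (-A) i j = - A i j := by
  rw [Matrix.SpecialLinearGroup.coe_neg, Matrix.neg_apply]

lemma mul_eq_iff (A B : Matrix.SpecialLinearGroup (Fin 2) F) : A * B = B * A ↔
    (A 0 1 * B 1 0 = B 0 1 * A 1 0 ∧ (A 0 0 - A 1 1) * B 0 1 = (B 0 0 - B 1 1) * A 0 1 ∧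
      (A 0 0 - A 1 1) * B 1 0 = (B 0 0 - B 1 1) * A 1 0) := by
  constructor
  · intro h
    have h' : ∀ i j, (A * B) i j = (B * A) i j := fun i j => by rw [h]
    have h1 := h' 0 0
    have h2 := h' 0 1
    have h3 := h' 1 0
    simp only [mul_ap] at h1 h2 h3
    refine ⟨?_, ?_, ?_⟩
    · linear_combination h1
    · linear_combination h2
    · linear_combination -h3
  · rintro ⟨h1, h2, h3⟩
    apply SL_ext <;> simp only [mul_ap]
    · linear_combination h1
    · linear_combination h2
    · linear_combination -h3
    · linear_combination -h1

lemma card_SL : (Fintype.card (Matrix.SpecialLinearGroup (Fin 2) F) : ℤ)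
    = Fintype.card F * ((Fintype.card F : ℤ) ^ 2 - 1) := by
  have : Fintype.card (Matrix.SpecialLinearGroup (Fin 2) F) =
    (univ.filter fun x : (F × F) × (F × F) => x.2.1 * x.2.2 = x.1.1 * x.1.2 - 1).card := by
    rw [← card_univ]
    refine Finset.card_bij' (fun A _ => ((A 0 0, A 1 1), (A 0 1, A 1 0)))
      (fun x hx => mkSL x.1.1 x.2.1 x.2.2 x.1.2 (by
        simp only [mem_filter, mem_univ, true_and] at hx; rw [hx]; ring)) ?_ ?_ ?_ ?_
    · intro A _
      simp only [mem_filter, mem_univ, true_and]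
      linear_combination -SL_det A
    · intros; simp
    · intro A _; apply SL_ext <;> simp
    · intro A _; simp
  rw [this, card_filter, Fintype.sum_prod_type]
  simp only [← card_filter]
  push_cast
  simp only [card_mul, sum_add_distrib, sub_eq_zero]
  rw [← Finset.sum_filter, sum_const, sum_const, nsmul_eq_mul, nsmul_eq_mul, card_mul]
  simp
  ring

lemma card_trace (hF : ringChar F ≠ 2) (t : F) :
    ((univ.filter fun A : Matrix.SpecialLinearGroup (Fin 2) F => A 0 0 + A 1 1 = t).card : ℤ)
    = (Fintype.card F : ℤ) ^ 2 + quadraticChar F ((t / 2) ^ 2 - 1) * Fintype.card F := by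
  have h2 : (2 : F) ≠ 0 := Ring.two_ne_zero hF
  have : (univ.filter fun A : Matrix.SpecialLinearGroup (Fin 2) F => A 0 0 + A 1 1 = t).card =
    (univ.filter fun x : F × (F × F) => x.2.1 * x.2.2 = (t / 2) ^ 2 - 1 - x.1 ^ 2).card := by
    refine Finset.card_bij' (fun A _ => (A 0 0 - t / 2, (A 0 1, A 1 0)))
      (fun x hx => mkSL (t / 2 + x.1) x.2.1 x.2.2 (t / 2 - x.1) (by
        simp only [mem_filter, mem_univ, true_and] at hx; rw [hx]; ring)) ?_ ?_ ?_ ?_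
    · intro A hA
      simp only [mem_filter, mem_univ, true_and] at hA ⊢
      have h := SL_det A
      subst hA
      field_simp
      linear_combination -4 * h
    · intro x hx; simp; field_simp; ring
    · intro A hA
      simp only [mem_filter, mem_univ, true_and] at hA
      apply SL_ext <;> simp
      field_simp
      linear_combination -2 * hA
    · intro A _; simp
  rw [this, card_filter, Fintype.sum_prod_type]
  simp only [← card_filter]
  push_cast
  simp only [card_mul, sum_add_distrib, sub_eq_zero (b := (_ : F) ^ 2)]
  rw [← Finset.sum_filter, sum_const, sum_const, nsmul_eq_mul, nsmul_eq_mul]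
  have := card_sqrt hF ((t / 2) ^ 2 - 1)
  simp only [eq_comm (b := (_ : F) ^ 2)] at this ⊢
  simp only [eq_comm (b := (t / 2 : F) ^ 2 - 1)] at this ⊢
  rw [this]
  simp
  ring

lemma card_centralizer (hF : ringChar F ≠ 2) (A : Matrix.SpecialLinearGroup (Fin 2) F)
    (hA : A 0 1 ≠ 0 ∨ A 1 0 ≠ 0 ∨ A 0 0 - A 1 1 ≠ 0) :
    ((univ.filter fun B : Matrix.SpecialLinearGroup (Fin 2) F => A * B = B * A).card : ℤ)
     = if ((A 0 0 + A 1 1) / 2) ^ 2 - 1 = 0 then 2 * (Fintype.card F : ℤ)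
        else Fintype.card F - quadraticChar F (((A 0 0 + A 1 1) / 2) ^ 2 - 1) := by
  rw [← card_conic' hF]
  congr 1
  symm
  have hd := SL_det A
  refine Finset.card_bij (fun x hx => mkSL (x.1 + x.2 * A 0 0) (x.2 * A 0 1) (x.2 * A 1 0)
    (x.1 + x.2 * A 1 1) (by
      simp only [mem_filter, mem_univ, true_and] at hx
      linear_combination hx + x.2 ^ 2 * hd)) ?_ ?_ ?_
  · intro x hx
    simp only [mem_filter, mem_univ, true_and, mul_eq_iff]
    simp
    refine ⟨?_, ?_, ?_⟩ <;> ring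
  · rintro ⟨x, y⟩ hx ⟨x', y'⟩ hx' h
    have h1 := congrArg (fun M : Matrix.SpecialLinearGroup (Fin 2) F => M 0 0) h
    have h2 := congrArg (fun M : Matrix.SpecialLinearGroup (Fin 2) F => M 0 1) h
    have h3 := congrArg (fun M : Matrix.SpecialLinearGroup (Fin 2) F => M 1 0) h
    have h4 := congrArg (fun M : Matrix.SpecialLinearGroup (Fin 2) F => M 1 1) h
    simp at h1 h2 h3 h4
    have hy : y = y' := by
      rcases hA with hA | hA | hA
      · simpa [hA] using h2
      · simpa [hA] using h3
      · apply mul_right_cancel₀ hA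
        linear_combination h1 - h4
    subst hy
    simpa using h1
  · intro B hB
    simp only [mem_filter, mem_univ, true_and, mul_eq_iff] at hB
    obtain ⟨h1, h2, h3⟩ := hB
    have hdB := SL_det B
    have key : ∃ y, B 0 1 = y * A 0 1 ∧ B 1 0 = y * A 1 0 ∧ B 0 0 - B 1 1 = y * (A 0 0 - A 1 1) := by
      rcases hA with hA | hA | hA
      · refine ⟨B 0 1 / A 0 1, ?_, ?_, ?_⟩ <;> field_simp
        · linear_combination h1
        · linear_combination -h2
      · refine ⟨B 1 0 / A 1 0, ?_, ?_, ?_⟩ <;> field_simp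
        · linear_combination -h1
        · linear_combination -h3
      · refine ⟨(B 0 0 - B 1 1) / (A 0 0 - A 1 1), ?_, ?_, ?_⟩ <;> field_simp
        · linear_combination h2
        · linear_combination h3
    obtain ⟨y, k1, k2, k3⟩ := key
    refine ⟨(B 0 0 - y * A 0 0, y), ?_, ?_⟩
    · simp only [mem_filter, mem_univ, true_and]
      have k4 : B 1 1 = B 0 0 - y * (A 0 0 - A 1 1) := by linear_combination -k3
      rw [k1, k2, k4] at hdB
      linear_combination hdB - y ^ 2 * hd
    · apply SL_ext <;> simp
      · exact k1.symm
      · exact k2.symm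
      · linear_combination k3

lemma exists_anti (hF : ringChar F ≠ 2) (A : Matrix.SpecialLinearGroup (Fin 2) F)
    (hA : A 0 0 + A 1 1 = 0) : ∃ B : Matrix.SpecialLinearGroup (Fin 2) F, A * B = -(B * A) := by
  have h2 : (2 : F) ≠ 0 := Ring.two_ne_zero hF
  have hd := SL_det A
  have h11 : A 1 1 = - A 0 0 := by linear_combination hA
  rw [h11] at hd
  have : ∃ v b c : F, 2 * A 0 0 * v + A 0 1 * c + A 1 0 * b = 0 ∧ v ^ 2 + b * c = -1 := by
    by_cases hb : A 0 1 = 0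
    · have ha : A 0 0 ≠ 0 := by
        intro h; simp [h, hb] at hd
      refine ⟨- A 1 0 / (2 * A 0 0), 1, -1 - (- A 1 0 / (2 * A 0 0)) ^ 2, ?_, by ring⟩
      rw [hb]; field_simp; ring
    · obtain ⟨x, y, hxy⟩ : ∃ x y : F, x ^ 2 + y ^ 2 = -1 := by
        obtain ⟨x, y, h⟩ := FiniteField.exists_root_sum_quadratic (R := F)
          (f := Polynomial.X ^ 2) (g := Polynomial.X ^ 2 + Polynomial.C 1)
          (by simp) (by exact Polynomial.degree_X_pow_add_C (by norm_num) _) (FiniteField.odd_card_of_char_ne_two hF)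
        refine ⟨x, y, ?_⟩
        simp at h
        linear_combination h
      refine ⟨x + A 0 0 * y, A 0 1 * y, -(2 * A 0 0 * (x + A 0 0 * y) + A 1 0 * (A 0 1 * y)) / A 0 1,
        ?_, ?_⟩
      · field_simp; ring
      · field_simp
        linear_combination hxy + y ^ 2 * hd
  obtain ⟨v, b, c, h1, h2⟩ := this
  refine ⟨mkSL v b c (-v) (by linear_combination -h2), ?_⟩
  apply SL_ext <;> simp only [mul_ap, neg_ap, mkSL_00, mkSL_01, mkSL_10, mkSL_11, h11] <;> grind

lemma card_anti (hF : ringChar F ≠ 2) (A : Matrix.SpecialLinearGroup (Fin 2) F) :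
    ((univ.filter fun B : Matrix.SpecialLinearGroup (Fin 2) F => A * B = -(B * A)).card : ℤ)
     = if A 0 0 + A 1 1 = 0 then Fintype.card F - quadraticChar F (-1) else 0 := by
  have h2 : (2 : F) ≠ 0 := Ring.two_ne_zero hF
  split_ifs with hA
  · obtain ⟨B₀, hB₀⟩ := exists_anti hF A hA
    have hd := SL_det A
    have h11 : A 1 1 = - A 0 0 := by linear_combination hA
    have hc := card_centralizer hF A (by
      by_contra! h
      obtain ⟨h3, h4, h5⟩ := h
      have : A 0 0 = 0 := by
        have : 2 * A 0 0 = 0 := by linear_combination hA + h5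
        simpa [h2] using this
      rw [this, h3] at hd; simp at hd)
    rw [hA] at hc
    simp at hc
    rw [quadraticChar_apply, ← hc]
    congr 1
    refine Finset.card_nbij' (fun B => B₀⁻¹ * B) (fun B => B₀ * B) ?_ ?_ ?_ ?_
    · intro B hB
      simp only [coe_filter, mem_univ, true_and, Set.mem_ofPred_eq] at hB ⊢
      apply mul_left_cancel (a := B₀)
      have e1 : B₀ * (A * (B₀⁻¹ * B)) = (B₀ * A) * (B₀⁻¹ * B) := by group
      have e2 : B₀ * A = -(A * B₀) := by rw [hB₀, neg_neg]
      rw [e1, e2, neg_mul]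
      have e3 : A * B₀ * (B₀⁻¹ * B) = A * B := by group
      rw [e3, hB, neg_neg]; group
    · intro B hB
      simp only [coe_filter, mem_univ, true_and, Set.mem_ofPred_eq] at hB ⊢
      rw [← mul_assoc, hB₀, neg_mul, mul_assoc, hB, mul_assoc]
    · intro B hB; simp
    · intro B hB; simp
  · rw [Nat.cast_eq_zero, card_eq_zero, filter_eq_empty_iff]
    intro B _ h
    apply hA
    have e : A = -(B * A * B⁻¹) := by
      rw [← neg_mul, ← h]; group
    have e1 : trace A.1 = - trace A.1 := by
      conv_lhs => rw [e]
      rw [Matrix.SpecialLinearGroup.coe_neg, trace_neg, Matrix.SpecialLinearGroup.coe_mul, trace_mul_comm, ← Matrix.SpecialLinearGroup.coe_mul]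
      congr 3; exact inv_mul_cancel_left B A
    rw [trace_fin_two] at e1
    have : 2 * (A 0 0 + A 1 1) = 0 := by linear_combination e1
    simpa [h2] using this

lemma ne_neg (hF : ringChar F ≠ 2) (A : Matrix.SpecialLinearGroup (Fin 2) F) : A ≠ -A := by
  intro h
  have h2 : (2 : F) ≠ 0 := Ring.two_ne_zero hF
  have hd := SL_det A
  have k : ∀ i j, A i j = 0 := by
    intro i j
    have := congrArg (fun M : Matrix.SpecialLinearGroup (Fin 2) F => M i j) h
    simp only [neg_ap] at this
    have h3 : 2 * A i j = 0 := by linear_combination this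
    simpa [h2] using h3
  simp [k] at hd

lemma scalar_iff (A : Matrix.SpecialLinearGroup (Fin 2) F) :
    (A 0 1 = 0 ∧ A 1 0 = 0 ∧ A 0 0 - A 1 1 = 0) ↔ (A = 1 ∨ A = -1) := by
  constructor
  · rintro ⟨h1, h2, h3⟩
    have hd := SL_det A
    have h4 : A 1 1 = A 0 0 := by linear_combination -h3
    rw [h4, h1] at hd
    have h5 : (A 0 0 - 1) * (A 0 0 + 1) = 0 := by linear_combination hd
    rcases mul_eq_zero.mp h5 with h | h
    · left
      have h : A 0 0 = 1 := by linear_combination h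
      apply SL_ext <;> simp [h1, h2, h4, h]
    · right
      have h : A 0 0 = -1 := by linear_combination h
      apply SL_ext <;> simp [h1, h2, h4, h]
  · rintro (rfl | rfl) <;> simp

lemma mem_center (A : Matrix.SpecialLinearGroup (Fin 2) F) :
    A ∈ Subgroup.center (Matrix.SpecialLinearGroup (Fin 2) F) ↔ (A = 1 ∨ A = -1) := by
  constructor
  · intro h
    rw [Subgroup.mem_center_iff] at h
    rw [← scalar_iff]
    have h1 := (mul_eq_iff _ _).mp (h (mkSL 1 1 0 1 (by ring)))
    have h2 := (mul_eq_iff _ _).mp (h (mkSL 1 0 1 1 (by ring)))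
    simp at h1 h2
    refine ⟨?_, ?_, ?_⟩ <;> grind
  · rintro (rfl | rfl)
    · exact one_mem _
    · rw [Subgroup.mem_center_iff]; intro g; simp

lemma card_center (hF : ringChar F ≠ 2) :
    Nat.card (Subgroup.center (Matrix.SpecialLinearGroup (Fin 2) F)) = 2 := by
  have : (Subgroup.center (Matrix.SpecialLinearGroup (Fin 2) F) : Set (Matrix.SpecialLinearGroup (Fin 2) F))
      = {1, -1} := by
    ext A
    simp only [SetLike.mem_coe, mem_center, Set.mem_insert_iff, Set.mem_singleton_iff]
  have h : Nat.card (Subgroup.center (Matrix.SpecialLinearGroup (Fin 2) F))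
    = (Subgroup.center (Matrix.SpecialLinearGroup (Fin 2) F) : Set (Matrix.SpecialLinearGroup (Fin 2) F)).ncard := rfl
  rw [h, this, Set.ncard_pair (ne_neg hF 1)]

lemma sum_quot {G : Type*} [Group G] [Fintype G] (H : Subgroup G) [Fintype (G ⧸ H)]
    (f : G ⧸ H → ℤ) :
    ∑ g : G, f (QuotientGroup.mk g) = (Nat.card H : ℤ) * ∑ x, f x := by
  rw [← Finset.sum_fiberwise univ (fun g : G => (QuotientGroup.mk g : G ⧸ H)), mul_sum]
  refine sum_congr rfl fun x _ => ?_
  have h1 : ∀ g ∈ univ.filter (fun g : G => (QuotientGroup.mk g : G ⧸ H) = x),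
      f (QuotientGroup.mk g) = f x := by
    intro g hg
    simp only [mem_filter, mem_univ, true_and] at hg
    rw [hg]
  rw [sum_congr rfl h1, sum_const, nsmul_eq_mul]
  congr 2
  have h2 := Nat.card_congr (QuotientGroup.preimageMkEquivSubgroupProdSet H {x})
  rw [Nat.card_prod] at h2
  simp at h2
  rw [Nat.card_eq_fintype_card, ← h2]

lemma sum_comm (hF : ringChar F ≠ 2) :
    ∑ A : Matrix.SpecialLinearGroup (Fin 2) F,
      ((univ.filter fun B : Matrix.SpecialLinearGroup (Fin 2) F => A * B = B * A).card : ℤ)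
    = (Fintype.card F + 4) * Fintype.card (Matrix.SpecialLinearGroup (Fin 2) F) := by
  have h2 : (2 : F) ≠ 0 := Ring.two_ne_zero hF
  set q : ℤ := (Fintype.card F : ℤ) with hq
  set S : ℤ := (Fintype.card (Matrix.SpecialLinearGroup (Fin 2) F) : ℤ) with hS
  have hSq : S = q * (q ^ 2 - 1) := card_SL
  let M : F → ℤ := fun t => if (t / 2) ^ 2 - 1 = 0 then 2 * q
        else q - quadraticChar F ((t / 2) ^ 2 - 1)
  have hterm : ∀ A : Matrix.SpecialLinearGroup (Fin 2) F,
      ((univ.filter fun B : Matrix.SpecialLinearGroup (Fin 2) F => A * B = B * A).card : ℤ)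
      = M (A 0 0 + A 1 1) + (if A = 1 ∨ A = -1 then S - 2 * q else 0) := by
    intro A
    split_ifs with h
    · have h' : ∀ B : Matrix.SpecialLinearGroup (Fin 2) F, A * B = B * A := by
        intro B; rcases h with rfl | rfl <;> simp
      have hM : M (A 0 0 + A 1 1) = 2 * q := by
        simp only [M]
        rw [if_pos]
        rcases h with rfl | rfl
        · simp; field_simp; norm_num
        · simp; field_simp; norm_num
      rw [hM]
      simp [h', hS]
    · rw [← scalar_iff] at h
      rw [card_centralizer hF A (by tauto), add_zero]
  simp only [hterm]
  rw [sum_add_distrib]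
  have e1 : ∑ A : Matrix.SpecialLinearGroup (Fin 2) F, (if A = 1 ∨ A = -1 then S - 2 * q else 0)
      = 2 * (S - 2 * q) := by
    rw [← sum_filter, sum_const]
    have : (univ.filter fun A : Matrix.SpecialLinearGroup (Fin 2) F => A = 1 ∨ A = -1) = {1, -1} := by
      ext; simp
    rw [this, card_pair (ne_neg hF 1)]
    simp
  have e2 : ∑ A : Matrix.SpecialLinearGroup (Fin 2) F, M (A 0 0 + A 1 1)
      = ∑ t : F, (S + if (t = 2 ∨ t = -2) then 2 * q ^ 3 - S else 0) := by
    rw [← Finset.sum_fiberwise univ (fun A : Matrix.SpecialLinearGroup (Fin 2) F => A 0 0 + A 1 1)]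
    refine sum_congr rfl fun t _ => ?_
    have h1 : ∀ A ∈ univ.filter (fun A : Matrix.SpecialLinearGroup (Fin 2) F => A 0 0 + A 1 1 = t),
        M (A 0 0 + A 1 1) = M t := by
      intro A hA
      simp only [mem_filter, mem_univ, true_and] at hA
      rw [hA]
    rw [sum_congr rfl h1, sum_const, nsmul_eq_mul, card_trace hF]
    have hiff : (t / 2) ^ 2 - 1 = 0 ↔ (t = 2 ∨ t = -2) := by
      have : (t / 2) ^ 2 - 1 = (t - 2) * (t + 2) / 4 := by
        have : (4 : F) ≠ 0 := by
          have : (4 : F) = 2 * 2 := by norm_num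
          rw [this]; exact mul_ne_zero h2 h2
        field_simp; ring
      have h4 : (4 : F) ≠ 0 := by
        have : (4 : F) = 2 * 2 := by norm_num
        rw [this]; exact mul_ne_zero h2 h2
      rw [this, div_eq_zero_iff, mul_eq_zero, sub_eq_zero, add_eq_zero_iff_eq_neg]
      simp [h4]
    simp only [M, hiff]
    split_ifs with h
    · rw [hiff.mpr h, quadraticChar_zero]; ring
    · have := quadraticChar_sq_one (mt hiff.mp h)
      rw [hSq]
      linear_combination -q * this
  have e3 : (univ.filter fun t : F => t = 2 ∨ t = -2).card = 2 := by
    have : (univ.filter fun t : F => t = 2 ∨ t = -2) = {2, -2} := by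
      ext; simp
    rw [this, card_pair]
    intro h
    have : (2 : F) * 2 = 0 := by linear_combination h
    simp [h2] at this
  rw [e1, e2, sum_add_distrib, ← sum_filter, sum_const, sum_const, e3]
  simp only [card_univ, nsmul_eq_mul, ← hq]
  push_cast
  rw [hSq]
  ring

lemma sum_anti (hF : ringChar F ≠ 2) :
    ∑ A : Matrix.SpecialLinearGroup (Fin 2) F,
      ((univ.filter fun B : Matrix.SpecialLinearGroup (Fin 2) F => A * B = -(B * A)).card : ℤ)
    = Fintype.card (Matrix.SpecialLinearGroup (Fin 2) F) := by
  simp only [card_anti hF]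
  rw [← sum_filter, sum_const, nsmul_eq_mul, card_trace hF, card_SL]
  have := quadraticChar_sq_one (F := F) (a := -1) (by simp)
  simp only [zero_div, ne_eq, OfNat.ofNat_ne_zero, not_false_eq_true, zero_pow, zero_sub]
  linear_combination -(Fintype.card F : ℤ) * this

lemma commute_iff (A B : Matrix.SpecialLinearGroup (Fin 2) F) :
    Commute (QuotientGroup.mk A : Matrix.ProjectiveSpecialLinearGroup (Fin 2) F) (QuotientGroup.mk B)
      ↔ (A * B = B * A ∨ A * B = -(B * A)) := by
  rw [commute_iff_eq, ← QuotientGroup.mk_mul, ← QuotientGroup.mk_mul, eq_comm, QuotientGroup.eq, mem_center,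
    inv_mul_eq_iff_eq_mul, inv_mul_eq_iff_eq_mul]
  simp

lemma card_comm (hF : ringChar F ≠ 2) :
    4 * (Nat.card { p : Matrix.ProjectiveSpecialLinearGroup (Fin 2) F ×
      Matrix.ProjectiveSpecialLinearGroup (Fin 2) F // Commute p.1 p.2 } : ℤ)
    = (Fintype.card F + 5) * Fintype.card (Matrix.SpecialLinearGroup (Fin 2) F) := by
  let _ : Fintype (Matrix.ProjectiveSpecialLinearGroup (Fin 2) F) := Fintype.ofFinite _
  have e1 : (Nat.card { p : Matrix.ProjectiveSpecialLinearGroup (Fin 2) F ×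
      Matrix.ProjectiveSpecialLinearGroup (Fin 2) F // Commute p.1 p.2 } : ℤ)
      = ∑ x : Matrix.ProjectiveSpecialLinearGroup (Fin 2) F,
        ∑ y : Matrix.ProjectiveSpecialLinearGroup (Fin 2) F, if Commute x y then 1 else 0 := by
    rw [Nat.card_eq_fintype_card, Fintype.card_subtype, card_filter, Fintype.sum_prod_type]
    push_cast
    rfl
  have e2 := sum_quot (Subgroup.center (Matrix.SpecialLinearGroup (Fin 2) F))
    (fun x => ∑ y : Matrix.ProjectiveSpecialLinearGroup (Fin 2) F, if Commute x y then (1 : ℤ) else 0)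
  rw [card_center hF] at e2
  have e3 : ∀ A : Matrix.SpecialLinearGroup (Fin 2) F,
      2 * (∑ y : Matrix.ProjectiveSpecialLinearGroup (Fin 2) F,
        if Commute (QuotientGroup.mk A : Matrix.ProjectiveSpecialLinearGroup (Fin 2) F) y then (1 : ℤ) else 0)
      = ((univ.filter fun B : Matrix.SpecialLinearGroup (Fin 2) F => A * B = B * A).card : ℤ)
       + ((univ.filter fun B : Matrix.SpecialLinearGroup (Fin 2) F => A * B = -(B * A)).card : ℤ) := by
    intro A
    have e4 := sum_quot (Subgroup.center (Matrix.SpecialLinearGroup (Fin 2) F))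
      (fun y => if Commute (QuotientGroup.mk A : Matrix.ProjectiveSpecialLinearGroup (Fin 2) F) y
        then (1 : ℤ) else 0)
    rw [card_center hF] at e4
    push_cast at e4
    rw [← e4]
    simp only [commute_iff]
    rw [card_filter, card_filter]
    push_cast
    rw [← sum_add_distrib]
    refine sum_congr rfl fun B _ => ?_
    by_cases h1 : A * B = B * A
    · have h3 := ne_neg hF (B * A)
      simp [h1, h3]
    · simp [h1]
  push_cast at e2
  rw [e1]
  calc _ = 2 * (2 * ∑ x : Matrix.ProjectiveSpecialLinearGroup (Fin 2) F,
        ∑ y : Matrix.ProjectiveSpecialLinearGroup (Fin 2) F, if Commute x y then (1 : ℤ) else 0) := by ring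
    _ = _ := by
      rw [← e2, mul_sum]
      simp only [e3]
      rw [sum_add_distrib, sum_comm hF, sum_anti hF]
      ring

lemma card_PSL (hF : ringChar F ≠ 2) :
    2 * (Nat.card (Matrix.ProjectiveSpecialLinearGroup (Fin 2) F) : ℤ)
      = Fintype.card F * ((Fintype.card F : ℤ) ^ 2 - 1) := by
  rw [← card_SL]
  have := Subgroup.card_eq_card_quotient_mul_card_subgroup
    (Subgroup.center (Matrix.SpecialLinearGroup (Fin 2) F))
  rw [card_center hF, Nat.card_eq_fintype_card] at this
  rw [this]
  push_cast
  exact mul_comm _ _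

end PSLc
end

/-- For `q ≥ 5` an odd prime power and `G = PSL(2,q)`, the commuting probability satisfies
`d(G) = (q+5)/((q²−1)q)` and `d(G) < 3/p²` for every prime `p` dividing `|G|`. -/
theorem commProb_PSL_two_odd (q : ℕ) (hq : 5 ≤ q) (hq2 : Odd q)
    (F : Type*) [Field F] [Fintype F] (hF : Fintype.card F = q) :
    commProb (Matrix.ProjectiveSpecialLinearGroup (Fin 2) F) =
      ((q : ℚ) + 5) / (((q : ℚ) ^ 2 - 1) * q) ∧
    ∀ p : ℕ, p.Prime → p ∣ Nat.card (Matrix.ProjectiveSpecialLinearGroup (Fin 2) F) →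
      commProb (Matrix.ProjectiveSpecialLinearGroup (Fin 2) F) < 3 / (p : ℚ) ^ 2 := by
  have hc : ringChar F ≠ 2 := by
    intro h
    have := FiniteField.even_card_of_char_two h
    rw [hF] at this
    obtain ⟨k, hk⟩ := hq2
    omega
  have h1 := PSLc.card_comm hc
  have h2 := PSLc.card_PSL hc
  rw [PSLc.card_SL] at h1
  rw [hF] at h1 h2
  have hq' : (5 : ℚ) ≤ q := by exact_mod_cast hq
  have hpos : 0 < ((q : ℚ) ^ 2 - 1) * q := by
    have : 0 < (q : ℚ) ^ 2 - 1 := by nlinarith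
    positivity
  have hmain : commProb (Matrix.ProjectiveSpecialLinearGroup (Fin 2) F) =
      ((q : ℚ) + 5) / (((q : ℚ) ^ 2 - 1) * q) := by
    rw [commProb_def]
    have h1' : 4 * (Nat.card { p : Matrix.ProjectiveSpecialLinearGroup (Fin 2) F ×
      Matrix.ProjectiveSpecialLinearGroup (Fin 2) F // Commute p.1 p.2 } : ℚ)
      = (q + 5) * (q * ((q : ℚ) ^ 2 - 1)) := by exact_mod_cast h1
    have h2' : 2 * (Nat.card (Matrix.ProjectiveSpecialLinearGroup (Fin 2) F) : ℚ)
      = q * ((q : ℚ) ^ 2 - 1) := by exact_mod_cast h2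
    have h3 : (Nat.card { p : Matrix.ProjectiveSpecialLinearGroup (Fin 2) F ×
      Matrix.ProjectiveSpecialLinearGroup (Fin 2) F // Commute p.1 p.2 } : ℚ)
      = (q + 5) * (q * ((q : ℚ) ^ 2 - 1)) / 4 := by linarith
    have h4 : (Nat.card (Matrix.ProjectiveSpecialLinearGroup (Fin 2) F) : ℚ)
      = q * ((q : ℚ) ^ 2 - 1) / 2 := by linarith
    rw [h3, h4, div_eq_div_iff (by rw [mul_comm (q : ℚ)]; positivity) hpos.ne']
    ring
  refine ⟨hmain, fun p hp hdvd => ?_⟩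
  have hpq : p ≤ q := by
    have hd : (p : ℤ) ∣ q * ((q - 1) * (q + 1)) := by
      have : (q : ℤ) * ((q - 1) * (q + 1)) = q * ((q : ℤ) ^ 2 - 1) := by ring
      rw [this, ← h2]
      exact Dvd.dvd.mul_left (by exact_mod_cast hdvd) _
    have hp' : Prime (p : ℤ) := Nat.prime_iff_prime_int.mp hp
    rcases hp'.dvd_or_dvd hd with h | h
    · exact_mod_cast Int.le_of_dvd (by omega) h
    · rcases hp'.dvd_or_dvd h with h | h
      · have := Int.le_of_dvd (by omega) h
        omega
      · have := Int.le_of_dvd (by omega) h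
        by_contra hlt
        have he : p = q + 1 := by omega
        obtain ⟨k, hk⟩ := hq2
        rcases hp.eq_one_or_self_of_dvd 2 ⟨k + 1, by omega⟩ with h | h <;> omega
  have hp0 : (0 : ℚ) < p := by exact_mod_cast hp.pos
  have hpq' : (p : ℚ) ≤ q := by exact_mod_cast hpq
  have hpp : (p : ℚ) ^ 2 ≤ q ^ 2 := by gcongr
  rw [hmain, div_lt_div_iff₀ hpos (by positivity)]
  calc ((q : ℚ) + 5) * p ^ 2 ≤ (q + 5) * q ^ 2 := by gcongr
    _ < 3 * (((q : ℚ) ^ 2 - 1) * q) := by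
      have : 0 < (q : ℚ) * ((2 * q + 1) * (q - 3)) := by
        have : (0 : ℚ) < q - 3 := by linarith
        positivity
      nlinarith
end

section
/- Let q be a prime power and let G = PSL(3,q) be the projective special linear group of degree 3 over the field with q elements. If q ≥ 4, then d(G) ≤ (q²+3q)/((1/3)·q³(q²−1)(q³−1)) and d(G) < 3/p² for every prime p dividing |G|. Moreover, d(PSL(3,3)) = 1/468 < 3/169. -/
open Matrix
namespace PSLthree
variable {F : Type} [Field F]

/-- the matrix with columns `u`, `v`, `w` -/
def cols (u v w : Fin 3 → F) : Matrix (Fin 3) (Fin 3) F :=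
  !![u 0, v 0, w 0; u 1, v 1, w 1; u 2, v 2, w 2]

def IsCyc (A : Matrix (Fin 3) (Fin 3) F) : Prop :=
  ∃ P : Matrix (Fin 3) (Fin 3) F, P.det ≠ 0 ∧ ∃ c β γ, A * P = P * !![0, 0, c; 1, 0, β; 0, 1, γ]

def IsRk (A : Matrix (Fin 3) (Fin 3) F) : Prop :=
  ∃ (a : F) (u w : Fin 3 → F), A = a • 1 + vecMulVec u w

lemma cols_mul (A : Matrix (Fin 3) (Fin 3) F) (u v w) :
    A * cols u v w = cols (A *ᵥ u) (A *ᵥ v) (A *ᵥ w) := by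
  ext i j; fin_cases i <;> fin_cases j <;>
    simp [cols, Matrix.mul_apply, Fin.sum_univ_three, mulVec, dotProduct]

lemma cols_mulVec (u v w x : Fin 3 → F) :
    cols u v w *ᵥ x = x 0 • u + x 1 • v + x 2 • w := by
  ext i; fin_cases i <;> simp [cols, mulVec, dotProduct, Fin.sum_univ_three] <;> ring

lemma cols_mul_right (u v w : Fin 3 → F) (M : Matrix (Fin 3) (Fin 3) F) :
    cols u v w * M = cols (cols u v w *ᵥ (M.col 0)) (cols u v w *ᵥ (M.col 1))
      (cols u v w *ᵥ (M.col 2)) := by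
  ext i j; fin_cases i <;> fin_cases j <;>
    simp [cols, Matrix.mul_apply, Fin.sum_univ_three, mulVec, dotProduct]

lemma exists_pre (P : Matrix (Fin 3) (Fin 3) F) (hP : P.det ≠ 0) (y : Fin 3 → F) :
    ∃ x, P *ᵥ x = y :=
  ⟨P⁻¹ *ᵥ y, by rw [mulVec_mulVec, Matrix.mul_nonsing_inv _ (isUnit_iff_ne_zero.2 hP), one_mulVec]⟩

lemma isCyc_of (A : Matrix (Fin 3) (Fin 3) F) (v) (h : (cols v (A *ᵥ v) (A *ᵥ (A *ᵥ v))).det ≠ 0) :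
    IsCyc A := by
  refine ⟨_, h, ?_⟩
  obtain ⟨x, hx⟩ := exists_pre _ h (A *ᵥ (A *ᵥ (A *ᵥ v)))
  refine ⟨x 0, x 1, x 2, ?_⟩
  rw [cols_mul, ← hx, cols_mul_right]
  congr 1 <;> simp [cols_mulVec]

lemma conj_cyc (A B P : Matrix (Fin 3) (Fin 3) F) (hP : P.det ≠ 0) (h : A * P = P * B)
    (hB : IsCyc B) : IsCyc A := by
  obtain ⟨Q, hQ, c, β, γ, e⟩ := hB
  exact ⟨P * Q, by simp [hP, hQ], c, β, γ, by rw [← mul_assoc, h, mul_assoc, e, mul_assoc]⟩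

lemma conj_rk (A B P : Matrix (Fin 3) (Fin 3) F) (hP : P.det ≠ 0) (h : A * P = P * B)
    (hB : IsRk B) : IsRk A := by
  obtain ⟨a, u, w, rfl⟩ := hB
  have hu := isUnit_iff_ne_zero.2 hP
  refine ⟨a, P *ᵥ u, w ᵥ* P⁻¹, ?_⟩
  have : A = P * (a • 1 + vecMulVec u w) * P⁻¹ := by
    rw [← h, Matrix.mul_nonsing_inv_cancel_right _ _ hu]
  rw [this, mul_add, add_mul, Matrix.mul_vecMulVec, Matrix.vecMulVec_mul]
  simp [Matrix.mul_nonsing_inv _ hu]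

lemma special (b p e r g c : F) :
    IsCyc !![0, b, p; 1, e, r; 0, g, c] ∨ IsRk !![0, b, p; 1, e, r; 0, g, c] := by
  by_contra! hcon
  obtain ⟨h1, h2⟩ := hcon
  have H : ∀ v, (cols v (!![0, b, p; 1, e, r; 0, g, c] *ᵥ v)
      (!![0, b, p; 1, e, r; 0, g, c] *ᵥ (!![0, b, p; 1, e, r; 0, g, c] *ᵥ v))).det = 0 := by
    intro v; by_contra hv; exact h1 (isCyc_of _ v hv)
  have hg : g = 0 := by
    have := H ![1, 0, 0]
    simpa [cols, Matrix.det_fin_three, mulVec, dotProduct, Fin.sum_univ_three] using this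
  subst hg
  have K : ∀ x y m n : F, m = -c * x + b * y + p → n = x + (e - c) * y + r →
      m ^ 2 + e * m * n - b * n ^ 2 = 0 := by
    intro x y m n hm hn
    have := H ![x, y, 1]
    simp [cols, Matrix.det_fin_three, mulVec, dotProduct, Fin.sum_univ_three] at this
    subst hm hn
    linear_combination this
  have hD : -c * (e - c) - b = 0 := by
    by_contra hD
    obtain ⟨i, hi⟩ : ∃ i, (-c * (e - c) - b) * i = 1 := ⟨_, mul_inv_cancel₀ hD⟩
    have := K (((e - c) * (1 - p) + b * r) * i)
      ((-(1 - p) + c * r) * i) 1 0 (by linear_combination -(1 - p) * hi)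
      (by linear_combination r * hi)
    simp at this
  have hb : b = -c * (e - c) := by linear_combination -hD
  have k0 := K 0 0 _ _ rfl rfl
  have k1 := K 1 0 _ _ rfl rfl
  subst hb
  have hk : p + c * r = 0 := by
    by_contra hk
    have e0 : p + (e - c) * r = 0 := by
      apply mul_left_cancel₀ hk; linear_combination k0
    have e1 : p + (e - c) * r + (e - 2 * c) = 0 := by
      apply mul_left_cancel₀ hk; linear_combination k1
    apply hk; linear_combination e0 - r * (e1 - e0)
  apply h2
  refine ⟨c, ![-c, 1, 0], ![1, e - c, r], ?_⟩
  ext i j; fin_cases i <;> fin_cases j <;> simp [vecMulVec] 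
  linear_combination hk

lemma trichotomy (A : Matrix (Fin 3) (Fin 3) F) : IsCyc A ∨ IsRk A := by
  by_cases h : ∃ v z, (cols v (A *ᵥ v) z).det ≠ 0
  · obtain ⟨v, z, h⟩ := h
    obtain ⟨x, hx⟩ := exists_pre _ h (A *ᵥ (A *ᵥ v))
    obtain ⟨y, hy⟩ := exists_pre _ h (A *ᵥ z)
    have : A * (cols v (A *ᵥ v) z) = cols v (A *ᵥ v) z *
        !![0, x 0, y 0; 1, x 1, y 1; 0, x 2, y 2] := by
      rw [cols_mul, ← hx, ← hy, cols_mul_right]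
      congr 1 <;> simp [cols_mulVec]
    rcases special (x 0) (y 0) (x 1) (y 1) (x 2) (y 2) with h' | h'
    · exact Or.inl (conj_cyc _ _ _ h this h')
    · exact Or.inr (conj_rk _ _ _ h this h')
  · push Not at h
    right
    have a1 := h ![1,0,0] ![0,1,0]
    have a2 := h ![1,0,0] ![0,0,1]
    have a3 := h ![0,1,0] ![1,0,0]
    have a4 := h ![0,1,0] ![0,0,1]
    have a5 := h ![0,0,1] ![1,0,0]
    have a6 := h ![0,0,1] ![0,1,0]
    have a7 := h ![1,1,0] ![0,0,1]
    have a8 := h ![1,0,1] ![0,1,0]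
    simp [cols, Matrix.det_fin_three, mulVec, dotProduct, Fin.sum_univ_three] at a1 a2 a3 a4 a5 a6 a7 a8
    refine ⟨A 0 0, 0, 0, ?_⟩
    ext i j; fin_cases i <;> fin_cases j <;> simp [*]
    · linear_combination a7 - a2 + a4
    · linear_combination -a8 - a1 + a6

end PSLthree

namespace PSLthree
variable {F : Type} [Field F]

/-- normal forms for cyclic elements -/
def Mc (β γ : F) (t : Fˣ) : Matrix.SpecialLinearGroup (Fin 3) F :=
  ⟨!![0, 0, (t : F); (t : F)⁻¹, 0, β; 0, 1, γ], by simp [Matrix.det_fin_three]⟩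

/-- normal forms for noncyclic nonscalar elements -/
def Nc (a : Fˣ) : Matrix.SpecialLinearGroup (Fin 3) F :=
  ⟨!![(a : F) + (1 - (a : F) ^ 3) / (a : F) ^ 2, 1, 0; 0, a, 0; 0, 0, a], by
    simp [Matrix.det_fin_three]; have := a.ne_zero; field_simp; ring⟩

lemma conj_of {A B : Matrix.SpecialLinearGroup (Fin 3) F} (P : Matrix (Fin 3) (Fin 3) F) (hP : P.det = 1)
    (h : P * A.1 = B.1 * P) : IsConj A B := by
  rw [isConj_iff]
  let g : Matrix.SpecialLinearGroup (Fin 3) F := ⟨P, hP⟩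
  refine ⟨g, ?_⟩
  rw [mul_inv_eq_iff_eq_mul]
  exact Subtype.ext h

lemma Mc_cube (β γ : F) (t c : Fˣ) : IsConj (Mc β γ t) (Mc β γ (t * c ^ 3)) := by
  have := c.ne_zero
  have := t.ne_zero
  apply conj_of !![(c : F) ^ 2, 0, 0; 0, (c : F)⁻¹, 0; 0, 0, (c : F)⁻¹]
  · simp [Matrix.det_fin_three]; field_simp
  · ext i j; fin_cases i <;> fin_cases j <;>
      simp [Mc, Matrix.mul_apply, Fin.sum_univ_three] <;> field_simp

lemma Mc_scale (β γ : F) (t ω : Fˣ) (hω : ω ^ 3 = 1) :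
    IsConj (QuotientGroup.mk (Mc β γ t) : ProjectiveSpecialLinearGroup (Fin 3) F)
      (QuotientGroup.mk (Mc (ω ^ 2 * β) (ω * γ) t)) := by
  have hw : (ω : F) ^ 3 = 1 := by simpa using congrArg Units.val hω
  let Z : Matrix.SpecialLinearGroup (Fin 3) F := ⟨!![(ω : F), 0, 0; 0, ω, 0; 0, 0, ω], by
    simp [Matrix.det_fin_three]; linear_combination hw⟩
  have hZ : Z ∈ Subgroup.center (Matrix.SpecialLinearGroup (Fin 3) F) := by
    rw [Matrix.SpecialLinearGroup.mem_center_iff]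
    refine ⟨ω, by simpa using hw, ?_⟩
    ext i j; fin_cases i <;> fin_cases j <;> simp [Z]
  have e : (QuotientGroup.mk (Mc β γ t) : ProjectiveSpecialLinearGroup (Fin 3) F) =
      QuotientGroup.mk (Mc β γ t * Z) := by
    rw [QuotientGroup.mk_mul_of_mem _ hZ]
  rw [e]
  refine MonoidHom.map_isConj (QuotientGroup.mk' _) (conj_of !![1, 0, 0; 0, (ω : F) ^ 2, 0; 0, 0, (ω : F)] ?_ ?_)
  · simp [Matrix.det_fin_three]; linear_combination hw
  · change _ * ((Mc β γ t).1 * Z.1) = _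
    ext i j; fin_cases i <;> fin_cases j <;>
      simp [Mc, Z, Matrix.mul_apply, Fin.sum_univ_three]
    all_goals first | ring1 | linear_combination (t : F)⁻¹ * hw
  
lemma trans_vec (u : Fin 3 → F) (hu : u ≠ 0) :
    ∃ P : Matrix (Fin 3) (Fin 3) F, P.det = 1 ∧ P *ᵥ ![1, 0, 0] = u := by
  by_cases h0 : u 0 = 0
  · by_cases h1 : u 1 = 0
    · by_cases h2 : u 2 = 0
      · exact absurd (by ext i; fin_cases i <;> simp [*]) hu
      · refine ⟨!![u 0, (u 2)⁻¹, 0; u 1, 0, 1; u 2, 0, 0], ?_, ?_⟩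
        · simp [Matrix.det_fin_three]; field_simp
        · ext i; fin_cases i <;> simp
    · refine ⟨!![u 0, -(u 1)⁻¹, 0; u 1, 0, 0; u 2, 0, 1], ?_, ?_⟩
      · simp [Matrix.det_fin_three]; field_simp
      · ext i; fin_cases i <;> simp
  · refine ⟨!![u 0, 0, 0; u 1, (u 0)⁻¹, 0; u 2, 0, 1], ?_, ?_⟩
    · simp [Matrix.det_fin_three]; field_simp
    · ext i; fin_cases i <;> simp

lemma trans_covec (s a b : F) (h : ![s, a, b] ≠ 0) :
    ∃ P : Matrix (Fin 3) (Fin 3) F, P.det = 1 ∧ P *ᵥ ![1, 0, 0] = ![1, 0, 0] ∧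
      ![s, a, b] ᵥ* P = ![s, 1, 0] := by
  by_cases ha : a = 0
  · by_cases hb : b = 0
    · by_cases hs : s = 0
      · exact absurd (by ext i; fin_cases i <;> simp [*]) h
      · refine ⟨!![1, s⁻¹, 0; 0, 1, 0; 0, 0, 1], ?_, ?_, ?_⟩
        · simp [Matrix.det_fin_three]
        · ext i; fin_cases i <;> simp
        · ext i; fin_cases i <;> simp [vecMul, dotProduct, Fin.sum_univ_three, *]
    · refine ⟨!![1, 0, 0; 0, 0, -b; 0, b⁻¹, a], ?_, ?_, ?_⟩
      · simp [Matrix.det_fin_three, hb]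
      · ext i; fin_cases i <;> simp
      · ext i; fin_cases i <;> simp [vecMul, dotProduct, Fin.sum_univ_three, *]
  · refine ⟨!![1, 0, 0; 0, a⁻¹, -b; 0, 0, a], ?_, ?_, ?_⟩
    · simp [Matrix.det_fin_three, ha]
    · ext i; fin_cases i <;> simp
    · ext i; fin_cases i <;> simp [vecMul, dotProduct, Fin.sum_univ_three, *]
      ring

lemma trans_pair (u w : Fin 3 → F) (hu : u ≠ 0) (hw : w ≠ 0) :
    ∃ P : Matrix (Fin 3) (Fin 3) F, P.det = 1 ∧ P *ᵥ ![1, 0, 0] = u ∧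
      w ᵥ* P = ![w ⬝ᵥ u, 1, 0] := by
  obtain ⟨P, hP, h1⟩ := trans_vec u hu
  have hwP : w ᵥ* P = ![w ⬝ᵥ u, (w ᵥ* P) 1, (w ᵥ* P) 2] := by
    have : (w ᵥ* P) 0 = w ⬝ᵥ u := by
      rw [← h1, dotProduct_mulVec]; simp [dotProduct, Fin.sum_univ_three]
    rw [← this]; ext i; fin_cases i <;> simp
  have hne : w ᵥ* P ≠ 0 := by
    intro h0
    apply hw
    have : (w ᵥ* P) ᵥ* P⁻¹ = 0 := by rw [h0, zero_vecMul]
    rwa [vecMul_vecMul, Matrix.mul_nonsing_inv _ (by rw [hP]; exact isUnit_one), vecMul_one] at this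
  rw [hwP] at hne
  obtain ⟨Q, hQ, q1, q2⟩ := trans_covec _ _ _ hne
  refine ⟨P * Q, by simp [hP, hQ], ?_, ?_⟩
  · rw [← mulVec_mulVec, q1, h1]
  · rw [← vecMul_vecMul, hwP, q2]

lemma classify (A : Matrix.SpecialLinearGroup (Fin 3) F) :
    (∃ β γ t, IsConj (Mc β γ t) A) ∨ (∃ a, IsConj (Nc a) A) ∨ A ∈ Subgroup.center _ := by
  rcases trichotomy A.1 with ⟨P, hP, c, β, γ, h⟩ | ⟨a, u, w, h⟩
  · left
    have hc : c = 1 := by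
      have := congrArg Matrix.det h
      rw [det_mul, det_mul, A.2, one_mul] at this
      have h2 := mul_left_cancel₀ hP ((mul_one _).trans this)
      simpa [Matrix.det_fin_three] using h2.symm
    subst hc
    refine ⟨β, γ, Units.mk0 _ hP, conj_of (P * !![P.det⁻¹, 0, 0; 0, 1, 0; 0, 0, 1]) ?_ ?_⟩
    · simp [Matrix.det_fin_three !![P.det⁻¹, 0, 0; 0, 1, 0; 0, 0, 1], hP]
    · rw [← mul_assoc, h, mul_assoc, mul_assoc]
      congr 1
      ext i j; fin_cases i <;> fin_cases j <;>
        simp [Mc, Matrix.mul_apply, Fin.sum_univ_three, hP]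
  · right
    by_cases huw : u = 0 ∨ w = 0
    · right
      have h' : A.1 = a • 1 := by
        rw [h]; rcases huw with rfl | rfl <;> simp
      rw [Matrix.SpecialLinearGroup.mem_center_iff]
      refine ⟨a, ?_, ?_⟩
      · have := A.2
        rw [h'] at this
        simpa using this
      · rw [h', smul_one_eq_diagonal]; rfl
    · push Not at huw
      left
      obtain ⟨P, hP, p1, p2⟩ := trans_pair u w huw.1 huw.2
      have hd : a ^ 3 + a ^ 2 * (w ⬝ᵥ u) = 1 := by
        have := A.2
        rw [h] at this
        simp [Matrix.det_fin_three, vecMulVec, dotProduct, Fin.sum_univ_three] at this ⊢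
        linear_combination this
      have ha : a ≠ 0 := by rintro rfl; simp at hd
      have hs : w ⬝ᵥ u = (1 - a ^ 3) / a ^ 2 := by
        field_simp; linear_combination hd
      refine ⟨Units.mk0 a ha, conj_of P hP ?_⟩
      have : (Nc (Units.mk0 a ha)).1 = a • 1 + vecMulVec ![1, 0, 0] ![w ⬝ᵥ u, 1, 0] := by
        rw [hs]
        ext i j; fin_cases i <;> fin_cases j <;> simp [Nc, vecMulVec]
      rw [this, h, mul_add, add_mul, mul_vecMulVec, vecMulVec_mul, p1, p2]
      simp
end PSLthree

namespace PSLthree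
variable {F : Type} [Field F]

lemma fib {X K Y : Type} [Finite Y] [DecidableEq K] (f : X → K) (s : Finset X)
    (h : ∀ x ∈ s, ∃ g : Y → X, Function.Injective g ∧ ∀ y, g y ∈ s ∧ f (g y) = f x) :
    Nat.card Y * (s.image f).card ≤ s.card := by
  apply Finset.mul_card_image_le_card
  intro b hb
  obtain ⟨x, hx, rfl⟩ := Finset.mem_image.1 hb
  obtain ⟨g, hg, hy⟩ := h x hx
  have := Fintype.ofFinite Y
  rw [Nat.card_eq_fintype_card, ← Finset.card_univ]
  apply Finset.card_le_card_of_injOn g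
  · intro y _
    simpa using hy y
  · exact hg.injOn

/-- class in PSL of the cyclic normal form -/
def Ph (x : F × F × Fˣ) : ConjClasses (ProjectiveSpecialLinearGroup (Fin 3) F) :=
  ConjClasses.mk (QuotientGroup.mk (Mc x.1 x.2.1 x.2.2))

lemma Ph_cube (β γ : F) (t y : Fˣ) (hy : y ∈ (powMonoidHom 3 : Fˣ →* Fˣ).range) :
    Ph (β, γ, t * y) = Ph (β, γ, t) := by
  obtain ⟨c, rfl⟩ := hy
  exact (ConjClasses.mk_eq_mk_iff_isConj.2
    (MonoidHom.map_isConj (QuotientGroup.mk' _) (Mc_cube β γ t c))).symm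

lemma Ph_scale (β γ : F) (t ω : Fˣ) (hω : ω ^ 3 = 1) :
    Ph (ω ^ 2 * β, ω * γ, t) = Ph (β, γ, t) :=
  (ConjClasses.mk_eq_mk_iff_isConj.2 (Mc_scale β γ t ω hω)).symm

variable (F) [Fintype F]

lemma card_ker_range : Nat.card (rootsOfUnity 3 F) * Nat.card (powMonoidHom 3 : Fˣ →* Fˣ).range =
    Fintype.card F - 1 := by
  classical
  have h := Subgroup.card_mul_index (powMonoidHom 3 : Fˣ →* Fˣ).ker
  rw [Subgroup.index_ker] at h
  have e : rootsOfUnity 3 F = (powMonoidHom 3 : Fˣ →* Fˣ).ker := by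
    ext x; simp [mem_rootsOfUnity, MonoidHom.mem_ker]
  rw [e, h, Nat.card_eq_fintype_card, Fintype.card_units]

lemma card_classes_le :
    Nat.card (ConjClasses (ProjectiveSpecialLinearGroup (Fin 3) F)) + 1 ≤
      Fintype.card F ^ 2 + Fintype.card F + Nat.card (rootsOfUnity 3 F) := by
  classical
  set q := Fintype.card F with hq
  have hq1 : 1 < q := Fintype.one_lt_card
  have hkr := card_ker_range F
  have hun : Fintype.card Fˣ = q - 1 := Fintype.card_units F
  have := Fintype.ofFinite (ConjClasses (ProjectiveSpecialLinearGroup (Fin 3) F))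
  let s : Finset (F × F × Fˣ) := Finset.univ.filter (fun x => ¬ (x.1 = 0 ∧ x.2.1 = 0))
  have hs : s.card = (q ^ 2 - 1) * (q - 1) := by
    have h1 := Finset.card_filter_add_card_filter_not (s := (Finset.univ : Finset (F × F × Fˣ)))
      (fun x => x.1 = 0 ∧ x.2.1 = 0)
    have h2 : (Finset.univ.filter (fun x : F × F × Fˣ => x.1 = 0 ∧ x.2.1 = 0)).card = q - 1 := by
      rw [← hun, ← Finset.card_univ]
      symm
      apply Finset.card_bij (fun t _ => ((0 : F), (0 : F), t))
      · simp
      · simp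
      · rintro ⟨a, b, t⟩ h
        simp at h
        exact ⟨t, by simp, by simp [h]⟩
    rw [h2, Finset.card_univ, Fintype.card_prod, Fintype.card_prod, hun, ← hq] at h1
    change _ + s.card = _ at h1
    rw [Nat.sub_mul, one_mul, sq, mul_assoc]
    omega
  have b1 : (s.image Ph).card ≤ q ^ 2 - 1 := by
    have := fib (Y := rootsOfUnity 3 F × (powMonoidHom 3 : Fˣ →* Fˣ).range) Ph s (by
      rintro ⟨β, γ, t⟩ hx
      simp only [s, Finset.mem_filter, Finset.mem_univ, true_and] at hx
      refine ⟨fun y => ((y.1 : Fˣ) ^ 2 * β, (y.1 : Fˣ) * γ, t * y.2), ?_, ?_⟩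
      · rintro ⟨⟨a, ha⟩, ⟨y, hy⟩⟩ ⟨⟨a', ha'⟩, ⟨y', hy'⟩⟩ h
        simp only [Prod.mk.injEq] at h
        obtain ⟨h1, h2, h3⟩ := h
        have h3 := mul_left_cancel h3
        rw [mem_rootsOfUnity] at ha ha'
        have : a = a' := by
          by_cases hγ : γ = 0
          · have hβ : β ≠ 0 := fun h => hx ⟨h, hγ⟩
            have h1 := mul_right_cancel₀ hβ h1
            have h1 : a ^ 2 = a' ^ 2 := by exact_mod_cast h1
            calc a = (a ^ 2) ^ 2 := by rw [← pow_mul, pow_succ, ha, one_mul]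
              _ = (a' ^ 2) ^ 2 := by rw [h1]
              _ = a' := by rw [← pow_mul, pow_succ, ha', one_mul]
          · exact Units.ext (mul_right_cancel₀ hγ h2)
        subst this
        subst h3
        rfl
      · rintro ⟨⟨a, ha⟩, ⟨y, hy⟩⟩
        refine ⟨?_, ?_⟩
        · simpa [s] using hx
        · rw [Ph_cube _ _ _ _ hy, Ph_scale _ _ _ _ ((mem_rootsOfUnity _ _).1 ha)])
    rw [Nat.card_prod, hkr, hs, mul_comm] at this
    exact Nat.le_of_mul_le_mul_right this (by omega)
  let f2 : Fˣ → ConjClasses (ProjectiveSpecialLinearGroup (Fin 3) F) := fun t => Ph (0, 0, t)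
  have b2 : (Finset.univ.image f2).card ≤ Nat.card (rootsOfUnity 3 F) := by
    have := fib (Y := (powMonoidHom 3 : Fˣ →* Fˣ).range) f2 Finset.univ (by
      intro t _
      refine ⟨fun y => t * y, fun y y' h => Subtype.ext (mul_left_cancel h), fun y => ⟨by simp, ?_⟩⟩
      exact Ph_cube _ _ _ _ y.2)
    rw [Finset.card_univ, hun, ← hkr, mul_comm] at this
    exact Nat.le_of_mul_le_mul_right this Nat.card_pos
  let f3 : Fˣ → ConjClasses (ProjectiveSpecialLinearGroup (Fin 3) F) :=
    fun t => ConjClasses.mk (QuotientGroup.mk (Nc t))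
  have b3 : (Finset.univ.image f3).card ≤ q - 1 := by
    rw [← hun, ← Finset.card_univ]; exact Finset.card_image_le
  have hall : (Finset.univ : Finset (ConjClasses (ProjectiveSpecialLinearGroup (Fin 3) F))) ⊆
      (s.image Ph ∪ Finset.univ.image f2) ∪ (Finset.univ.image f3 ∪ {ConjClasses.mk 1}) := by
    intro c _
    obtain ⟨x, rfl⟩ := ConjClasses.exists_rep c
    obtain ⟨A, rfl⟩ := QuotientGroup.mk_surjective x
    simp only [Finset.mem_union, Finset.mem_image, Finset.mem_univ, true_and, Finset.mem_singleton]
    rcases classify A with ⟨β, γ, t, h⟩ | ⟨a, h⟩ | h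
    · left
      have h' : Ph (β, γ, t) = ConjClasses.mk (QuotientGroup.mk A) :=
        ConjClasses.mk_eq_mk_iff_isConj.2 (MonoidHom.map_isConj (QuotientGroup.mk' _) h)
      by_cases hz : β = 0 ∧ γ = 0
      · obtain ⟨rfl, rfl⟩ := hz
        exact Or.inr ⟨t, h'⟩
      · exact Or.inl ⟨_, by simpa [s] using hz, h'⟩
    · exact Or.inr (Or.inl ⟨a, ConjClasses.mk_eq_mk_iff_isConj.2
        (MonoidHom.map_isConj (QuotientGroup.mk' _) h)⟩)
    · exact Or.inr (Or.inr (by rw [(QuotientGroup.eq_one_iff A).2 h]))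
  have hc := Finset.card_le_card hall
  have u1 := Finset.card_union_le (s.image Ph ∪ Finset.univ.image f2)
    (Finset.univ.image f3 ∪ {ConjClasses.mk 1})
  have u2 := Finset.card_union_le (s.image Ph) (Finset.univ.image f2)
  have u3 := Finset.card_union_le (Finset.univ.image f3) {ConjClasses.mk 1}
  rw [Finset.card_singleton] at u3
  rw [Nat.card_eq_fintype_card, ← Finset.card_univ]
  have : 1 ≤ q ^ 2 := Nat.one_le_pow _ _ (by omega)
  omega

lemma card_SL : Nat.card (Matrix.SpecialLinearGroup (Fin 3) F) =
    Fintype.card F ^ 3 * (Fintype.card F ^ 2 - 1) * (Fintype.card F ^ 3 - 1) := by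
  classical
  set q := Fintype.card F with hq
  have hq1 : 1 < q := Fintype.one_lt_card
  have h := Subgroup.card_mul_index (Matrix.GeneralLinearGroup.det (n := Fin 3) (R := F)).ker
  have hsurj : Function.Surjective (Matrix.GeneralLinearGroup.det (n := Fin 3) (R := F)) := by
    intro t
    refine ⟨Matrix.GeneralLinearGroup.mkOfDetNeZero !![(t : F), 0, 0; 0, 1, 0; 0, 0, 1] ?_, ?_⟩
    · simp [Matrix.det_fin_three]
    · ext; simp [Matrix.det_fin_three]
  rw [Subgroup.index_ker, MonoidHom.range_eq_top.2 hsurj, Subgroup.card_top, Matrix.card_GL_field,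
    Nat.card_eq_fintype_card (α := Fˣ), Fintype.card_units, ← hq] at h
  have e : Nat.card (Matrix.GeneralLinearGroup.det (n := Fin 3) (R := F)).ker =
      Nat.card (Matrix.SpecialLinearGroup (Fin 3) F) := by
    symm
    apply Nat.card_congr
    refine Equiv.ofBijective (fun A => ⟨Matrix.SpecialLinearGroup.toGL A, by
      rw [MonoidHom.mem_ker]; exact Matrix.SpecialLinearGroup.coeToGL_det A⟩) ⟨?_, ?_⟩
    · intro A B hAB
      exact Matrix.SpecialLinearGroup.toGL_injective (congrArg Subtype.val hAB)
    · rintro ⟨g, hg⟩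
      refine ⟨⟨g.1, ?_⟩, ?_⟩
      · rw [MonoidHom.mem_ker] at hg
        simpa using congrArg Units.val hg
      · apply Subtype.ext; apply Units.ext; rfl
  rw [e] at h
  apply Nat.eq_of_mul_eq_mul_right (show 0 < q - 1 by omega)
  rw [h, Fin.prod_univ_three]
  clear_value q
  obtain ⟨k, rfl⟩ : ∃ k, q = k + 1 := ⟨q - 1, by omega⟩
  have e1 : (k + 1) ^ 3 - (k + 1) ^ 0 = k * (k ^ 2 + 3 * k + 3) := by
    apply Nat.sub_eq_of_eq_add; ring
  have e2 : (k + 1) ^ 3 - (k + 1) ^ 1 = (k + 1) * (k * (k + 2)) := by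
    apply Nat.sub_eq_of_eq_add; ring
  have e3 : (k + 1) ^ 3 - (k + 1) ^ 2 = (k + 1) ^ 2 * k := by
    apply Nat.sub_eq_of_eq_add; ring
  have e4 : (k + 1) ^ 3 - 1 = k * (k ^ 2 + 3 * k + 3) := by
    apply Nat.sub_eq_of_eq_add; ring
  have e5 : (k + 1) ^ 2 - 1 = k * (k + 2) := by
    apply Nat.sub_eq_of_eq_add; ring
  simp only [Fin.val_zero, Fin.val_one, Fin.val_two]
  rw [e1, e2, e3, e4, e5, Nat.add_sub_cancel]
  ring

lemma card_PSL : Nat.card (ProjectiveSpecialLinearGroup (Fin 3) F) * Nat.card (rootsOfUnity 3 F) =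
    Nat.card (Matrix.SpecialLinearGroup (Fin 3) F) := by
  rw [Subgroup.card_eq_card_quotient_mul_card_subgroup
    (Subgroup.center (Matrix.SpecialLinearGroup (Fin 3) F)),
    Nat.card_congr (Matrix.SpecialLinearGroup.center_equiv_rootsOfUnity' (n := Fin 3) (R := F) 0).toEquiv]
  rfl

end PSLthree

namespace PSLthree

/-- A conjugacy invariant of SL(3,3). -/
def inv3 (A : Matrix.SpecialLinearGroup (Fin 3) (ZMod 3)) :
    ZMod 3 × ZMod 3 × Bool × Bool :=
  (A.1.trace, A.1.adjugate.trace, decide (A.1 = 1), decide ((A.1 - 1) * (A.1 - 1) = 0 ∨ A.1 * A.1 = 1))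

lemma inv3_conj (A B : Matrix.SpecialLinearGroup (Fin 3) (ZMod 3)) (h : IsConj A B) :
    inv3 A = inv3 B := by
  obtain ⟨g, hg⟩ := isConj_iff.1 h
  have hB : B.1 = g.1 * A.1 * (g⁻¹).1 := by rw [← hg]; rfl
  have hgi : (g⁻¹).1 * g.1 = 1 := congrArg Subtype.val (inv_mul_cancel g)
  have hgi' : g.1 * (g⁻¹).1 = 1 := congrArg Subtype.val (mul_inv_cancel g)
  have hB' : (B⁻¹).1 = g.1 * (A⁻¹).1 * (g⁻¹).1 := by rw [← hg, conj_inv]; rfl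
  have hA : A.1 = (g⁻¹).1 * B.1 * g.1 := by
    rw [hB]
    calc A.1 = ((g⁻¹).1 * g.1) * A.1 * ((g⁻¹).1 * g.1) := by rw [hgi]; simp
      _ = _ := by simp only [mul_assoc]
  have tr : ∀ X : Matrix (Fin 3) (Fin 3) (ZMod 3), (g.1 * X * (g⁻¹).1).trace = X.trace := by
    intro X; rw [Matrix.trace_mul_comm, ← mul_assoc, hgi, one_mul]
  have key : ∀ X Y : Matrix (Fin 3) (Fin 3) (ZMod 3),
      g.1 * X * (g⁻¹).1 = g.1 * Y * (g⁻¹).1 ↔ X = Y := by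
    intro X Y
    constructor
    · intro e
      have := congrArg (fun Z => (g⁻¹).1 * Z * g.1) e
      calc X = ((g⁻¹).1 * g.1) * X * ((g⁻¹).1 * g.1) := by rw [hgi]; simp
        _ = ((g⁻¹).1 * g.1) * Y * ((g⁻¹).1 * g.1) := by simpa only [mul_assoc] using this
        _ = Y := by rw [hgi]; simp
    · rintro rfl; rfl
  have one : g.1 * 1 * (g⁻¹).1 = 1 := by rw [mul_one, hgi']
  have mulc : ∀ X Y : Matrix (Fin 3) (Fin 3) (ZMod 3),
      (g.1 * X * (g⁻¹).1) * (g.1 * Y * (g⁻¹).1) = g.1 * (X * Y) * (g⁻¹).1 := by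
    intro X Y
    calc _ = g.1 * X * ((g⁻¹).1 * g.1) * Y * (g⁻¹).1 := by simp only [mul_assoc]
      _ = _ := by rw [hgi]; simp only [mul_assoc, mul_one]
  have sub1 : B.1 - 1 = g.1 * (A.1 - 1) * (g⁻¹).1 := by
    rw [mul_sub, sub_mul, one, hB]
  have i2 : B.1.adjugate.trace = A.1.adjugate.trace := by
    change (B⁻¹).1.trace = (A⁻¹).1.trace
    rw [hB', tr]
  have i3 : B.1 = 1 ↔ A.1 = 1 := by
    rw [hB, ← one, key, one]
  have i4 : (B.1 - 1) * (B.1 - 1) = 0 ↔ (A.1 - 1) * (A.1 - 1) = 0 := by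
    have := key ((A.1 - 1) * (A.1 - 1)) 0
    rw [sub1, mulc]; simpa only [mul_zero, zero_mul] using this
  have i5 : B.1 * B.1 = 1 ↔ A.1 * A.1 = 1 := by
    have := key (A.1 * A.1) 1
    rw [one] at this
    rw [hB, mulc]; exact this
  unfold inv3
  simp only [i2, i3, i4, i5]
  rw [hB, tr]

lemma center3 : Subgroup.center (Matrix.SpecialLinearGroup (Fin 3) (ZMod 3)) = ⊥ := by
  rw [eq_bot_iff]
  intro A hA
  obtain ⟨r, hr, h⟩ := Matrix.SpecialLinearGroup.mem_center_iff.1 hA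
  have : ∀ r : ZMod 3, r ^ 3 = 1 → r = 1 := by decide
  rw [this r hr] at h
  rw [Subgroup.mem_bot]
  apply Subtype.ext
  rw [← h]; simp

lemma roots3 : Nat.card (rootsOfUnity 3 (ZMod 3)) = 1 := by
  rw [Nat.card_eq_one_iff_unique]
  refine ⟨⟨?_⟩, ⟨1⟩⟩
  have : ∀ r : ZMod 3, r ^ 3 = 1 → r = 1 := by decide
  have h1 : ∀ x : rootsOfUnity 3 (ZMod 3), x = 1 := by
    rintro ⟨x, hx⟩
    rw [mem_rootsOfUnity] at hx
    apply Subtype.ext; apply Units.ext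
    exact this _ (by simpa using congrArg Units.val hx)
  intro a b; rw [h1 a, h1 b]

def cyc3 (b c : ZMod 3) : Matrix.SpecialLinearGroup (Fin 3) (ZMod 3) :=
  ⟨!![0, 0, 1; 1, 0, b; 0, 1, c], by simp [Matrix.det_fin_three]⟩

def rep3 : Fin 3 → Matrix.SpecialLinearGroup (Fin 3) (ZMod 3)
  | 0 => 1
  | 1 => ⟨!![1, 1, 0; 0, 1, 0; 0, 0, 1], by simp [Matrix.det_fin_three]⟩
  | 2 => ⟨!![-1, 0, 0; 0, -1, 0; 0, 0, 1], by simp [Matrix.det_fin_three]⟩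

def all3 : (ZMod 3 × ZMod 3) ⊕ Fin 3 → Matrix.SpecialLinearGroup (Fin 3) (ZMod 3)
  | .inl x => cyc3 x.1 x.2
  | .inr i => rep3 i

lemma all3_inj : Function.Injective (fun x => inv3 (all3 x)) := by
  decide

lemma k3 : 12 ≤ Nat.card (ConjClasses (ProjectiveSpecialLinearGroup (Fin 3) (ZMod 3))) := by
  have hinj : Function.Injective (fun x => (ConjClasses.mk (QuotientGroup.mk (all3 x)) :
      ConjClasses (ProjectiveSpecialLinearGroup (Fin 3) (ZMod 3)))) := by
    intro x y h
    apply all3_inj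
    apply inv3_conj
    obtain ⟨c, hc⟩ := isConj_iff.1 (ConjClasses.mk_eq_mk_iff_isConj.1 h)
    obtain ⟨g, rfl⟩ := QuotientGroup.mk_surjective c
    rw [isConj_iff]
    refine ⟨g, ?_⟩
    rw [← QuotientGroup.mk_mul, ← QuotientGroup.mk_inv, ← QuotientGroup.mk_mul, QuotientGroup.eq,
      center3, Subgroup.mem_bot] at hc
    exact (inv_mul_eq_one.1 hc)
  have := Nat.card_le_card_of_injective _ hinj
  refine le_trans ?_ this
  rw [Nat.card_eq_fintype_card]
  simp [ZMod.card]

lemma prime_le (q p : ℕ) (hq : 4 ≤ q) (hp : p.Prime)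
    (h : p ∣ q ^ 3 * (q ^ 2 - 1) * (q ^ 3 - 1)) : p ≤ q ^ 2 + q + 1 := by
  obtain ⟨k, rfl⟩ : ∃ k, q = k + 1 := ⟨q - 1, by omega⟩
  have e4 : (k + 1) ^ 3 - 1 = k * (k ^ 2 + 3 * k + 3) := by
    apply Nat.sub_eq_of_eq_add; ring
  have e5 : (k + 1) ^ 2 - 1 = k * (k + 2) := by
    apply Nat.sub_eq_of_eq_add; ring
  rw [e4, e5, hp.dvd_mul, hp.dvd_mul, hp.dvd_mul, hp.dvd_mul] at h
  rcases h with (h | h | h) | h | h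
  · have := Nat.le_of_dvd (by omega) (hp.dvd_of_dvd_pow h); nlinarith
  · have := Nat.le_of_dvd (by omega) h; nlinarith
  · have := Nat.le_of_dvd (by omega) h; nlinarith
  · have := Nat.le_of_dvd (by omega) h; nlinarith
  · have := Nat.le_of_dvd (by positivity) h; nlinarith

end PSLthree

open PSLthree in
/-- For `q ≥ 4` a prime power and `G = PSL(3,q)`, one has
`d(G) ≤ (q²+3q)/((1/3)·q³(q²−1)(q³−1))` and `d(G) < 3/p²` for every prime `p` dividing
`|G|`; moreover `d(PSL(3,3)) = 1/468 < 3/169`. -/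
theorem commProb_PSL_three :
    (∀ (q : ℕ) (F : Type) [Field F] [Fintype F], Fintype.card F = q → 4 ≤ q →
      commProb (Matrix.ProjectiveSpecialLinearGroup (Fin 3) F) ≤
        ((q : ℚ) ^ 2 + 3 * q) /
          ((1 / 3 : ℚ) * (q : ℚ) ^ 3 * ((q : ℚ) ^ 2 - 1) * ((q : ℚ) ^ 3 - 1)) ∧
      ∀ p : ℕ, p.Prime → p ∣ Nat.card (Matrix.ProjectiveSpecialLinearGroup (Fin 3) F) →
        commProb (Matrix.ProjectiveSpecialLinearGroup (Fin 3) F) < 3 / (p : ℚ) ^ 2) ∧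
    commProb (Matrix.ProjectiveSpecialLinearGroup (Fin 3) (ZMod 3)) = 1 / 468 ∧
    (1 / 468 : ℚ) < 3 / 169 := by
  refine ⟨?_, ?_, by norm_num⟩
  · intro q F _ _ hF hq
    have hk := card_classes_le F
    have hn := card_PSL F
    have hS := card_SL F
    have hd3 : Nat.card (rootsOfUnity 3 F) ≤ 3 := card_rootsOfUnity F 3
    have hd1 : 0 < Nat.card (rootsOfUnity 3 F) := Nat.card_pos
    have hn1 : 0 < Nat.card (ProjectiveSpecialLinearGroup (Fin 3) F) := Nat.card_pos
    rw [hF] at hk hS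
    rw [hS] at hn
    have hpr : ∀ p : ℕ, p.Prime → p ∣ Nat.card (Matrix.ProjectiveSpecialLinearGroup (Fin 3) F) →
        p ≤ q ^ 2 + q + 1 := fun p hp h =>
      prime_le q p hq hp (hn ▸ Dvd.dvd.mul_right h _)
    rw [commProb_def']
    generalize Nat.card (ConjClasses (ProjectiveSpecialLinearGroup (Fin 3) F)) = k at *
    generalize Nat.card (ProjectiveSpecialLinearGroup (Fin 3) F) = n at *
    generalize Nat.card (rootsOfUnity 3 F) = d at *
    have hkd : k * d ≤ 3 * (q ^ 2 + 3 * q) := by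
      calc k * d ≤ (q ^ 2 + q + 2) * 3 := Nat.mul_le_mul (by omega) hd3
        _ ≤ _ := by nlinarith
    have hq2 : 1 ≤ q ^ 2 := Nat.one_le_pow _ _ (by omega)
    have hq3 : 1 ≤ q ^ 3 := Nat.one_le_pow _ _ (by omega)
    have hnQ : (n : ℚ) * d = (q : ℚ) ^ 3 * ((q : ℚ) ^ 2 - 1) * ((q : ℚ) ^ 3 - 1) := by
      have := congrArg (Nat.cast : ℕ → ℚ) hn
      push_cast [Nat.cast_sub hq2, Nat.cast_sub hq3] at this
      exact this
    have hkQ : (k : ℚ) * d ≤ 3 * ((q : ℚ) ^ 2 + 3 * q) := by exact_mod_cast hkd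
    have hn0 : (0 : ℚ) < n := by exact_mod_cast hn1
    have hd0 : (0 : ℚ) < d := by exact_mod_cast hd1
    have hq4 : (4 : ℚ) ≤ q := by exact_mod_cast hq
    have hY : (1 / 3 : ℚ) * (q : ℚ) ^ 3 * ((q : ℚ) ^ 2 - 1) * ((q : ℚ) ^ 3 - 1) = n * d / 3 := by
      rw [hnQ]; ring
    rw [hY]
    have hle : (k : ℚ) / n ≤ ((q : ℚ) ^ 2 + 3 * q) / (n * d / 3) := by
      rw [div_le_div_iff₀ hn0 (by positivity)]
      nlinarith
    refine ⟨hle, fun p hp hpd => lt_of_le_of_lt hle ?_⟩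
    have hpQ : (p : ℚ) ≤ (q : ℚ) ^ 2 + q + 1 := by exact_mod_cast hpr p hp hpd
    have hp0 : (0 : ℚ) < p := by exact_mod_cast hp.pos
    rw [div_lt_div_iff₀ (by positivity) (by positivity), hnQ]
    generalize (q : ℚ) = x at *
    have h1 : (p : ℚ) ^ 2 ≤ (x ^ 2 + x + 1) ^ 2 := by gcongr
    have h2 : (x ^ 2 + 3 * x) * (p : ℚ) ^ 2 ≤ (x ^ 2 + 3 * x) * (x ^ 2 + x + 1) ^ 2 := by gcongr
    have h3 : (x ^ 2 + 3 * x) * (x ^ 2 + x + 1) < x ^ 3 * (x ^ 2 - 1) * (x - 1) := by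
      obtain ⟨y, rfl⟩ : ∃ y, x = y + 4 := ⟨x - 4, by ring⟩
      have : 0 ≤ y := by linarith
      rw [← sub_pos]
      ring_nf
      positivity
    have h4 : (x ^ 2 + 3 * x) * (x ^ 2 + x + 1) * (x ^ 2 + x + 1) <
        x ^ 3 * (x ^ 2 - 1) * (x - 1) * (x ^ 2 + x + 1) := by gcongr
    linarith
  · have hk := card_classes_le (ZMod 3)
    have hn := card_PSL (ZMod 3)
    have hS := card_SL (ZMod 3)
    have hk' := k3
    rw [roots3] at hk hn
    rw [ZMod.card] at hk hS
    have e1 : Nat.card (ConjClasses (ProjectiveSpecialLinearGroup (Fin 3) (ZMod 3))) = 12 := by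
      omega
    have e2 : Nat.card (ProjectiveSpecialLinearGroup (Fin 3) (ZMod 3)) = 5616 := by
      omega
    rw [commProb_def', e1, e2]
    norm_num
end

section
/- Let G be a finite group and let N be a normal subgroup of G that is contained in the Frattini subgroup of G. If G/N is supersolvable, then G is supersolvable. -/
open Subgroup

/-- Every proper normal subgroup above `N` has a normal cover of prime relative index. -/
def PrimeSteps (G : Type*) [Group G] (N : Subgroup G) : Prop :=
  ∀ K : Subgroup G, K.Normal → N ≤ K → K ≠ ⊤ →
    ∃ L : Subgroup G, L.Normal ∧ K < L ∧ (K.relIndex L).Prime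

lemma primeSteps_of_supersolvable (G : Type*) [Group G] [Finite G] (h : IsSupersolvable G) :
    PrimeSteps G ⊥ := by
  classical
  obtain ⟨n, H, h0, hn, hle, hnorm, hcyc⟩ := h
  intro K hK _ hKt
  have hex : ∃ i : Fin n, H i.castSucc ≤ K ∧ ¬ H i.succ ≤ K := by
    by_contra hcon
    push Not at hcon
    have : ∀ i : Fin (n + 1), H i ≤ K := by
      intro i
      induction i using Fin.induction with
      | zero => rw [h0]; exact bot_le
      | succ i ih => exact hcon i ih
    exact hKt (top_le_iff.mp (hn ▸ this (Fin.last n)))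
  obtain ⟨i, hi1, hi2⟩ := hex
  obtain ⟨_, hc⟩ := hcyc i
  obtain ⟨c, hc⟩ := hc
  obtain ⟨c, rfl⟩ := QuotientGroup.mk_surjective c
  have hgen : ∀ x ∈ H i.succ, ∃ k : ℤ, (c : G) ^ k * x ∈ K := by
    intro x hx
    obtain ⟨k, hk⟩ := hc (QuotientGroup.mk ⟨x, hx⟩)
    refine ⟨-k, hi1 ?_⟩
    have hk' : ((c ^ k : H i.succ) : H i.succ ⧸ (H i.castSucc).subgroupOf (H i.succ))
        = ((⟨x, hx⟩ : H i.succ)) := by simpa using hk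
    rw [QuotientGroup.eq, mem_subgroupOf] at hk'
    simpa using hk'
  let π := QuotientGroup.mk' K
  have hgen' : ∀ x ∈ H i.succ, ∃ k : ℤ, π x = π c ^ k := by
    intro x hx
    obtain ⟨k, hk⟩ := hgen x hx
    refine ⟨-k, ?_⟩
    have : π ((c : G) ^ k * x) = 1 := (QuotientGroup.eq_one_iff _).mpr hk
    rw [map_mul, map_zpow] at this
    rw [zpow_neg]
    exact (inv_eq_of_mul_eq_one_right this).symm
  have hc1 : orderOf (π c) ≠ 1 := by
    intro h1
    rw [orderOf_eq_one_iff] at h1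
    apply hi2
    intro x hx
    obtain ⟨k, hk⟩ := hgen' x hx
    rw [h1, one_zpow] at hk
    exact (QuotientGroup.eq_one_iff _).mp hk
  obtain ⟨q, hq, m, hm⟩ := Nat.exists_prime_and_dvd hc1
  have hpos : 0 < orderOf (π c) := orderOf_pos _
  set d := π c ^ m with hd
  have hdo : orderOf d = q := by
    have hm0 : m ≠ 0 := by rintro rfl; rw [mul_zero] at hm; omega
    rw [hd, orderOf_pow_of_dvd hm0 ⟨q, by rw [hm, mul_comm]⟩, hm,
      Nat.mul_div_cancel _ (Nat.pos_of_ne_zero hm0)]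
  have hdn : (zpowers d).Normal := by
    constructor
    intro y hy g
    obtain ⟨g, rfl⟩ := QuotientGroup.mk'_surjective K g
    obtain ⟨k, rfl⟩ := hy
    obtain ⟨j, hj⟩ := hgen' (g * c * g⁻¹) ((hnorm i.succ).conj_mem _ c.2 g)
    refine ⟨j * k, ?_⟩
    have h1 : π g * π c * (π g)⁻¹ = π c ^ j := by simpa using hj
    have h2 : π g * d ^ k * (π g)⁻¹ = (π g * d * (π g)⁻¹) ^ k := by rw [conj_zpow]
    have h3 : π g * d * (π g)⁻¹ = d ^ j := by
      rw [hd, ← conj_pow, h1, ← zpow_natCast, ← zpow_natCast, ← zpow_mul, ← zpow_mul, mul_comm]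
    change d ^ (j * k) = π g * d ^ k * (π g)⁻¹
    rw [h2, h3, zpow_mul]
  have hrel : K.relIndex ((zpowers d).comap π) = q := by
    have h := relIndex_ker ((zpowers d).comap π) π
    rw [QuotientGroup.ker_mk' K] at h
    rw [h, map_comap_eq_self_of_surjective (QuotientGroup.mk'_surjective K),
      Nat.card_zpowers, hdo]
  refine ⟨(zpowers d).comap π, inferInstance, ?_, hrel ▸ hq⟩
  refine lt_of_le_of_ne ?_ ?_
  · intro x hx
    have : π x = 1 := (QuotientGroup.eq_one_iff _).mpr hx
    rw [mem_comap, this]; exact one_mem _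
  · intro h
    rw [← h, relIndex_self] at hrel
    exact hq.one_lt.ne hrel

lemma supersolvable_of_primeSteps (G : Type*) [Group G] [Finite G] (h : PrimeSteps G ⊥) :
    IsSupersolvable G := by
  suffices H : ∀ m : ℕ, ∀ K : Subgroup G, K.Normal → K.index ≤ m →
      ∃ (n : ℕ) (H : Fin (n + 1) → Subgroup G),
      H 0 = K ∧ H (Fin.last n) = ⊤ ∧
      (∀ i : Fin n, H i.castSucc ≤ H i.succ) ∧
      (∀ i : Fin (n + 1), (H i).Normal) ∧
      (∀ i : Fin n, ∃ _ : ((H i.castSucc).subgroupOf (H i.succ)).Normal,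
        IsCyclic (↥(H i.succ) ⧸ (H i.castSucc).subgroupOf (H i.succ))) from
    H _ ⊥ inferInstance le_rfl
  intro m
  induction m with
  | zero =>
    intro K _ hK
    exact absurd (Nat.le_zero.mp hK) K.index_ne_zero_of_finite
  | succ m ih =>
    intro K hK hm
    by_cases hKt : K = ⊤
    · subst hKt
      exact ⟨0, fun _ => ⊤, rfl, rfl, fun i => i.elim0, fun _ => inferInstance, fun i => i.elim0⟩
    obtain ⟨L, hL, hKL, hp⟩ := h K hK bot_le hKt
    have hlt : L.index < K.index := index_strictAnti hKL
    obtain ⟨n, H, h0, hn, hle, hnorm, hcyc⟩ := ih L hL (by omega)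
    refine ⟨n + 1, Fin.cons K H, rfl, ?_, ?_, ?_, ?_⟩
    · rw [← Fin.succ_last, Fin.cons_succ, hn]
    · intro i
      refine Fin.cases ?_ (fun j => ?_) i
      · simp [h0, hKL.le]
      · rw [← Fin.succ_castSucc, Fin.cons_succ, Fin.cons_succ]; exact hle j
    · intro i
      refine Fin.cases ?_ (fun j => ?_) i
      · exact hK
      · exact hnorm j
    · intro i
      refine Fin.cases ?_ (fun j => ?_) i
      · rw [Fin.castSucc_zero, Fin.cons_zero, Fin.cons_succ, h0]
        refine ⟨inferInstance, ?_⟩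
        have : Fact (K.relIndex L).Prime := ⟨hp⟩
        exact isCyclic_of_prime_card (p := K.relIndex L) rfl
      · rw [← Fin.succ_castSucc, Fin.cons_succ, Fin.cons_succ]; exact hcyc j

lemma primeSteps_comap {G : Type*} [Group G] (N : Subgroup G) [N.Normal]
    (h : PrimeSteps (G ⧸ N) ⊥) : PrimeSteps G N := by
  intro K hK hNK hKt
  let π := QuotientGroup.mk' N
  have hs : Function.Surjective π := QuotientGroup.mk'_surjective N
  have hc : (K.map π).comap π = K := by
    rw [comap_map_eq, QuotientGroup.ker_mk', sup_eq_left.mpr hNK]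
  obtain ⟨L, hL, hlt, hp⟩ := h (K.map π) (hK.map π hs) bot_le (by
    intro ht; apply hKt; rw [← hc, ht, comap_top])
  refine ⟨L.comap π, inferInstance, ?_, ?_⟩
  · rw [← hc]; exact (comap_lt_comap_of_surjective hs).mpr hlt
  · rw [← hc, relIndex_comap, map_comap_eq_self_of_surjective hs]; exact hp

lemma primeSteps_map {G : Type*} [Group G] (N K : Subgroup G) [K.Normal]
    (h : PrimeSteps G N) : PrimeSteps (G ⧸ K) (N.map (QuotientGroup.mk' K)) := by
  intro M hM hNM hMt
  let π := QuotientGroup.mk' K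
  have hs : Function.Surjective π := QuotientGroup.mk'_surjective K
  obtain ⟨L, hL, hlt, hp⟩ := h (M.comap π) inferInstance (map_le_iff_le_comap.mp hNM) (by
    intro ht; apply hMt; rw [← map_comap_eq_self_of_surjective hs M, ht, map_top_of_surjective _ hs])
  rw [relIndex_comap] at hp
  refine ⟨L.map π, hL.map π hs, lt_of_le_of_ne ?_ ?_, hp⟩
  · rw [← map_comap_eq_self_of_surjective hs M]; exact map_mono hlt.le
  · intro he
    rw [← he, relIndex_self] at hp
    exact Nat.not_prime_one hp

/-- Relative version. -/
lemma primeSteps_rel {G : Type*} [Group G] [Finite G] {N : Subgroup G} (h : PrimeSteps G N)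
    (K M : Subgroup G) (hK : K.Normal) (hM : M.Normal) (hNK : N ≤ K) (hKM : K < M) :
    ∃ L : Subgroup G, L.Normal ∧ K < L ∧ L ≤ M ∧ (K.relIndex L).Prime := by
  obtain ⟨X, hX⟩ := (Set.toFinite {X : Subgroup G | X.Normal ∧ K ≤ X ∧ X ⊓ M ≤ K}).exists_maximal
    ⟨K, hK, le_rfl, inf_le_left⟩
  obtain ⟨⟨hXn, hKX, hXM⟩, hmax⟩ := hX
  obtain ⟨Y, hY, hXY, hp⟩ := h X hXn (hNK.trans hKX) (by
    rintro rfl; rw [top_inf_eq] at hXM; exact hKM.not_ge hXM)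
  have hYM : ¬ Y ⊓ M ≤ K := fun hle =>
    hXY.not_ge (hmax ⟨hY, hKX.trans hXY.le, hle⟩ hXY.le)
  have hKY : K ≤ Y ⊓ M := le_inf (hKX.trans hXY.le) hKM.le
  have heq : X ⊓ (Y ⊓ M) = K := le_antisymm
    ((inf_le_inf_left X inf_le_right).trans hXM) (le_inf hKX hKY)
  refine ⟨Y ⊓ M, inferInstance, lt_of_le_not_ge hKY hYM, inf_le_right, ?_⟩
  have h1 : K.relIndex (Y ⊓ M) = X.relIndex (X ⊔ (Y ⊓ M)) := by
    rw [relIndex_sup_left, ← inf_relIndex_right X (Y ⊓ M), heq]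
  have h2 : K.relIndex (Y ⊓ M) ∣ X.relIndex Y := by
    rw [h1]
    exact Dvd.intro _ (relIndex_mul_relIndex X (X ⊔ Y ⊓ M) Y le_sup_left
      (sup_le hXY.le inf_le_left))
  rcases (Nat.dvd_prime hp).mp h2 with h3 | h3
  · exact absurd (relIndex_eq_one.mp h3) hYM
  · rw [h3]; exact hp

open Subgroup
open scoped commutatorElement

lemma exists_eigenvector {p : ℕ} [Fact p.Prime] {V : Type*} [AddCommGroup V] [Module (ZMod p) V]
    (T : Module.End (ZMod p) V) (hT : T ^ p = T) (v : V) (hv : v ≠ 0) :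
    ∃ (a : ZMod p) (w : V), w ≠ 0 ∧ T w = a • w := by
  classical
  have key : ∀ s : Finset (ZMod p), ∀ v : V, v ≠ 0 →
      Polynomial.aeval T (∏ a ∈ s, (Polynomial.X - Polynomial.C a)) v = 0 →
      ∃ (a : ZMod p) (w : V), w ≠ 0 ∧ T w = a • w := by
    intro s
    induction s using Finset.induction_on with
    | empty => intro v hv h; simp at h; exact absurd h hv
    | insert a s ha ih =>
      intro v hv h
      rw [Finset.prod_insert ha, mul_comm, map_mul, Module.End.mul_apply] at h
      by_cases h0 : T v = a • v
      · exact ⟨a, v, hv, h0⟩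
      · refine ih _ ?_ h
        simpa [sub_eq_zero] using h0
  apply key Finset.univ v hv
  have h1 : (∏ a : ZMod p, (Polynomial.X - Polynomial.C a)) = Polynomial.X ^ p - Polynomial.X := by
    have hm : (Polynomial.X ^ p - Polynomial.X : Polynomial (ZMod p)).Monic := by
      apply Polynomial.monic_X_pow_sub
      rw [Polynomial.degree_X]; exact_mod_cast (Fact.out : p.Prime).one_lt
    have hr := FiniteField.roots_X_pow_card_sub_X (ZMod p)
    rw [ZMod.card] at hr
    have := Polynomial.prod_multiset_X_sub_C_of_monic_of_roots_card_eq hm (by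
      rw [hr, FiniteField.X_pow_card_sub_X_natDegree_eq _ (Fact.out : p.Prime).one_lt]
      simp [ZMod.card])
    rw [hr] at this
    exact this
  rw [h1]; simp [hT]

lemma exists_eigenvector_add {p : ℕ} [Fact p.Prime] {V : Type*} [AddCommGroup V]
    (hV : ∀ x : V, p • x = 0) (f : V →+ V) (hf : ∀ x, f^[p] x = f x) (v : V) (hv : v ≠ 0) :
    ∃ (k : ℕ) (w : V), w ≠ 0 ∧ f w = k • w := by
  let _ : Module (ZMod p) V := AddCommGroup.zmodModule hV
  obtain ⟨a, w, hw, haw⟩ := exists_eigenvector (p := p) (f.toZModLinearMap p) (by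
    ext x
    rw [Module.End.pow_apply]
    exact hf x) v hv
  refine ⟨a.val, w, hw, ?_⟩
  rw [← Nat.cast_smul_eq_nsmul (ZMod p), ZMod.natCast_val, ZMod.cast_id]
  exact haw

lemma exists_eigenvector_mul {p : ℕ} [Fact p.Prime] {V : Type*} [CommGroup V]
    (hV : ∀ x : V, x ^ p = 1) (f : V →* V) (hf : ∀ x, f^[p] x = f x) (v : V) (hv : v ≠ 1) :
    ∃ (k : ℕ) (w : V), w ≠ 1 ∧ f w = w ^ k :=
  exists_eigenvector_add (V := Additive V) hV (MonoidHom.toAdditive f) hf v hv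

/-- Minimal normal subgroup on which `G` acts as an abelian group of exponent dividing `p - 1`. -/
lemma card_prime_of_action {G : Type*} [Group G] {p : ℕ} (hp : p.Prime) (N : Subgroup G)
    (hN : N.Normal) (hN1 : N ≠ ⊥) (hmin : ∀ M : Subgroup G, M.Normal → M ≤ N → M ≠ ⊥ → M = N)
    (hcomm : ∀ x ∈ N, ∀ y ∈ N, x * y = y * x) (hexp : ∀ x ∈ N, x ^ p = 1)
    (h1 : ∀ g h : G, ∀ x ∈ N, g * (h * x * h⁻¹) * g⁻¹ = h * (g * x * g⁻¹) * h⁻¹)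
    (h2 : ∀ g : G, ∀ x ∈ N, g ^ (p - 1) * x * (g ^ (p - 1))⁻¹ = x) :
    (Nat.card N).Prime := by
  have : Fact p.Prime := ⟨hp⟩
  obtain ⟨n, hn, hn1⟩ : ∃ n ∈ N, n ≠ 1 := (ne_bot_iff_exists_ne_one.mp hN1).elim
    fun x hx => ⟨x, x.2, by simpa using hx⟩
  let _ : CommGroup N := { (inferInstance : Group N) with
    mul_comm := fun x y => Subtype.ext (hcomm x x.2 y y.2) }
  have hscal : ∀ g : G, ∃ k : ℕ, ∀ x ∈ N, g * x * g⁻¹ = x ^ k := by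
    intro g
    let f : N →* N := (MulAut.conjNormal g : MulAut N).toMonoidHom
    have hTpow : ∀ (j : ℕ) (x : N), f^[j] x = MulAut.conjNormal (g ^ j) x := by
      intro j
      induction j with
      | zero => intro x; simp
      | succ j ih => intro x; rw [Function.iterate_succ_apply, ih, pow_succ, map_mul]; rfl
    obtain ⟨k, w, hw, hkw⟩ := exists_eigenvector_mul (p := p)
      (fun x : N => Subtype.ext (hexp x x.2)) f (by
        intro x
        rw [← Nat.sub_add_cancel hp.one_lt.le, Function.iterate_succ_apply, hTpow]
        apply Subtype.ext
        rw [MulAut.conjNormal_apply]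
        exact h2 g _ (f x).2) ⟨n, hn⟩ (fun h0 => hn1 (congrArg Subtype.val h0))
    have hkw' : g * w * g⁻¹ = (w : G) ^ k := congrArg Subtype.val hkw
    refine ⟨k, ?_⟩
    let E : Subgroup G :=
      { carrier := {x | x ∈ N ∧ g * x * g⁻¹ = x ^ k}
        one_mem' := ⟨one_mem _, by simp⟩
        mul_mem' := by
          rintro x y ⟨hx, hx'⟩ ⟨hy, hy'⟩
          refine ⟨mul_mem hx hy, ?_⟩
          rw [(show Commute x y from hcomm x hx y hy).mul_pow, ← hx', ← hy']; group
        inv_mem' := by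
          rintro x ⟨hx, hx'⟩
          refine ⟨inv_mem hx, ?_⟩
          rw [inv_pow, ← hx']; group }
    have hEn : E.Normal := by
      constructor
      rintro x ⟨hx, hx'⟩ h
      refine ⟨hN.conj_mem x hx h, ?_⟩
      rw [h1 g h x hx, hx', conj_pow]
    have hE : E = N := hmin E hEn (fun x hx => hx.1) (by
      intro hb
      apply hw
      have hm : (w : G) ∈ E := ⟨w.2, hkw'⟩
      rw [hb, mem_bot] at hm
      exact Subtype.ext hm)
    intro x hx
    rw [← hE] at hx
    exact hx.2
  have hZ : zpowers n = N := by
    apply hmin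
    · constructor
      rintro _ ⟨j, rfl⟩ g
      obtain ⟨k, hk⟩ := hscal g
      refine ⟨k * j, ?_⟩
      change n ^ (k * j : ℤ) = g * n ^ j * g⁻¹
      rw [← conj_zpow, hk n hn, zpow_mul, zpow_natCast]
    · rwa [zpowers_le]
    · rwa [Ne, zpowers_eq_bot]
  rw [← hZ, Nat.card_zpowers, orderOf_eq_prime (hexp n hn) hn1]
  exact hp

/-- A normal `p`-subgroup centralizes a minimal normal subgroup of order divisible by `p`. -/
lemma centralizes_of_isPGroup {G : Type*} [Group G] [Finite G] {p : ℕ} (hp : p.Prime)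
    (N T : Subgroup G) (hN : N.Normal) (hT : T.Normal) (hpN : p ∣ Nat.card N)
    (hmin : ∀ M : Subgroup G, M.Normal → M ≤ N → M ≠ ⊥ → M = N)
    (hpT : IsPGroup p T) : ∀ t ∈ T, ∀ x ∈ N, t * x = x * t := by
  have : Fact p.Prime := ⟨hp⟩
  let _ : MulAction T N := MulAction.compHom N
    ((MulAut.conjNormal : G →* MulAut N).comp T.subtype)
  have hsm : ∀ (t : T) (x : N), ((t • x : N) : G) = t * x * (t : G)⁻¹ := fun t x => rfl
  obtain ⟨b, hb, hb1⟩ := hpT.exists_fixed_point_of_prime_dvd_card_of_fixed_point N hpN (a := 1) (by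
    intro t; apply Subtype.ext; rw [hsm]; simp)
  have hE : N ⊓ centralizer T = N := by
    apply hmin
    · infer_instance
    · exact inf_le_left
    · intro hbot
      apply hb1
      have : (b : G) ∈ N ⊓ centralizer T := by
        refine ⟨b.2, mem_centralizer_iff.mpr fun t ht => ?_⟩
        have := congrArg Subtype.val (hb ⟨t, ht⟩)
        rw [hsm] at this
        exact mul_inv_eq_iff_eq_mul.mp this
      rw [hbot, mem_bot] at this
      exact Subtype.ext this.symm
  intro t ht x hx
  rw [← hE] at hx
  exact mem_centralizer_iff.mp hx.2 t ht

lemma frattini_arg {G : Type*} [Group G] [Finite G] {r : ℕ} (hr : r.Prime)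
    (R L : Subgroup G) (hL : L.Normal) (hRL : R ≤ L) (hR : IsPGroup r R)
    (hi : ¬ r ∣ R.relIndex L) : normalizer (R : Set G) ⊔ L = ⊤ := by
  have : Fact r.Prime := ⟨hr⟩
  have h1 : IsPGroup r (R.subgroupOf L) := hR.comap_subtype
  have := Sylow.normalizer_sup_eq_top (h1.toSylow hi)
  rw [show ((h1.toSylow hi : Sylow r L) : Subgroup L) = R.subgroupOf L from rfl, subgroupOf_map_subtype, inf_of_le_left hRL] at this
  exact this

/-- Action on a normal subgroup of prime order. -/
lemma action_prime_order {Q : Type*} [Group Q] {p : ℕ} (hp : p.Prime) (L : Subgroup Q)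
    (hL : L.Normal) (hc : Nat.card L = p) :
    (∀ g h : Q, ∀ x ∈ L, ⁅g, h⁆ * x * ⁅g, h⁆⁻¹ = x) ∧
    (∀ g : Q, ∀ x ∈ L, g ^ (p - 1) * x * (g ^ (p - 1))⁻¹ = x) := by
  have : Fact p.Prime := ⟨hp⟩
  have : IsCyclic L := isCyclic_of_prime_card hc
  let e := IsCyclic.mulAutMulEquiv L
  have key : ∀ g : Q, e (MulAut.conjNormal g) = 1 → ∀ x ∈ L, g * x * g⁻¹ = x := by
    intro g hg x hx
    rw [e.map_eq_one_iff] at hg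
    have := congrArg (fun f : MulAut L => ((f ⟨x, hx⟩ : L) : Q)) hg
    simpa using this
  refine ⟨fun g h => key _ ?_, fun g => key _ ?_⟩
  · rw [map_commutatorElement, map_commutatorElement, commutatorElement_eq_one_iff_mul_comm, mul_comm]
  · rw [map_pow, map_pow]
    have : Fact (Nat.card L).Prime := ⟨hc ▸ hp⟩
    rw [← hc]
    exact ZMod.units_pow_card_sub_one_eq_one (Nat.card L) (e (MulAut.conjNormal g))

lemma action_prime_relIndex {G : Type*} [Group G] {p : ℕ} (hp : p.Prime) (K L : Subgroup G)
    (hK : K.Normal) (hL : L.Normal) (hc : K.relIndex L = p) :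
    (∀ g h : G, ∀ x ∈ L, ⁅⁅g, h⁆, x⁆ ∈ K) ∧
    (∀ g : G, ∀ x ∈ L, ⁅g ^ (p - 1), x⁆ ∈ K) := by
  let π := QuotientGroup.mk' K
  have hs : Function.Surjective π := QuotientGroup.mk'_surjective K
  have hcard : Nat.card (L.map π) = p := by
    rw [← relIndex_ker, QuotientGroup.ker_mk', hc]
  obtain ⟨h1, h2⟩ := action_prime_order hp (L.map π) (hL.map π hs) hcard
  refine ⟨fun g h x hx => ?_, fun g x hx => ?_⟩
  · rw [← QuotientGroup.eq_one_iff]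
    change π _ = 1
    rw [map_commutatorElement, map_commutatorElement, commutatorElement_def ⁅π g, π h⁆,
      h1 (π g) (π h) (π x) (mem_map_of_mem π hx), mul_inv_cancel]
  · rw [← QuotientGroup.eq_one_iff]
    change π _ = 1
    rw [map_commutatorElement, map_pow, commutatorElement_def,
      h2 (π g) (π x) (mem_map_of_mem π hx), mul_inv_cancel]

lemma core_of_disjoint {G : Type*} [Group G] [Finite G] (N Q : Subgroup G) (hN : N.Normal)
    (hN1 : N ≠ ⊥) (hmin : ∀ M : Subgroup G, M.Normal → M ≤ N → M ≠ ⊥ → M = N)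
    (hA : ∀ K : Subgroup G, K.Normal → K ≠ ⊥ → PrimeSteps G K)
    (hQ : Q.Normal) (hQ1 : Q ≠ ⊥) (hQN : Q ⊓ N = ⊥) : (Nat.card N).Prime := by
  have hlt : Q < Q ⊔ N := by
    refine lt_of_le_of_ne le_sup_left fun h => hN1 ?_
    have : N ≤ Q := by rw [h]; exact le_sup_right
    rw [← hQN, inf_eq_right.mpr this]
  obtain ⟨L, hL, hQL, hLM, hp⟩ :=
    primeSteps_rel (hA Q hQ hQ1) Q (Q ⊔ N) hQ inferInstance le_rfl hlt
  have hLN : L ⊓ N = N := by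
    apply hmin _ inferInstance inf_le_right
    intro hbot
    apply hQL.not_ge
    intro x hx
    obtain ⟨q, hq, n, hn, rfl⟩ := mem_sup_of_normal_left.mp (hLM hx)
    have : n ∈ L ⊓ N := ⟨by simpa using mul_mem (inv_mem (hQL.le hq)) hx, hn⟩
    rw [hbot, mem_bot] at this
    rw [this, mul_one]; exact hq
  have hLe : L = Q ⊔ N := le_antisymm hLM (sup_le hQL.le (inf_eq_right.mp hLN))
  rw [hLe, relIndex_sup_left, ← inf_relIndex_right, hQN, relIndex_bot_left] at hp
  exact hp

/-- The subgroup of elements centralizing all normal sections of order `p` above `N`. -/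
def sectionCentralizer {G : Type*} [Group G] (N : Subgroup G) (p : ℕ) : Subgroup G where
  carrier := {d | ∀ K L : Subgroup G, K.Normal → L.Normal → N ≤ K → K ≤ L → K.relIndex L = p →
    ∀ x ∈ L, ⁅d, x⁆ ∈ K}
  one_mem' := by
    intro K L _ _ _ _ _ x _
    simp
  mul_mem' := by
    intro a b ha hb K L hK hL hNK hKL hp x hx
    have h1 := ha K L hK hL hNK hKL hp x hx
    have h2 := hb K L hK hL hNK hKL hp x hx
    have e : ⁅a * b, x⁆ = a * ⁅b, x⁆ * a⁻¹ * ⁅a, x⁆ := by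
      simp only [commutatorElement_def]; group
    rw [e]
    exact mul_mem (hK.conj_mem _ h2 a) h1
  inv_mem' := by
    intro a ha K L hK hL hNK hKL hp x hx
    have h1 := ha K L hK hL hNK hKL hp x hx
    have e : ⁅a⁻¹, x⁆ = a⁻¹ * ⁅a, x⁆⁻¹ * a⁻¹⁻¹ := by
      simp only [commutatorElement_def]; group
    rw [e]
    exact hK.conj_mem _ (inv_mem h1) a⁻¹

lemma sectionCentralizer_normal {G : Type*} [Group G] (N : Subgroup G) (p : ℕ) :
    (sectionCentralizer N p).Normal := by
  constructor
  intro d hd g K L hK hL hNK hKL hp x hx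
  have h1 := hd K L hK hL hNK hKL hp (g⁻¹ * x * g) (by simpa using hL.conj_mem x hx g⁻¹)
  have e : ⁅g * d * g⁻¹, x⁆ = g * ⁅d, g⁻¹ * x * g⁆ * g⁻¹ := by
    simp only [commutatorElement_def]; group
  rw [e]
  exact hK.conj_mem _ h1 g

lemma le_sectionCentralizer {G : Type*} [Group G] (N : Subgroup G) (hN : N.Normal) (p : ℕ) :
    N ≤ sectionCentralizer N p := by
  intro n hn K L hK hL hNK hKL hp x hx
  rw [commutatorElement_def, mul_assoc, mul_assoc]
  refine mul_mem (hNK hn) (hNK ?_)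
  rw [← mul_assoc]
  exact hN.conj_mem _ (inv_mem hn) x

/-- Coprime action on one layer. -/
lemma coprime_layer {G : Type*} [Group G] (N S : Subgroup G) (hN : N.Normal) {p r : ℕ}
    (hp : p.Prime) (hr : r.Prime) (hpr : r ≠ p) (hS : IsPGroup p S) (x s : G) (hx : x ^ r = 1)
    (hxs : ⁅x, s⁆ ∈ S) (hxS : ∀ z ∈ S, ⁅x, z⁆ ∈ N) : ⁅x, s⁆ ∈ N := by
  let π := QuotientGroup.mk' N
  have hπ : ∀ y, π y = 1 ↔ y ∈ N := fun y => QuotientGroup.eq_one_iff y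
  set z := ⁅x, s⁆ with hz
  have hcomm : Commute (π x) (π z) := by
    have := (hπ _).mpr (hxS z hxs)
    rw [map_commutatorElement, commutatorElement_eq_one_iff_mul_comm] at this
    exact this
  have h1 : π x * π s * (π x)⁻¹ = π z * π s := by
    rw [hz, map_commutatorElement, commutatorElement_def]; group
  have h2 : ∀ k : ℕ, π x ^ k * π s * (π x ^ k)⁻¹ = π z ^ k * π s := by
    intro k
    induction k with
    | zero => simp
    | succ k ih =>
      have : π x ^ (k + 1) * π s * (π x ^ (k + 1))⁻¹
          = π x * (π x ^ k * π s * (π x ^ k)⁻¹) * (π x)⁻¹ := by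
        rw [pow_succ']; group
      rw [this, ih]
      have e : π x * (π z ^ k * π s) * (π x)⁻¹
          = (π x * π z ^ k) * (π x)⁻¹ * (π x * π s * (π x)⁻¹) := by group
      rw [e, h1, (hcomm.pow_right k).eq, pow_succ]; group
  have h3 : π z ^ r = 1 := by
    have h := h2 r
    rw [← map_pow, hx, map_one, one_mul, inv_one, mul_one] at h
    exact (right_eq_mul.mp h)
  obtain ⟨k, hk⟩ := hS ⟨z, hxs⟩
  have hk' : z ^ p ^ k = 1 := congrArg Subtype.val hk
  have h4 : π z ^ p ^ k = 1 := by rw [← map_pow, hk', map_one]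
  rw [← hπ]
  have hco : Nat.gcd r (p ^ k) = 1 := ((Nat.coprime_primes hr hp).mpr hpr).pow_right k
  have := pow_gcd_eq_one.mpr ⟨h3, h4⟩
  rwa [hco, pow_one] at this

theorem core {G : Type*} [Group G] [Finite G] (N : Subgroup G) (hN : N.Normal)
    (hN1 : N ≠ ⊥) (hmin : ∀ M : Subgroup G, M.Normal → M ≤ N → M ≠ ⊥ → M = N)
    (hfr : N ≤ frattini G)
    (hA : ∀ K : Subgroup G, K.Normal → K ≠ ⊥ → PrimeSteps G K) : (Nat.card N).Prime := by
  classical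
  have nongen : ∀ X : Subgroup G, X ⊔ N = ⊤ → X = ⊤ := fun X hX =>
    frattini_nongenerating (top_le_iff.mp (hX ▸ sup_le_sup_left hfr X))
  obtain ⟨p, hp, hpN⟩ := Nat.exists_prime_and_dvd (n := Nat.card N)
    (fun h => hN1 (card_eq_one.mp h))
  have : Fact p.Prime := ⟨hp⟩
  -- `N` is a `p`-group
  have hNp : IsPGroup p N := by
    let P : Sylow p N := default
    have h1 : (map N.subtype (P : Subgroup N)).Normal :=
      normalizer_eq_top_iff.mp (nongen _ (Sylow.normalizer_sup_eq_top P))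
    have h2 : map N.subtype (P : Subgroup N) = N := by
      apply hmin _ h1 (map_subtype_le _)
      rw [Ne, map_eq_bot_iff_of_injective _ N.subtype_injective]
      exact P.ne_bot_of_dvd_card hpN
    have h3 : IsPGroup p (map N.subtype (P : Subgroup N)) := P.2.map _
    rwa [h2] at h3
  have hcomm : ∀ x ∈ N, ∀ y ∈ N, x * y = y * x :=
    centralizes_of_isPGroup hp N N hN hN hpN hmin hNp
  have hexp : ∀ x ∈ N, x ^ p = 1 := by
    let E : Subgroup G :=
      { carrier := {x | x ∈ N ∧ x ^ p = 1}
        one_mem' := ⟨one_mem _, one_pow _⟩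
        mul_mem' := by
          rintro x y ⟨hx, hx'⟩ ⟨hy, hy'⟩
          exact ⟨mul_mem hx hy, by
            rw [(show Commute x y from hcomm x hx y hy).mul_pow, hx', hy', one_mul]⟩
        inv_mem' := by
          rintro x ⟨hx, hx'⟩
          exact ⟨inv_mem hx, by rw [inv_pow, hx', inv_one]⟩ }
    have hE : E = N := by
      apply hmin E
      · constructor
        rintro x ⟨hx, hx'⟩ g
        exact ⟨hN.conj_mem x hx g, by rw [conj_pow, hx']; group⟩
      · exact fun x hx => hx.1
      · intro hb
        obtain ⟨x, hx⟩ := exists_prime_orderOf_dvd_card' (G := N) p hpN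
        have hxE : (x : G) ∈ E := ⟨x.2, congrArg Subtype.val (hx ▸ pow_orderOf_eq_one x : x ^ p = 1)⟩
        rw [hb, mem_bot] at hxE
        have : x = 1 := Subtype.ext hxE
        rw [this, orderOf_one] at hx
        exact hp.one_lt.ne hx
    intro x hx
    rw [← hE] at hx
    exact hx.2
  by_cases hQ : ∃ Q : Subgroup G, Q.Normal ∧ Q ≠ ⊥ ∧ Q ⊓ N = ⊥
  · obtain ⟨Q, hQ, hQ1, hQN⟩ := hQ
    exact core_of_disjoint N Q hN hN1 hmin hA hQ hQ1 hQN
  set D := sectionCentralizer N p with hD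
  have hDn : D.Normal := sectionCentralizer_normal N p
  have hND : N ≤ D := le_sectionCentralizer N hN p
  obtain ⟨T, ⟨hTn, hNT, hTD, hTp⟩, hTmax⟩ := (Set.toFinite {T : Subgroup G | T.Normal ∧ N ≤ T ∧
    T ≤ D ∧ IsPGroup p T}).exists_maximal ⟨N, hN, le_rfl, hND, hNp⟩
  have hDp : T = D := by
    by_contra hne
    obtain ⟨L, hL, hTL, hLD, hr⟩ := primeSteps_rel (hA N hN hN1) T D hTn hDn hNT
      (lt_of_le_of_ne hTD hne)
    set r := T.relIndex L with hrdef
    have : Fact r.Prime := ⟨hr⟩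
    obtain ⟨a, ha⟩ := IsPGroup.iff_card.mp hTp
    have hLcard : Nat.card L = p ^ a * r := by
      rw [← ha, ← relIndex_bot_left, ← relIndex_bot_left, hrdef,
        relIndex_mul_relIndex _ _ _ bot_le hTL.le]
    have hrp : r ≠ p := by
      intro h
      refine hTL.not_ge (hTmax ⟨hL, hNT.trans hTL.le, hLD, ?_⟩ hTL.le)
      apply IsPGroup.of_card (n := a + 1)
      rw [hLcard, h, pow_succ]
    obtain ⟨x', hx'⟩ := exists_prime_orderOf_dvd_card' (G := L) r ⟨p ^ a, by rw [hLcard, mul_comm]⟩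
    obtain ⟨x, hxdef⟩ : ∃ x : G, x = (x' : G) := ⟨_, rfl⟩
    have hxL : x ∈ L := hxdef ▸ x'.2
    have hxo : orderOf x = r := by rw [hxdef, orderOf_coe, hx']
    have hxr : x ^ r = 1 := by rw [← hxo]; exact pow_orderOf_eq_one x
    set R := zpowers x with hRdef
    have hRcard : Nat.card R = r := by rw [hRdef, Nat.card_zpowers, hxo]
    have hRp : IsPGroup r R := IsPGroup.of_card (n := 1) (by rw [hRcard, pow_one])
    have hRL : R ≤ L := by rwa [hRdef, zpowers_le]
    have hco : r.Coprime (p ^ a) := ((Nat.coprime_primes hr hp).mpr hrp).pow_right a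
    have hRrel : R.relIndex L = p ^ a := by
      have := relIndex_mul_relIndex ⊥ R L bot_le hRL
      rw [relIndex_bot_left, relIndex_bot_left, hRcard, hLcard, mul_comm] at this
      exact Nat.eq_of_mul_eq_mul_right hr.pos this
    have hnd : ¬ r ∣ R.relIndex L := by
      rw [hRrel]
      exact fun h => hr.one_lt.ne' (Nat.eq_one_of_dvd_coprimes hco dvd_rfl h)
    -- `x` acts trivially on `T / N`
    have hxT : ∀ t ∈ T, ⁅x, t⁆ ∈ N := by
      obtain ⟨S, ⟨hSn, hNS, hST, hSx⟩, hSmax⟩ := (Set.toFinite {S : Subgroup G | S.Normal ∧ N ≤ S ∧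
        S ≤ T ∧ ∀ t ∈ S, ⁅x, t⁆ ∈ N}).exists_maximal ⟨N, hN, le_rfl, hNT, fun t ht => by
          rw [commutatorElement_def]
          exact mul_mem (hN.conj_mem t ht x) (inv_mem ht)⟩
      by_cases hSTe : S = T
      · rw [← hSTe]; exact hSx
      exfalso
      obtain ⟨S', hS'n, hSS', hS'T, hq⟩ := primeSteps_rel (hA N hN hN1) S T hSn hTn hNS
        (lt_of_le_of_ne hST hSTe)
      have hqp : S.relIndex S' = p := by
        have h1 : S.relIndex S' ∣ p ^ a := by
          rw [← ha]
          exact (relIndex_dvd_card S S').trans (card_dvd_of_le hS'T)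
        exact (Nat.prime_dvd_prime_iff_eq hq hp).mp (hq.dvd_of_dvd_pow h1)
      refine hSS'.not_ge (hSmax ⟨hS'n, hNS.trans hSS'.le, hS'T, fun s hs => ?_⟩ hSS'.le)
      have hxD : x ∈ D := hLD hxL
      exact coprime_layer N S hN hp hr hrp (hTp.to_le hST) x s hxr
        (hxD S S' hSn hS'n hNS hSS'.le hqp s hs) hSx
    -- `R ⊔ N` is normal
    have hRT : R ⊔ T = L := by
      have h1 : (R ⊔ T).relIndex L ∣ r := by
        rw [hrdef]; exact relIndex_dvd_of_le_left L le_sup_right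
      have h2 : (R ⊔ T).relIndex L ∣ p ^ a := by
        rw [← hRrel]; exact relIndex_dvd_of_le_left L le_sup_left
      exact le_antisymm (sup_le hRL hTL.le)
        (relIndex_eq_one.mp (Nat.eq_one_of_dvd_coprimes hco h1 h2))
    have hTnorm : T ≤ normalizer ((R ⊔ N : Subgroup G) : Set G) := by
      have hconj : ∀ t ∈ T, ∀ y ∈ R ⊔ N, t * y * t⁻¹ ∈ R ⊔ N := by
        intro t ht y hy
        have hle : R ⊔ N ≤ (R ⊔ N).comap (MulAut.conj t).toMonoidHom := by
          refine sup_le ?_ ?_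
          · rw [hRdef, zpowers_le, mem_comap]
            change t * x * t⁻¹ ∈ _
            have e : t * x * t⁻¹ = ⁅x, t⁆⁻¹ * x := by
              simp only [commutatorElement_def]; group
            rw [e]
            exact mul_mem (inv_mem (mem_sup_right (hxT t ht))) (mem_sup_left (mem_zpowers x))
          · intro n hn
            exact mem_sup_right (hN.conj_mem n hn t)
        exact hle hy
      intro t ht
      rw [mem_normalizer_iff]
      intro y
      refine ⟨hconj t ht y, fun h => ?_⟩
      have := hconj t⁻¹ (inv_mem ht) _ h
      simpa [mul_assoc] using this
    have hRNn : (R ⊔ N).Normal := by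
      rw [← normalizer_eq_top_iff, eq_top_iff, ← frattini_arg hr R L hL hRL hRp hnd]
      refine sup_le normalizer_le_normalizer_sup_normal ?_
      rw [← hRT]
      exact sup_le (le_sup_left.trans le_normalizer) hTnorm
    have hRn : R.Normal := by
      rw [← normalizer_eq_top_iff]
      apply nongen
      have hRNL : R ⊔ N ≤ L := sup_le hRL (hNT.trans hTL.le)
      have h1 := frattini_arg hr R (R ⊔ N) hRNn le_sup_left hRp (fun h => hnd
        (h.trans (Dvd.intro _ (relIndex_mul_relIndex R (R ⊔ N) L le_sup_left hRNL))))
      rw [← sup_assoc, sup_eq_left.mpr (le_normalizer : R ≤ normalizer (R : Set G))] at h1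
      exact h1
    refine hQ ⟨R, hRn, ?_, ?_⟩
    · intro hb
      rw [hb, card_bot] at hRcard
      exact hr.one_lt.ne hRcard
    · exact (IsPGroup.disjoint_of_ne r p hrp R N hRp hNp).eq_bot
  have hDN : ∀ d ∈ D, ∀ x ∈ N, d * x = x * d :=
    centralizes_of_isPGroup hp N D hN hDn hpN hmin (hDp ▸ hTp)
  refine card_prime_of_action hp N hN hN1 hmin hcomm hexp ?_ ?_
  · intro g h x hx
    have hd : ⁅g, h⁆ ∈ D := fun K L hK hL _ _ hc x hx =>
      (action_prime_relIndex hp K L hK hL hc).1 g h x hx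
    have h1 := hDN _ hd (h * (g * x * g⁻¹) * h⁻¹) (hN.conj_mem _ (hN.conj_mem x hx g) h)
    have e : g * (h * x * h⁻¹) * g⁻¹ = ⁅g, h⁆ * (h * (g * x * g⁻¹) * h⁻¹) * ⁅g, h⁆⁻¹ := by
      simp only [commutatorElement_def]; group
    rw [e, h1, mul_inv_cancel_right]
  · intro g x hx
    have hd : g ^ (p - 1) ∈ D := fun K L hK hL _ _ hc x hx =>
      (action_prime_relIndex hp K L hK hL hc).2 g x hx
    rw [hDN _ hd x hx, mul_inv_cancel_right]

theorem primeSteps_main (n : ℕ) : ∀ (G : Type*) [Group G] [Finite G] (_ : Nat.card G ≤ n)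
    (N : Subgroup G) (_ : N.Normal) (_ : N ≤ frattini G) (_ : PrimeSteps G N),
    PrimeSteps G ⊥ := by
  induction n with
  | zero =>
    intro G _ _ hc
    exact absurd (Nat.le_zero.mp hc) Nat.card_pos.ne'
  | succ n ih =>
    intro G _ _ hc N hN hfr hst
    have hA : ∀ K : Subgroup G, K.Normal → K ≠ ⊥ → PrimeSteps G K := by
      intro K hK hK1
      apply primeSteps_comap
      have hs := QuotientGroup.mk'_surjective K
      refine ih (G ⧸ K) ?_ (N.map (QuotientGroup.mk' K)) (hN.map _ hs) ?_ (primeSteps_map N K hst)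
      · have h1 := card_eq_card_quotient_mul_card_subgroup K
        have h2 := K.one_lt_card_iff_ne_bot.mpr hK1
        have h3 : 0 < Nat.card (G ⧸ K) := Nat.card_pos
        nlinarith
      · exact map_le_iff_le_comap.mpr (hfr.trans (frattini_le_comap_frattini_of_surjective hs))
    by_cases hN1 : N = ⊥
    · rw [← hN1]; exact hst
    intro K hK _ hKt
    by_cases hK1 : K = ⊥
    · obtain ⟨M, ⟨hM, hMN, hM1⟩, hmin⟩ := (Set.toFinite {M : Subgroup G | M.Normal ∧ M ≤ N ∧
        M ≠ ⊥}).exists_minimal ⟨N, hN, le_rfl, hN1⟩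
      have hp := core M hM hM1 (fun X hX hXM hX1 =>
        le_antisymm hXM (hmin ⟨hX, hXM.trans hMN, hX1⟩ hXM)) (hMN.trans hfr) hA
      refine ⟨M, hM, hK1 ▸ bot_lt_iff_ne_bot.mpr hM1, ?_⟩
      rw [hK1, relIndex_bot_left]; exact hp
    · exact hA K hK hK1 K hK le_rfl hKt

/-- If `N` is a normal subgroup of a finite group `G` contained in the Frattini subgroup
and `G/N` is supersolvable, then `G` is supersolvable. -/
theorem supersolvable_of_quotient_frattini (G : Type*) [Group G] [Fintype G]
    (N : Subgroup G) [N.Normal] (hN : N ≤ frattini G)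
    (h : IsSupersolvable (G ⧸ N)) : IsSupersolvable G :=
  supersolvable_of_primeSteps G (primeSteps_main _ G le_rfl N inferInstance hN
    (primeSteps_comap N (primeSteps_of_supersolvable _ h)))
end
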